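/- arXiv:1011.0943 — 2 statements merged into one kernel-verified Lean document; each statement's English description precedes it below -/
import Mathlib

section
/- There exists a universal constant C > 0 such that the following holds. Let Y be a random vector in ℝⁿ with log-concave density g and barycenter at the origin, let k be an integer with 2 ≤ k ≤ n, and let p ≥ −k+1 be real. Suppose r, R > 0 are such that r·B₂ⁿ ⊂ Z⁺_{max(k,p)}(g) ⊂ R·B₂ⁿ. Then |log h_{k,p}(u) − log h_{k,p}(v)| ≤ C·max(k,p)·(R/r)·‖u − v‖_HS for all u, v ∈ SO(n). -/
open MeasureTheory ProbabilityTheory Real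
open scoped ENNReal RealInnerProductSpace Pointwise NNReal

noncomputable section

/-- A nonnegative function is log-concave if `f(λx+(1-λ)y) ≥ f(x)^λ f(y)^{1-λ}`. -/
def IsLogConcaveFn {E : Type*} [AddCommGroup E] [Module ℝ E] (f : E → ℝ) : Prop :=
  (∀ x, 0 ≤ f x) ∧
  ∀ x y : E, ∀ l : ℝ, 0 ≤ l → l ≤ 1 →
    f x ^ l * f y ^ (1 - l) ≤ f (l • x + (1 - l) • y)

/-- Hilbert-Schmidt (Frobenius) norm of a matrix. -/
def hsNorm {n : ℕ} (A : Matrix (Fin n) (Fin n) ℝ) : ℝ :=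
  Real.sqrt (∑ i, ∑ j, (A i j) ^ 2)

/-- Operator norm of a matrix acting on Euclidean space. -/
def opNorm {n : ℕ} (A : Matrix (Fin n) (Fin n) ℝ) : ℝ :=
  ‖LinearMap.toContinuousLinearMap (Matrix.toEuclideanLin A)‖

/-- Application of a matrix to a Euclidean vector. -/
def mApp {n : ℕ} (A : Matrix (Fin n) (Fin n) ℝ) (x : EuclideanSpace ℝ (Fin n)) :
    EuclideanSpace ℝ (Fin n) := Matrix.toEuclideanLin A x

/-- The random vector `X` has density `f` with respect to Lebesgue measure. -/
def HasDensityFn {Ω : Type*} [MeasurableSpace Ω] (P : Measure Ω) {n : ℕ}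
    (X : Ω → EuclideanSpace ℝ (Fin n)) (f : EuclideanSpace ℝ (Fin n) → ℝ) : Prop :=
  Measurable X ∧ Measure.map X P = volume.withDensity fun x => ENNReal.ofReal (f x)

/-- `X` is isotropic: centered with identity covariance. -/
def Isotropic {Ω : Type*} [MeasurableSpace Ω] (P : Measure Ω) {n : ℕ}
    (X : Ω → EuclideanSpace ℝ (Fin n)) : Prop :=
  (∫ ω, X ω ∂P) = 0 ∧
  ∀ θ η : EuclideanSpace ℝ (Fin n), (∫ ω, ⟪X ω, θ⟫ * ⟪X ω, η⟫ ∂P) = ⟪θ, η⟫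

/-- `X` is ψ_α with constant `b`. -/
def IsPsiAlpha {Ω : Type*} [MeasurableSpace Ω] (P : Measure Ω) {n : ℕ}
    (X : Ω → EuclideanSpace ℝ (Fin n)) (α b : ℝ) : Prop :=
  ∀ p : ℝ, 2 ≤ p → ∀ y : EuclideanSpace ℝ (Fin n),
    (∫ ω, |⟪X ω, y⟫| ^ p ∂P) ^ (1/p) ≤ b * p ^ (1/α) * (∫ ω, ⟪X ω, y⟫ ^ 2 ∂P) ^ ((1:ℝ)/2)

/-- `G` is a standard Gaussian random vector in `ℝⁿ`. -/
def IsStdGaussian {Ω : Type*} [MeasurableSpace Ω] (P : Measure Ω) {n : ℕ}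
    (G : Ω → EuclideanSpace ℝ (Fin n)) : Prop :=
  Measurable G ∧
  Measure.map G P = volume.withDensity fun x =>
    ENNReal.ofReal ((2 * π) ^ (-(n:ℝ)/2) * Real.exp (-‖x‖ ^ 2 / 2))

/-- Surface area of the unit sphere `S^{k-1}` in `ℝᵏ`. -/
def sphereVol (k : ℕ) : ℝ := 2 * π ^ ((k : ℝ)/2) / Real.Gamma ((k : ℝ)/2)

/-- The marginal density `π_F g(x) = ∫_{F^⊥} g(x+y) dy`. -/
def marginalDensity {n : ℕ} (g : EuclideanSpace ℝ (Fin n) → ℝ)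
    (F : Submodule ℝ (EuclideanSpace ℝ (Fin n))) (x : EuclideanSpace ℝ (Fin n)) : ℝ :=
  ∫ y : Fᗮ, g (x + y)

/-- `h_{k,p}(u) = vol(S^{k-1}) ∫₀^∞ t^{p+k-1} π_{u(E₀)} g(t u(θ₀)) dt`. -/
def hkp {n : ℕ} (g : EuclideanSpace ℝ (Fin n) → ℝ)
    (E₀ : Submodule ℝ (EuclideanSpace ℝ (Fin n))) (θ₀ : EuclideanSpace ℝ (Fin n))
    (k : ℕ) (p : ℝ) (u : Matrix (Fin n) (Fin n) ℝ) : ℝ :=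
  sphereVol k * ∫ t in Set.Ioi (0:ℝ), t ^ (p + (k:ℝ) - 1) *
    marginalDensity g (Submodule.map (Matrix.toEuclideanLin u) E₀) (t • mApp u θ₀)

/-- Support functional of the one-sided L_q-centroid body `Z⁺_q(w)`. -/
def suppZplus {m : ℕ} (w : EuclideanSpace ℝ (Fin m) → ℝ) (q : ℝ)
    (y : EuclideanSpace ℝ (Fin m)) : ℝ :=
  (2 * ∫ x, (max ⟪x, y⟫ 0) ^ q * w x) ^ (1/q)

/-- Ball's body `K_q(w) = {x : q ∫₀^∞ t^{q-1} w(tx) dt ≥ 1}`. -/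
def ballBody {m : ℕ} (w : EuclideanSpace ℝ (Fin m) → ℝ) (q : ℝ) :
    Set (EuclideanSpace ℝ (Fin m)) :=
  {x | 1 ≤ q * ∫ t in Set.Ioi (0:ℝ), t ^ (q-1) * w (t • x)}

/-- The one-sided L_q-centroid body `Z⁺_q(w)`, as the convex set with support
functional `suppZplus w q`. -/
def ZplusBody {m : ℕ} (w : EuclideanSpace ℝ (Fin m) → ℝ) (q : ℝ) :
    Set (EuclideanSpace ℝ (Fin m)) :=
  {x | ∀ y, ⟪x, y⟫ ≤ suppZplus w q y}

/-!
Set `Q = max k p`. If `r B ⊆ Z⁺_Q(g) ⊆ R B`, then every marginal of `g` of dimension at most `2Q`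
is, up to factors `exp (O(Q))`, of the same order on a ball of radius comparable to `r`, and drops
below this order outside a ball of radius comparable to `R`. By log-concavity, the moment of order
`σ ≤ 3Q` along a ray changes by a factor `exp (O(Q (R / r) ε))` when the direction of the ray is
tilted by `ε`.

The functional `h_{k,p}(u)` is not a ray moment of a fixed function, since the subspace `u(E₀)` and
the marginal on it move with `u`. But inside `V = u(E₀) + v(E₀)`, of dimension at most `2k`, polar
coordinates turn it into the integral over `z ∈ u(E₀)ᗮ ∩ V` of ray moments of the fixed marginal on
`V` in the directions `u(θ₀) + z`. The polar decomposition of the projection onto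
`v(E₀)ᗮ ∩ V` gives an isometry `u(E₀)ᗮ ∩ V ≃ v(E₀)ᗮ ∩ V` that is `2‖u - v‖`-close to the
inclusion, so the two integrals can be compared ray by ray.
-/

/-! ### Log-concave functions with values in `[0, ∞]` -/

/-- Log-concavity of a function with values in `[0, ∞]`. Unlike `IsLogConcaveFn` it is stable under
taking marginals, whatever their finiteness. The weights are positive so that `∞ ^ 0 = 1` and
`0 ^ 0 = 1` play no role. -/
def IsENNRealLogConcave {E : Type*} [AddCommGroup E] [Module ℝ E] (f : E → ℝ≥0∞) : Prop :=
  ∀ ⦃x y : E⦄ ⦃a b : ℝ⦄, 0 < a → 0 < b → a + b = 1 → f x ^ a * f y ^ b ≤ f (a • x + b • y)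

theorem lt_ennreal_rpow_mul_rpow {t x y : ℝ≥0∞} {a b : ℝ} (ha : 0 < a) (hb : 0 < b)
    (hab : a + b = 1) (hx : t < x) (hy : t < y) : t < x ^ a * y ^ b :=
  calc t = t ^ a * t ^ b := by
        rw [← ENNReal.rpow_add_of_nonneg _ _ ha.le hb.le, hab, ENNReal.rpow_one]
    _ < x ^ a * y ^ b :=
      ENNReal.mul_lt_mul (ENNReal.rpow_lt_rpow hx ha) (ENNReal.rpow_lt_rpow hy hb)

theorem measurable_of_convex_superlevel {f : ℝ → ℝ≥0∞} (hf : ∀ t, Convex ℝ {x | t < f x}) :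
    Measurable f :=
  measurable_of_Ioi fun t => (hf t).ordConnected.measurableSet

namespace IsENNRealLogConcave

variable {E F : Type*} [AddCommGroup E] [Module ℝ E] [AddCommGroup F] [Module ℝ F]

theorem convex_superlevel {f : E → ℝ≥0∞} (hf : IsENNRealLogConcave f) (t : ℝ≥0∞) :
    Convex ℝ {x | t < f x} :=
  convex_iff_forall_pos.2 fun _ hx _ hy _ _ ha hb hab =>
    (lt_ennreal_rpow_mul_rpow ha hb hab hx hy).trans_le (hf ha hb hab)

theorem comp_affineMap {f : F → ℝ≥0∞} (hf : IsENNRealLogConcave f) (A : E →ᵃ[ℝ] F) :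
    IsENNRealLogConcave (f ∘ A) := by
  intro x y a b ha hb hab
  simpa only [Function.comp_apply, Convex.combo_affine_apply hab] using hf ha hb hab

theorem measurable {f : ℝ → ℝ≥0∞} (hf : IsENNRealLogConcave f) : Measurable f :=
  measurable_of_convex_superlevel hf.convex_superlevel

theorem aemeasurable {V : Type*} [NormedAddCommGroup V] [NormedSpace ℝ V] [FiniteDimensional ℝ V]
    [MeasurableSpace V] [BorelSpace V] {f : V → ℝ≥0∞} (hf : IsENNRealLogConcave f) (μ : Measure V)
    [μ.IsAddHaarMeasure] : AEMeasurable f μ := by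
  have : NullMeasurable f μ :=
    @measurable_of_Ioi ℝ≥0∞ (NullMeasurableSpace V μ) _ _ _ _ _ _ _ f fun t =>
      (hf.convex_superlevel t).nullMeasurableSet μ
  exact this.aemeasurable

end IsENNRealLogConcave

/-! ### The Prékopa–Leindler inequality on the line -/

theorem volume_add_le_of_convex {A B C : Set ℝ} (hA : A.Nonempty) (hB : B.Nonempty)
    (hC : Convex ℝ C) {a b : ℝ} (ha : 0 ≤ a) (hb : 0 ≤ b)
    (hABC : ∀ x ∈ A, ∀ y ∈ B, a * x + b * y ∈ C) :
    ENNReal.ofReal a * volume A + ENNReal.ofReal b * volume B ≤ volume C := by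
  have edist_le : ∀ p ∈ A ×ˢ A, ∀ q ∈ B ×ˢ B,
      ENNReal.ofReal a * edist p.1 p.2 + ENNReal.ofReal b * edist q.1 q.2 ≤ volume C := by
    rintro ⟨x, x'⟩ ⟨hx, hx'⟩ ⟨y, y'⟩ ⟨hy, hy'⟩
    wlog hxx' : x' ≤ x generalizing x x'
    · simpa only [edist_comm] using this x' x hx' hx (le_of_not_ge hxx')
    wlog hyy' : y' ≤ y generalizing y y'
    · simpa only [edist_comm] using this y' y hy' hy (le_of_not_ge hyy')
    have hIcc : Set.Icc (a * x' + b * y') (a * x + b * y) ⊆ C :=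
      hC.ordConnected.out (hABC _ hx' _ hy') (hABC _ hx _ hy)
    refine le_trans (le_of_eq ?_) (measure_mono hIcc)
    rw [Real.volume_Icc, edist_dist, edist_dist, Real.dist_eq, Real.dist_eq,
      abs_of_nonneg (sub_nonneg.2 hxx'), abs_of_nonneg (sub_nonneg.2 hyy'),
      ← ENNReal.ofReal_mul ha, ← ENNReal.ofReal_mul hb,
      ← ENNReal.ofReal_add (mul_nonneg ha (sub_nonneg.2 hxx'))
        (mul_nonneg hb (sub_nonneg.2 hyy'))]
    congr 1
    ring
  have mul_volume_le : ∀ (c : ℝ≥0∞) (S : Set ℝ),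
      c * volume S ≤ ⨆ p ∈ S ×ˢ S, c * edist p.1 p.2 := by
    intro c S
    refine (mul_le_mul_right (Real.volume_le_diam S) c).trans_eq ?_
    rw [Metric.ediam, biSup_prod]
    simp only [ENNReal.mul_iSup]
  calc _ ≤ (⨆ p ∈ A ×ˢ A, ENNReal.ofReal a * edist p.1 p.2) +
        ⨆ q ∈ B ×ˢ B, ENNReal.ofReal b * edist q.1 q.2 :=
        add_le_add (mul_volume_le _ A) (mul_volume_le _ B)
    _ ≤ volume C := ENNReal.biSup_add_biSup_le (hA.prod hA) (hB.prod hB) edist_le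

theorem ennreal_rpow_mul_rpow_le_add (x y : ℝ≥0∞) {a b : ℝ} (ha : 0 < a) (hb : 0 < b)
    (hab : a + b = 1) : x ^ a * y ^ b ≤ ENNReal.ofReal a * x + ENNReal.ofReal b * y := by
  have hconj : a⁻¹.HolderConjugate b⁻¹ := Real.holderConjugate_iff.2
    ⟨(one_lt_inv₀ ha).2 (by linarith), by simpa only [inv_inv]⟩
  have hyoung := ENNReal.young_inequality (x ^ a) (y ^ b) hconj
  rwa [← ENNReal.rpow_mul, ← ENNReal.rpow_mul, mul_inv_cancel₀ ha.ne', mul_inv_cancel₀ hb.ne',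
    ENNReal.rpow_one, ENNReal.rpow_one, ENNReal.ofReal_inv_of_pos ha, ENNReal.ofReal_inv_of_pos hb,
    ENNReal.div_eq_inv_mul, ENNReal.div_eq_inv_mul, inv_inv, inv_inv] at hyoung

section LIntegral

variable {α : Type*} [MeasurableSpace α] {μ : Measure α} {f : α → ℝ≥0∞}

theorem lintegral_eq_lintegral_meas_ofReal_lt (hf : AEMeasurable f μ) (hf_top : ∀ x, f x ≠ ∞) :
    ∫⁻ x, f x ∂μ = ∫⁻ t in Set.Ioi (0 : ℝ), μ {x | ENNReal.ofReal t < f x} := by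
  have hcake := lintegral_eq_lintegral_meas_lt μ
    (Filter.Eventually.of_forall fun x => ENNReal.toReal_nonneg) hf.ennreal_toReal
  simp only [ENNReal.ofReal_toReal (hf_top _)] at hcake
  rw [hcake]
  refine setLIntegral_congr_fun measurableSet_Ioi fun t ht => ?_
  simp only [ENNReal.ofReal_lt_iff_lt_toReal (le_of_lt ht) (hf_top _)]

theorem lintegral_eq_iSup_lintegral_min (hf : Measurable f) :
    ∫⁻ x, f x ∂μ = ⨆ n : ℕ, ∫⁻ x, min (f x) n ∂μ := by
  rw [← lintegral_iSup (fun n => hf.min measurable_const)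
    fun m n hmn x => min_le_min le_rfl (Nat.cast_le.2 hmn)]
  refine lintegral_congr fun x => ?_
  rw [← inf_iSup_eq, ENNReal.iSup_natCast, inf_top_eq]

end LIntegral

section PrekopaLeindler

variable {f g h : ℝ → ℝ≥0∞} {a b : ℝ}

theorem add_lintegral_le_of_iSup_eq_one (hf : Measurable f) (hg : Measurable g)
    (hf1 : ⨆ x, f x = 1) (hg1 : ⨆ x, g x = 1) (hconv : ∀ t, Convex ℝ {x | t < h x})
    (ha : 0 < a) (hb : 0 < b) (hab : a + b = 1)
    (hfgh : ∀ x y, f x ^ a * g y ^ b ≤ h (a * x + b * y)) :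
    ENNReal.ofReal a * (∫⁻ x, f x) + ENNReal.ofReal b * (∫⁻ x, g x) ≤ ∫⁻ x, h x := by
  have hf_le : ∀ x, f x ≤ 1 := fun x => hf1 ▸ le_iSup f x
  have hg_le : ∀ x, g x ≤ 1 := fun x => hg1 ▸ le_iSup g x
  have hh : Measurable h := measurable_of_convex_superlevel hconv
  have meas_superlevel : Measurable fun t : ℝ => volume {x | ENNReal.ofReal t < f x} :=
    Antitone.measurable fun s t hst => measure_mono fun x hx =>
      (ENNReal.ofReal_le_ofReal hst).trans_lt hx
  have superlevel_le : ∀ t : ℝ, ENNReal.ofReal a * volume {x | ENNReal.ofReal t < f x} +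
      ENNReal.ofReal b * volume {x | ENNReal.ofReal t < g x} ≤
        volume {x | ENNReal.ofReal t < min (h x) 1} := by
    intro t
    rcases lt_or_ge (ENNReal.ofReal t) 1 with ht | ht
    · simp only [lt_min_iff, ht, and_true]
      exact volume_add_le_of_convex (lt_iSup_iff.1 (hf1 ▸ ht)) (lt_iSup_iff.1 (hg1 ▸ ht)) (hconv _)
        ha.le hb.le fun x hx y hy =>
          (lt_ennreal_rpow_mul_rpow ha hb hab hx hy).trans_le (hfgh x y)
    · simp [fun x => ((hf_le x).trans ht).not_gt, fun x => ((hg_le x).trans ht).not_gt]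
  calc _ = ∫⁻ t in Set.Ioi (0 : ℝ), (ENNReal.ofReal a * volume {x | ENNReal.ofReal t < f x} +
          ENNReal.ofReal b * volume {x | ENNReal.ofReal t < g x}) := by
        rw [lintegral_add_left (meas_superlevel.const_mul _),
          lintegral_const_mul' _ _ ENNReal.ofReal_ne_top,
          lintegral_const_mul' _ _ ENNReal.ofReal_ne_top,
          lintegral_eq_lintegral_meas_ofReal_lt hf.aemeasurable
            fun x => ne_top_of_le_ne_top ENNReal.one_ne_top (hf_le x),
          lintegral_eq_lintegral_meas_ofReal_lt hg.aemeasurable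
            fun x => ne_top_of_le_ne_top ENNReal.one_ne_top (hg_le x)]
    _ ≤ ∫⁻ t in Set.Ioi (0 : ℝ), volume {x | ENNReal.ofReal t < min (h x) 1} :=
        lintegral_mono superlevel_le
    _ = ∫⁻ x, min (h x) 1 := (lintegral_eq_lintegral_meas_ofReal_lt
        (hh.min measurable_const).aemeasurable
        fun x => ne_top_of_le_ne_top ENNReal.one_ne_top (min_le_right _ _)).symm
    _ ≤ ∫⁻ x, h x := lintegral_mono fun x => min_le_left _ _

theorem prekopa_leindler_real_of_iSup_ne_top (hf : Measurable f) (hg : Measurable g)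
    (hf_top : ⨆ x, f x ≠ ∞) (hg_top : ⨆ x, g x ≠ ∞) (hconv : ∀ t, Convex ℝ {x | t < h x})
    (ha : 0 < a) (hb : 0 < b) (hab : a + b = 1)
    (hfgh : ∀ x y, f x ^ a * g y ^ b ≤ h (a * x + b * y)) :
    (∫⁻ x, f x) ^ a * (∫⁻ x, g x) ^ b ≤ ∫⁻ x, h x := by
  set M := ⨆ x, f x with hM
  set N := ⨆ x, g x with hN
  rcases eq_or_ne M 0 with hM0 | hM0
  · simp [ENNReal.iSup_eq_zero.1 (hM.symm.trans hM0), ha]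
  rcases eq_or_ne N 0 with hN0 | hN0
  · simp [ENNReal.iSup_eq_zero.1 (hN.symm.trans hN0), hb]
  set c := (M⁻¹) ^ a * (N⁻¹) ^ b with hc
  have hc0 : c ≠ 0 := mul_ne_zero (by simp [ENNReal.rpow_eq_zero_iff, ha.not_gt, hf_top])
    (by simp [ENNReal.rpow_eq_zero_iff, hb.not_gt, hg_top])
  have hc_top : c ≠ ∞ := ENNReal.mul_ne_top
    (ENNReal.rpow_ne_top_of_nonneg ha.le (ENNReal.inv_ne_top.2 hM0))
    (ENNReal.rpow_ne_top_of_nonneg hb.le (ENNReal.inv_ne_top.2 hN0))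
  have mul_rpow_mul : ∀ x y : ℝ≥0∞,
      (M⁻¹ * x) ^ a * (N⁻¹ * y) ^ b = c * (x ^ a * y ^ b) := fun x y => by
    rw [ENNReal.mul_rpow_of_nonneg _ _ ha.le, ENNReal.mul_rpow_of_nonneg _ _ hb.le, hc]
    ring
  have hconv' : ∀ t, Convex ℝ {x | t < c * h x} := fun t => by
    simpa only [mul_comm c, ENNReal.div_lt_iff (.inl hc0) (.inl hc_top)] using hconv (t / c)
  have hnormalized := add_lintegral_le_of_iSup_eq_one (f := fun x => M⁻¹ * f x)
    (g := fun x => N⁻¹ * g x) (h := fun x => c * h x) (hf.const_mul _) (hg.const_mul _)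
    (by rw [← ENNReal.mul_iSup, ENNReal.inv_mul_cancel hM0 hf_top])
    (by rw [← ENNReal.mul_iSup, ENNReal.inv_mul_cancel hN0 hg_top]) hconv' ha hb hab
    fun x y => (mul_rpow_mul _ _).trans_le (mul_le_mul_right (hfgh x y) c)
  rw [lintegral_const_mul' _ _ hc_top, lintegral_const_mul' _ _ (ENNReal.inv_ne_top.2 hM0),
    lintegral_const_mul' _ _ (ENNReal.inv_ne_top.2 hN0)] at hnormalized
  have := (ennreal_rpow_mul_rpow_le_add _ _ ha hb hab).trans hnormalized
  rwa [mul_rpow_mul, ENNReal.mul_le_mul_iff_right hc0 hc_top] at this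

theorem prekopa_leindler_real (hf : Measurable f) (hg : Measurable g)
    (hconv : ∀ t, Convex ℝ {x | t < h x}) (ha : 0 < a) (hb : 0 < b) (hab : a + b = 1)
    (hfgh : ∀ x y, f x ^ a * g y ^ b ≤ h (a * x + b * y)) :
    (∫⁻ x, f x) ^ a * (∫⁻ x, g x) ^ b ≤ ∫⁻ x, h x := by
  have rpow_lintegral : ∀ {u : ℝ → ℝ≥0∞} {s : ℝ}, Measurable u → 0 < s →
      (∫⁻ x, u x) ^ s = ⨆ n : ℕ, (∫⁻ x, min (u x) n) ^ s := fun hu hs => by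
    rw [lintegral_eq_iSup_lintegral_min hu]
    exact (ENNReal.orderIsoRpow _ hs).map_iSup _
  have iSup_min_ne_top : ∀ (u : ℝ → ℝ≥0∞) (n : ℕ), ⨆ x, min (u x) n ≠ ∞ := fun u n =>
    ne_top_of_le_ne_top (ENNReal.natCast_ne_top n) (iSup_le fun x => min_le_right _ _)
  rw [rpow_lintegral hf ha, rpow_lintegral hg hb, ENNReal.iSup_mul]
  refine iSup_le fun m => ?_
  rw [ENNReal.mul_iSup]
  refine iSup_le fun n => ?_
  refine prekopa_leindler_real_of_iSup_ne_top (hf.min measurable_const) (hg.min measurable_const)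
    (iSup_min_ne_top f m) (iSup_min_ne_top g n) hconv ha hb hab fun x y => ?_
  refine le_trans ?_ (hfgh x y)
  gcongr <;> exact min_le_left _ _

end PrekopaLeindler

/-! ### Marginals of log-concave functions -/

namespace IsENNRealLogConcave

universe u

variable {E : Type u} [AddCommGroup E] [Module ℝ E]

theorem comp_prodMk {F : Type*} [AddCommGroup F] [Module ℝ F] {f : E × F → ℝ≥0∞}
    (hf : IsENNRealLogConcave f) (x : E) : IsENNRealLogConcave fun y => f (x, y) :=
  hf.comp_affineMap ((AffineMap.const ℝ F x).prod (AffineMap.id ℝ F))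

theorem lintegral_real {f : E × ℝ → ℝ≥0∞} (hf : IsENNRealLogConcave f) :
    IsENNRealLogConcave fun x => ∫⁻ t : ℝ, f (x, t) := by
  intro x y a b ha hb hab
  refine prekopa_leindler_real (hf.comp_prodMk x).measurable (hf.comp_prodMk y).measurable
    (hf.comp_prodMk _).convex_superlevel ha hb hab fun s t => ?_
  simpa only [Prod.smul_mk, Prod.mk_add_mk, smul_eq_mul] using
    hf (x := (x, s)) (y := (y, t)) ha hb hab

theorem lintegral_pi (d : ℕ) : ∀ {E : Type u} [AddCommGroup E] [Module ℝ E]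
    {f : E × (Fin d → ℝ) → ℝ≥0∞}, IsENNRealLogConcave f →
      IsENNRealLogConcave fun x => ∫⁻ s : Fin d → ℝ, f (x, s) := by
  induction d with
  | zero =>
    intro E _ _ f hf
    simp only [Measure.volume_pi_eq_dirac 0, lintegral_dirac]
    exact hf.comp_affineMap ((AffineMap.id ℝ E).prod (AffineMap.const ℝ E 0))
  | succ d ih =>
    intro E _ _ f hf
    have hcons : IsENNRealLogConcave fun z : (E × (Fin d → ℝ)) × ℝ =>
        f (z.1.1, Fin.cons z.2 z.1.2) := by
      let L : (E × (Fin d → ℝ)) × ℝ →ₗ[ℝ] E × (Fin (d + 1) → ℝ) :=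
        ((LinearMap.fst ℝ E (Fin d → ℝ)).comp (LinearMap.fst ℝ _ ℝ)).prod
          ((Fin.consLinearEquiv ℝ fun _ => ℝ).toLinearMap.comp
            ((LinearMap.snd ℝ _ ℝ).prod ((LinearMap.snd ℝ E _).comp (LinearMap.fst ℝ _ ℝ))))
      exact hf.comp_affineMap L.toAffineMap
    convert ih hcons.lintegral_real using 2 with x
    have hpres := (volume_preserving_piFinSuccAbove (fun _ : Fin (d + 1) => ℝ) 0).symm
    rw [← hpres.lintegral_comp_emb (MeasurableEquiv.measurableEmbedding _)]
    refine (lintegral_prod_symm _ (((hf.comp_prodMk x).aemeasurable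
      volume).comp_quasiMeasurePreserving hpres.quasiMeasurePreserving)).trans ?_
    simp only [MeasurableEquiv.piFinSuccAbove_symm_apply, Fin.insertNthEquiv_zero]
    rfl

protected theorem lintegral {W : Type*} [NormedAddCommGroup W] [InnerProductSpace ℝ W]
    [FiniteDimensional ℝ W] [MeasurableSpace W] [BorelSpace W] {f : E × W → ℝ≥0∞}
    (hf : IsENNRealLogConcave f) : IsENNRealLogConcave fun x => ∫⁻ w : W, f (x, w) := by
  let b := stdOrthonormalBasis ℝ W
  let e : (Fin (Module.finrank ℝ W) → ℝ) ≃L[ℝ] W :=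
    (PiLp.continuousLinearEquiv 2 ℝ _).symm.trans b.repr.symm.toContinuousLinearEquiv
  have he : MeasurePreserving e :=
    b.measurePreserving_repr_symm.comp (PiLp.volume_preserving_toLp _)
  have hcoord : IsENNRealLogConcave fun z : E × (Fin (Module.finrank ℝ W) → ℝ) => f (z.1, e z.2) :=
    hf.comp_affineMap ((LinearMap.id (M := E)).prodMap e.toLinearMap).toAffineMap
  convert lintegral_pi _ hcoord using 2 with x
  exact (he.lintegral_comp_emb e.toHomeomorph.measurableEmbedding fun w => f (x, w)).symm

end IsENNRealLogConcave

theorem lintegral_comp_smul_addHaar {V : Type*} [NormedAddCommGroup V] [NormedSpace ℝ V]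
    [FiniteDimensional ℝ V] [MeasurableSpace V] [BorelSpace V] (μ : Measure V)
    [μ.IsAddHaarMeasure] {c : ℝ} (hc : c ≠ 0) (f : V → ℝ≥0∞) :
    ∫⁻ x, f (c • x) ∂μ = ENNReal.ofReal |(c ^ Module.finrank ℝ V)⁻¹| * ∫⁻ x, f x ∂μ := by
  rw [← (measurableEmbedding_const_smul₀ hc).lintegral_map f, Measure.map_addHaar_smul μ hc,
    lintegral_smul_measure, smul_eq_mul]

theorem IsENNRealLogConcave.ne_top {V : Type*} [NormedAddCommGroup V] [NormedSpace ℝ V]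
    [FiniteDimensional ℝ V] [MeasurableSpace V] [BorelSpace V] {μ : Measure V}
    [μ.IsAddHaarMeasure] {f : V → ℝ≥0∞} (hf : IsENNRealLogConcave f) (h0 : ∫⁻ x, f x ∂μ ≠ 0)
    (h_top : ∫⁻ x, f x ∂μ ≠ ∞) (x : V) : f x ≠ ∞ := by
  intro hx
  let m : V → V := fun v => (2⁻¹ : ℝ) • x + (2⁻¹ : ℝ) • v
  have hm : AEMeasurable (f ∘ m) μ := (hf.comp_affineMap
    (AffineMap.const ℝ V ((2⁻¹ : ℝ) • x) + ((2⁻¹ : ℝ) • LinearMap.id).toAffineMap)).aemeasurable μ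
  have hm_top : ∫⁻ v, f (m v) ∂μ ≠ ∞ := by
    rw [lintegral_comp_smul_addHaar μ (c := 2⁻¹) (by norm_num) fun v => f ((2⁻¹ : ℝ) • x + v),
      lintegral_add_left_eq_self f]
    exact ENNReal.mul_ne_top ENNReal.ofReal_ne_top h_top
  refine h0 ((lintegral_eq_zero_iff' (hf.aemeasurable μ)).2 ?_)
  filter_upwards [ae_lt_top' hm hm_top] with v hv
  by_contra hv0
  have hmid := hf (x := x) (y := v) (a := 2⁻¹) (b := 2⁻¹) (by norm_num) (by norm_num) (by norm_num)
  rw [hx, ENNReal.top_rpow_of_pos (by norm_num), ENNReal.top_mul (by simpa using hv0)] at hmid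
  exact hv.not_ge hmid

theorem IsLogConcaveFn.ofReal {E : Type*} [AddCommGroup E] [Module ℝ E] {f : E → ℝ}
    (hf : IsLogConcaveFn f) : IsENNRealLogConcave fun x => ENNReal.ofReal (f x) := by
  intro x y a b ha hb hab
  obtain rfl : b = 1 - a := by linarith
  rw [ENNReal.ofReal_rpow_of_nonneg (hf.1 x) ha.le, ENNReal.ofReal_rpow_of_nonneg (hf.1 y) hb.le,
    ← ENNReal.ofReal_mul (Real.rpow_nonneg (hf.1 x) a)]
  exact ENNReal.ofReal_le_ofReal (hf.2 x y a ha.le (by linarith))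

section Orthogonal

variable {A B S : Type*}
  [NormedAddCommGroup A] [InnerProductSpace ℝ A] [FiniteDimensional ℝ A] [MeasurableSpace A]
  [BorelSpace A]
  [NormedAddCommGroup B] [InnerProductSpace ℝ B] [FiniteDimensional ℝ B] [MeasurableSpace B]
  [BorelSpace B]
  [NormedAddCommGroup S] [InnerProductSpace ℝ S] [FiniteDimensional ℝ S] [MeasurableSpace S]
  [BorelSpace S]

theorem lintegral_eq_lintegral_lintegral_of_orthogonal (α : A →ₗᵢ[ℝ] S) (β : B →ₗᵢ[ℝ] S)
    (horth : ∀ a b, ⟪α a, β b⟫ = 0)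
    (hdim : Module.finrank ℝ S = Module.finrank ℝ A + Module.finrank ℝ B)
    {f : S → ℝ≥0∞} (hf : AEMeasurable f) :
    ∫⁻ s, f s = ∫⁻ a, ∫⁻ b, f (α a + β b) := by
  let L : WithLp 2 (A × B) →ₗ[ℝ] S :=
    (α.toLinearMap.coprod β.toLinearMap).comp (WithLp.linearEquiv 2 ℝ (A × B)).toLinearMap
  have norm_L : ∀ x, ‖L x‖ = ‖x‖ := fun x => by
    refine (sq_eq_sq₀ (norm_nonneg _) (norm_nonneg _)).1 ?_
    change ‖α x.fst + β x.snd‖ ^ 2 = ‖x‖ ^ 2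
    rw [WithLp.prod_norm_sq_eq_of_L2, norm_add_sq_real, horth, α.norm_map, β.norm_map]
    ring
  have hfin : Module.finrank ℝ (WithLp 2 (A × B)) = Module.finrank ℝ S := by
    rw [(WithLp.linearEquiv 2 ℝ (A × B)).finrank_eq, Module.finrank_prod, hdim]
  let e := LinearIsometry.toLinearIsometryEquiv ⟨L, norm_L⟩ hfin
  have he : MeasurePreserving (fun z : A × B => e (WithLp.toLp 2 z)) :=
    e.measurePreserving.comp (WithLp.volume_preserving_toLp A B)
  rw [← he.lintegral_comp_emb (e.toHomeomorph.measurableEmbedding.comp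
    (MeasurableEquiv.toLp 2 (A × B)).measurableEmbedding)]
  exact lintegral_prod _ (hf.comp_quasiMeasurePreserving he.quasiMeasurePreserving)

theorem lintegral_eq_lintegral_lintegral_orthogonal (V : Submodule ℝ S) {f : S → ℝ≥0∞}
    (hf : AEMeasurable f) : ∫⁻ x, f x = ∫⁻ v : V, ∫⁻ w : Vᗮ, f (v + w) :=
  lintegral_eq_lintegral_lintegral_of_orthogonal V.subtypeₗᵢ Vᗮ.subtypeₗᵢ
    (fun a b => Submodule.inner_right_of_mem_orthogonal a.2 b.2)
    (Submodule.finrank_add_finrank_orthogonal V).symm hf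

/-- The marginal of `f` on the subspace `V` with values in `[0, ∞]`, as a function on the whole
space that is constant along `Vᗮ`. -/
def orthMarginal (f : S → ℝ≥0∞) (V : Submodule ℝ S) (x : S) : ℝ≥0∞ :=
  ∫⁻ w : Vᗮ, f (x + w)

protected theorem IsENNRealLogConcave.orthMarginal {f : S → ℝ≥0∞} (hf : IsENNRealLogConcave f)
    (V : Submodule ℝ S) : IsENNRealLogConcave (orthMarginal f V) :=
  (hf.comp_affineMap (LinearMap.id.coprod Vᗮ.subtype).toAffineMap).lintegral

theorem orthMarginal_eq_lintegral_orthMarginal {f : S → ℝ≥0∞} (hf : IsENNRealLogConcave f)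
    {F V : Submodule ℝ S} (hFV : F ≤ V) (x : S) :
    orthMarginal f F x = ∫⁻ y : ↥(Fᗮ ⊓ V), orthMarginal f V (x + y) := by
  have hmeas : AEMeasurable fun w : Fᗮ => f (x + w) :=
    (hf.comp_affineMap (AffineMap.const ℝ Fᗮ x + Fᗮ.subtype.toAffineMap)).aemeasurable _
  have hdim : Module.finrank ℝ Fᗮ = Module.finrank ℝ ↥(Fᗮ ⊓ V) + Module.finrank ℝ Vᗮ := by
    have h1 := Submodule.finrank_add_inf_finrank_orthogonal hFV
    have h2 := Submodule.finrank_add_finrank_orthogonal V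
    have h3 := Submodule.finrank_add_finrank_orthogonal F
    lia
  refine (lintegral_eq_lintegral_lintegral_of_orthogonal
    ⟨Submodule.inclusion (inf_le_left : Fᗮ ⊓ V ≤ Fᗮ), fun _ => rfl⟩
    ⟨Submodule.inclusion (Submodule.orthogonal_le hFV), fun _ => rfl⟩
    (fun a b => Submodule.inner_right_of_mem_orthogonal (K := V) a.2.2 b.2) hdim hmeas).trans ?_
  refine lintegral_congr fun y => lintegral_congr fun w => ?_
  rw [add_assoc]
  rfl

end Orthogonal

/-! ### The value of a log-concave density at its barycenter -/

theorem exists_continuousLinearMap_le_of_notMem {V : Type*} [NormedAddCommGroup V]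
    [NormedSpace ℝ V] [FiniteDimensional ℝ V] {C : Set V} (hC : Convex ℝ C) (hne : C.Nonempty)
    {m : V} (hm : m ∉ C) : ∃ φ : V →L[ℝ] ℝ, φ ≠ 0 ∧ ∀ x ∈ C, φ x ≤ φ m := by
  by_cases hint : (interior C).Nonempty
  · obtain ⟨φ, hφ⟩ := geometric_hahn_banach_open_point hC.interior isOpen_interior
      fun h => hm (interior_subset h)
    refine ⟨φ, ?_, fun x hx => ?_⟩
    · rintro rfl
      exact lt_irrefl _ (hφ hint.some hint.some_mem)
    · have hcl : closure (interior C) ⊆ {x | φ x ≤ φ m} :=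
        closure_minimal (fun x hx => (hφ x hx).le) (isClosed_le φ.continuous continuous_const)
      rw [hC.closure_interior_eq_closure_of_nonempty_interior hint] at hcl
      exact hcl (subset_closure hx)
  · have hdir : (affineSpan ℝ C).direction ≠ ⊤ := fun h =>
      hint (hC.interior_nonempty_iff_affineSpan_eq_top.2
        ((AffineSubspace.direction_eq_top_iff_of_nonempty ((affineSpan_nonempty ℝ).2 hne)).1 h))
    obtain ⟨φ, hφ0, hφ⟩ := Submodule.exists_le_ker_of_lt_top _ hdir.lt_top
    obtain ⟨c, hc⟩ := hne
    have hconst : ∀ x ∈ C, φ x = φ c := fun x hx => by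
      have := hφ (AffineSubspace.vsub_mem_direction (subset_affineSpan ℝ C hx)
        (subset_affineSpan ℝ C hc))
      rwa [LinearMap.mem_ker, vsub_eq_sub, map_sub, sub_eq_zero] at this
    have hφ0' : LinearMap.toContinuousLinearMap φ ≠ 0 := by simpa using hφ0
    rcases le_total (φ c) (φ m) with h | h
    · exact ⟨_, hφ0', fun x hx => (hconst x hx).trans_le h⟩
    · exact ⟨_, neg_ne_zero.2 hφ0', fun x hx => neg_le_neg (h.trans_eq (hconst x hx).symm)⟩

/-- Unlike in `Convex.integral_mem`, the set is not assumed closed. Where the mean leaves `C`, a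
separating functional is almost surely constant, which reduces the dimension. -/
theorem integral_mem_of_convex {Ω : Type*} [MeasurableSpace Ω] {μ : Measure Ω}
    [IsProbabilityMeasure μ] {V : Type*} [NormedAddCommGroup V] [NormedSpace ℝ V]
    [FiniteDimensional ℝ V] {C : Set V} (hC : Convex ℝ C) {X : Ω → V} (hX : Integrable X μ)
    (hXC : ∀ᵐ ω ∂μ, X ω ∈ C) : ∫ ω, X ω ∂μ ∈ C := by
  induction hd : Module.finrank ℝ V using Nat.strong_induction_on generalizing V with | _ d ih
  subst hd
  by_contra hm
  set m := ∫ ω, X ω ∂μ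
  obtain ⟨φ, hφ0, hφ⟩ :=
    exists_continuousLinearMap_le_of_notMem hC (hXC.exists.elim fun ω h => ⟨X ω, h⟩) hm
  have hφX : ∀ᵐ ω ∂μ, X ω - m ∈ φ.ker := by
    have hle : ∀ᵐ ω ∂μ, 0 ≤ φ m - φ (X ω) := hXC.mono fun ω h => sub_nonneg.2 (hφ _ h)
    have hint : ∫ ω, (φ m - φ (X ω)) ∂μ = 0 := by
      rw [integral_sub (integrable_const _) (φ.integrable_comp hX), φ.integral_comp_comm hX]
      simp [m]
    filter_upwards [(integral_eq_zero_iff_of_nonneg_ae hle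
      ((integrable_const _).sub (φ.integrable_comp hX))).1 hint] with ω hω
    rw [LinearMap.mem_ker, map_sub, sub_eq_zero]
    exact (sub_eq_zero.1 hω).symm
  obtain ⟨P, hP⟩ := Submodule.ClosedComplemented.of_finiteDimensional φ.ker
  have hlt : Module.finrank ℝ φ.ker < Module.finrank ℝ V :=
    Submodule.finrank_lt fun h => hφ0 (ContinuousLinearMap.coe_injective (LinearMap.ker_eq_top.1 h))
  have hmem := ih _ hlt (hC.affine_preimage (AffineMap.const ℝ φ.ker m + φ.ker.subtype.toAffineMap))
    (P.integrable_comp (hX.sub (integrable_const m))) ?_ rfl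
  · rw [P.integral_comp_comm (hX.sub (integrable_const m))] at hmem
    simp only [Pi.sub_apply] at hmem
    rw [integral_sub hX (integrable_const m)] at hmem
    refine hm ?_
    simpa [m] using hmem
  · filter_upwards [hXC, hφX] with ω hω hω'
    have hproj : (P (X ω - m) : V) = X ω - m := congrArg Subtype.val (hP ⟨_, hω'⟩)
    change m + (P (X ω - m) : V) ∈ C
    rwa [hproj, add_sub_cancel]

/-- A log-concave probability density with barycenter at the origin. -/
structure IsCenteredLogConcaveDensity {V : Type*} [NormedAddCommGroup V] [NormedSpace ℝ V]
    [MeasureSpace V] (f : V → ℝ) : Prop where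
  isLogConcaveFn : IsLogConcaveFn f
  integrable : Integrable f
  integral_eq_one : ∫ x, f x = 1
  integrable_smul : Integrable fun x => f x • x
  integral_smul_eq_zero : ∫ x, f x • x = 0

theorem IsLogConcaveFn.sqrt_mul_sqrt_le {E : Type*} [AddCommGroup E] [Module ℝ E] {f : E → ℝ}
    (hf : IsLogConcaveFn f) (x y : E) : √(f x) * √(f y) ≤ f ((1 / 2 : ℝ) • (x + y)) := by
  have := hf.2 x y (1 / 2) (by norm_num) (by norm_num)
  rw [Real.sqrt_eq_rpow, Real.sqrt_eq_rpow, smul_add]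
  convert this using 3 <;> norm_num

theorem IsLogConcaveFn.convex_one_le_sq_mul {E : Type*} [AddCommGroup E] [Module ℝ E] {f : E → ℝ}
    (hf : IsLogConcaveFn f) : Convex ℝ {z : E × ℝ | 0 < z.2 ∧ 1 ≤ z.2 ^ 2 * f z.1} := by
  rw [convex_iff_forall_pos]
  rintro ⟨x, t⟩ ⟨ht, hx⟩ ⟨y, s⟩ ⟨hs, hy⟩ a b ha hb hab
  obtain rfl : b = 1 - a := by linarith
  simp only at ht hx hs hy
  have hpow : ∀ {c τ : ℝ}, 0 < τ → (τ ^ 2) ^ c = (τ ^ c) ^ 2 := fun {c τ} hτ => by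
    rw [← Real.rpow_natCast, ← Real.rpow_natCast, ← Real.rpow_mul hτ.le, ← Real.rpow_mul hτ.le,
      mul_comm]
  have hmean := Real.geom_mean_le_arith_mean2_weighted ha.le hb.le ht.le hs.le hab
  refine ⟨by simp only [Prod.smul_mk, Prod.mk_add_mk, smul_eq_mul]; positivity, ?_⟩
  simp only [Prod.smul_mk, Prod.mk_add_mk, smul_eq_mul]
  calc (1 : ℝ) ≤ (t ^ 2 * f x) ^ a * (s ^ 2 * f y) ^ (1 - a) :=
        one_le_mul_of_one_le_of_one_le (Real.one_le_rpow hx ha.le) (Real.one_le_rpow hy hb.le)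
    _ = (t ^ a * s ^ (1 - a)) ^ 2 * (f x ^ a * f y ^ (1 - a)) := by
        rw [Real.mul_rpow (by positivity) (hf.1 x), Real.mul_rpow (by positivity) (hf.1 y),
          hpow ht, hpow hs]
        ring
    _ ≤ (a * t + (1 - a) * s) ^ 2 * f (a • x + (1 - a) • y) := by
        gcongr
        exacts [mul_nonneg (Real.rpow_nonneg (hf.1 x) a) (Real.rpow_nonneg (hf.1 y) _),
          hf.2 x y a ha.le (by linarith)]

section Barycenter

variable {V : Type*} [NormedAddCommGroup V] [InnerProductSpace ℝ V] [FiniteDimensional ℝ V]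
  [MeasurableSpace V] [BorelSpace V] {f : V → ℝ}

theorem IsLogConcaveFn.integrable_sqrt (hf : IsLogConcaveFn f) (hi : Integrable f) {x₀ : V}
    (h0 : 0 < f x₀) : Integrable fun x => √(f x) := by
  have hdom : Integrable fun x => f ((1 / 2 : ℝ) • (x + x₀)) / √(f x₀) :=
    ((hi.comp_smul (by norm_num : (1 / 2 : ℝ) ≠ 0)).comp_add_right x₀).div_const _
  refine hdom.mono' hi.aemeasurable.sqrt.aestronglyMeasurable (.of_forall fun x => ?_)
  rw [Real.norm_of_nonneg (Real.sqrt_nonneg _), le_div_iff₀ (Real.sqrt_pos.2 h0)]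
  exact hf.sqrt_mul_sqrt_le x x₀

theorem IsLogConcaveFn.integral_sqrt_mul_sqrt_le (hf : IsLogConcaveFn f) (hi : Integrable f)
    (x₀ : V) : (∫ x, √(f x)) * √(f x₀) ≤ 2 ^ Module.finrank ℝ V * ∫ x, f x := by
  rw [← integral_mul_const]
  refine (integral_mono_of_nonneg (.of_forall fun x => by positivity)
    ((hi.comp_smul (by norm_num : (1 / 2 : ℝ) ≠ 0)).comp_add_right x₀)
    (.of_forall fun x => hf.sqrt_mul_sqrt_le x x₀)).trans_eq ?_
  rw [integral_add_right_eq_self (fun x => f ((1 / 2 : ℝ) • x)) x₀, Measure.integral_comp_smul]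
  simp

namespace IsCenteredLogConcaveDensity

theorem exists_pos (hf : IsCenteredLogConcaveDensity f) : ∃ x, 0 < f x := by
  by_contra! h
  have hz : f = 0 := funext fun x => le_antisymm (h x) (hf.isLogConcaveFn.1 x)
  simpa [hz] using hf.integral_eq_one

/-- The random vector `(X, f(X)^{-1/2})`, with `X` of density `f`, takes its values in the convex
set `{(x, t) | 1 ≤ t² f(x)}`; hence so does its mean `(0, ∫ √f)`. -/
theorem one_le_sq_integral_sqrt_mul (hf : IsCenteredLogConcaveDensity f) :
    1 ≤ (∫ x, √(f x)) ^ 2 * f 0 := by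
  obtain ⟨x₀, hx₀⟩ := hf.exists_pos
  have hmeas : AEMeasurable (fun x => ENNReal.ofReal (f x)) :=
    hf.integrable.aemeasurable.ennreal_ofReal
  have hfin : ∀ᵐ x, ENNReal.ofReal (f x) < ∞ := .of_forall fun _ => ENNReal.ofReal_lt_top
  let μ : Measure V := volume.withDensity fun x => ENNReal.ofReal (f x)
  have : IsProbabilityMeasure μ := ⟨by
    rw [withDensity_apply _ .univ, Measure.restrict_univ,
      ← ofReal_integral_eq_lintegral_ofReal hf.integrable (.of_forall hf.isLogConcaveFn.1),
      hf.integral_eq_one, ENNReal.ofReal_one]⟩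
  have htoReal : ∀ x, (ENNReal.ofReal (f x)).toReal = f x := fun x =>
    ENNReal.toReal_ofReal (hf.isLogConcaveFn.1 x)
  have hmul : ∀ x, f x * (√(f x))⁻¹ = √(f x) := fun x => by
    rw [← div_eq_mul_inv, Real.div_sqrt]
  have hsmul : (fun x => f x • ((x, (√(f x))⁻¹) : V × ℝ)) = fun x => (f x • x, √(f x)) :=
    funext fun x => by rw [Prod.smul_mk, smul_eq_mul, hmul]
  have hint : Integrable fun x => ((f x • x, √(f x)) : V × ℝ) :=
    hf.integrable_smul.prodMk (hf.isLogConcaveFn.integrable_sqrt hf.integrable hx₀)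
  have hmem := integral_mem_of_convex (μ := μ) hf.isLogConcaveFn.convex_one_le_sq_mul
    (X := fun x => (x, (√(f x))⁻¹)) ?_ ?_
  · rw [integral_withDensity_eq_integral_toReal_smul₀ hmeas hfin] at hmem
    simp only [htoReal, hsmul] at hmem
    rw [integral_pair hf.integrable_smul (hf.isLogConcaveFn.integrable_sqrt hf.integrable hx₀),
      hf.integral_smul_eq_zero] at hmem
    exact hmem.2
  · rw [integrable_withDensity_iff_integrable_smul₀' hmeas hfin]
    simpa only [htoReal, hsmul] using hint
  · rw [ae_withDensity_iff' hmeas]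
    refine .of_forall fun x hx => ?_
    have hpos : 0 < f x := ENNReal.ofReal_pos.1 (pos_iff_ne_zero.2 hx)
    refine ⟨by positivity, ?_⟩
    rw [inv_pow, Real.sq_sqrt hpos.le, inv_mul_cancel₀ hpos.ne']

theorem apply_zero_pos (hf : IsCenteredLogConcaveDensity f) : 0 < f 0 := by
  refine (hf.isLogConcaveFn.1 0).lt_of_ne fun h => ?_
  have := hf.one_le_sq_integral_sqrt_mul
  norm_num [← h] at this

theorem le_four_pow_mul_apply_zero (hf : IsCenteredLogConcaveDensity f) (x : V) :
    f x ≤ 4 ^ Module.finrank ℝ V * f 0 := by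
  have hle := hf.isLogConcaveFn.integral_sqrt_mul_sqrt_le hf.integrable x
  rw [hf.integral_eq_one, mul_one] at hle
  calc f x ≤ f x * ((∫ x, √(f x)) ^ 2 * f 0) :=
        le_mul_of_one_le_right (hf.isLogConcaveFn.1 x) hf.one_le_sq_integral_sqrt_mul
    _ = ((∫ x, √(f x)) * √(f x)) ^ 2 * f 0 := by
        rw [mul_pow, Real.sq_sqrt (hf.isLogConcaveFn.1 x)]
        ring
    _ ≤ (2 ^ Module.finrank ℝ V) ^ 2 * f 0 := by
        gcongr
        exact hf.isLogConcaveFn.1 0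
    _ = 4 ^ Module.finrank ℝ V * f 0 := by
        rw [pow_right_comm]
        norm_num

end IsCenteredLogConcaveDensity

end Barycenter

/-! ### Pinched log-concave functions -/

namespace IsLogConcaveFn

variable {E : Type*} [AddCommGroup E] [Module ℝ E] {f : E → ℝ}

theorem convex_setOf_le (hf : IsLogConcaveFn f) {c : ℝ} (hc : 0 ≤ c) : Convex ℝ {x | c ≤ f x} := by
  rw [convex_iff_forall_pos]
  intro x (hx : c ≤ f x) y (hy : c ≤ f y) a b ha hb hab
  obtain rfl : b = 1 - a := by linarith
  calc c = c ^ a * c ^ (1 - a) := by rw [← Real.rpow_add_of_nonneg hc ha.le hb.le, hab, rpow_one]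
    _ ≤ f x ^ a * f y ^ (1 - a) := by
      gcongr
      exact Real.rpow_nonneg (hf.1 x) a
    _ ≤ f (a • x + (1 - a) • y) := hf.2 x y a ha.le (by linarith)

theorem le_exp_mul_apply_zero (hf : IsLogConcaveFn f) (h0 : 0 < f 0) {c s : ℝ} (hs : 1 ≤ s)
    {x : E} (h : f (s⁻¹ • x) ≤ exp (-c) * f 0) : f x ≤ exp (-(c * s)) * f 0 := by
  have hs0 : 0 < s := by linarith
  have hinterp := hf.2 x 0 s⁻¹ (by positivity) (inv_le_one_of_one_le₀ hs)
  rw [smul_zero, add_zero] at hinterp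
  replace hinterp := hinterp.trans h
  have hroot : f x ^ s⁻¹ ≤ exp (-c) * f 0 ^ s⁻¹ := by
    rw [Real.rpow_sub h0, rpow_one, mul_div_assoc',
      div_le_iff₀ (Real.rpow_pos_of_pos h0 _)] at hinterp
    exact le_of_mul_le_mul_right (hinterp.trans_eq (by ring)) h0
  calc f x = (f x ^ s⁻¹) ^ s := (Real.rpow_inv_rpow (hf.1 x) hs0.ne').symm
    _ ≤ (exp (-c) * f 0 ^ s⁻¹) ^ s :=
      Real.rpow_le_rpow (Real.rpow_nonneg (hf.1 x) _) hroot hs0.le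
    _ = exp (-(c * s)) * f 0 := by
      rw [Real.mul_rpow (exp_pos _).le (Real.rpow_nonneg h0.le _),
        Real.rpow_inv_rpow h0.le hs0.ne', ← Real.exp_mul, neg_mul]

theorem exp_neg_mul_le_apply (hf : IsLogConcaveFn f) {c l : ℝ} (hl0 : 0 ≤ l) (hl1 : l ≤ 1)
    {x y : E} (h : exp (-c) * f x ≤ f y) :
    exp (-(c * (1 - l))) * f x ≤ f (l • x + (1 - l) • y) := by
  have hfx := hf.1 x
  calc exp (-(c * (1 - l))) * f x
      = exp (-c * (1 - l)) * (f x ^ l * f x ^ (1 - l)) := by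
        rw [← Real.rpow_add_of_nonneg hfx hl0 (by linarith), add_sub_cancel, rpow_one, neg_mul]
    _ = f x ^ l * (exp (-c) * f x) ^ (1 - l) := by
        rw [Real.mul_rpow (exp_pos _).le hfx, ← Real.exp_mul]
        ring
    _ ≤ f x ^ l * f y ^ (1 - l) := by gcongr
    _ ≤ f (l • x + (1 - l) • y) := hf.2 x y l hl0 hl1

theorem exp_mul_le_apply_half_add (hf : IsLogConcaveFn f) {c : ℝ} {x y : E}
    (h : exp (-(2 * c)) * f y ≤ f x) : exp (-c) * f y ≤ f ((1 / 2 : ℝ) • (x + y)) := by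
  convert hf.exp_neg_mul_le_apply (l := 1 / 2) (by norm_num) (by norm_num) h using 2
  · ring_nf
  · ring_nf
    module

theorem le_exp_mul_apply_half (hf : IsLogConcaveFn f) (h0 : 0 < f 0) {c s : ℝ} (hs : 1 ≤ s)
    {x : E} (h : f (s⁻¹ • x) ≤ exp (-c) * f 0) :
    f x ≤ exp (-(c * s / 2)) * f ((1 / 2 : ℝ) • x) := by
  have hx : exp (-(2 * -(c * s / 2))) * f x ≤ f 0 := by
    have := hf.le_exp_mul_apply_zero h0 hs h
    rw [Real.exp_neg, inv_mul_eq_div, le_div_iff₀' (exp_pos _)] at this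
    rwa [show -(2 * -(c * s / 2)) = c * s by ring]
  have := hf.exp_mul_le_apply_half_add hx
  rw [zero_add, neg_neg] at this
  rwa [Real.exp_neg, inv_mul_eq_div, le_div_iff₀' (exp_pos _)]

end IsLogConcaveFn

theorem two_pow_le_four_rpow {d : ℕ} {Q : ℝ} (hd : (d : ℝ) ≤ 2 * Q) : (2 : ℝ) ^ d ≤ 4 ^ Q := by
  rw [show (4 : ℝ) = 2 ^ (2 : ℝ) by norm_num, ← Real.rpow_mul (by norm_num), ← Real.rpow_natCast]
  exact Real.rpow_le_rpow_of_exponent_le (by norm_num) hd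

theorem four_rpow_le_exp {Q : ℝ} (hQ : 0 ≤ Q) : (4 : ℝ) ^ Q ≤ exp (2 * Q) := by
  have h2 : (2 : ℝ) ≤ exp 1 := by linarith [Real.add_one_le_exp 1]
  have h4 : (4 : ℝ) ≤ exp 2 := by
    rw [show (2 : ℝ) = 1 + 1 by norm_num, Real.exp_add]
    nlinarith
  rw [Real.exp_mul]
  gcongr

theorem rpow_mul_exp_neg_three_mul_le {s Q : ℝ} (hs : 1 ≤ s) (hQ : 0 ≤ Q) :
    s ^ Q * exp (-(3 * Q * s)) ≤ exp (-(2 * Q)) := by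
  have hsQ : s ^ Q ≤ exp (s * Q) := by
    rw [Real.exp_mul]
    exact Real.rpow_le_rpow (by linarith) (by linarith [Real.add_one_le_exp s]) hQ
  calc s ^ Q * exp (-(3 * Q * s)) ≤ exp (s * Q) * exp (-(3 * Q * s)) := by gcongr
    _ = exp (s * Q + -(3 * Q * s)) := (Real.exp_add _ _).symm
    _ ≤ exp (-(2 * Q)) := Real.exp_le_exp.2 (by nlinarith)

theorem le_mul_one_add_div_rpow {Q R : ℝ} (hQ : 1 ≤ Q) (hR : 0 < R) {t : ℝ} (ht : 0 ≤ t) :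
    t ≤ R * (1 + (t / R) ^ Q) := by
  rcases le_total t R with h | h
  · have : 0 ≤ (t / R) ^ Q := by positivity
    nlinarith
  · have := Real.self_le_rpow_of_one_le ((one_le_div hR).2 h) hQ
    calc t = R * (t / R) := by field_simp
      _ ≤ R * (1 + (t / R) ^ Q) := by gcongr; linarith

section Pinched

variable {V : Type*} [NormedAddCommGroup V] [InnerProductSpace ℝ V] {f : V → ℝ} {Q r R : ℝ}

/-- The inclusions `r B ⊆ Z⁺_Q(f) ⊆ R B` expressed through the `Q`-th power of the support function
of `Z⁺_Q(f)`, together with the finiteness of the moments that define it. -/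
structure HasMomentBounds [MeasureSpace V] (f : V → ℝ) (Q r R : ℝ) : Prop where
  integrable : ∀ y : V, Integrable fun x => max ⟪x, y⟫ 0 ^ Q * f x
  le_integral : ∀ y : V, (r * ‖y‖) ^ Q ≤ 2 * ∫ x, max ⟪x, y⟫ 0 ^ Q * f x
  integral_le : ∀ y : V, 2 * ∫ x, max ⟪x, y⟫ 0 ^ Q * f x ≤ (R * ‖y‖) ^ Q

/-- A log-concave function which is of the same order, up to factors `exp (O(Q))`, on the ball of
radius `ρ` and has dropped by a larger such factor outside the ball of radius `S`. -/
structure IsPinched (f : V → ℝ) (Q ρ S : ℝ) : Prop where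
  isLogConcaveFn : IsLogConcaveFn f
  apply_zero_pos : 0 < f 0
  le_exp_mul : ∀ x, f x ≤ exp (4 * Q) * f 0
  exp_neg_mul_le : ∀ x, ‖x‖ ≤ ρ → exp (-(6 * Q)) * f 0 ≤ f x
  le_exp_neg_mul : ∀ x, S < ‖x‖ → f x ≤ exp (-(10 * Q)) * f 0

theorem max_inner_mul_le_mul_add (hf : ∀ x, 0 ≤ f x) (hQ : 1 ≤ Q) (hR : 0 < R) (x y : V) :
    max ⟪x, y⟫ 0 * f x ≤ R * (f x + (R ^ Q)⁻¹ * (max ⟪x, y⟫ 0 ^ Q * f x)) := by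
  have hmax : 0 ≤ max ⟪x, y⟫ 0 := le_max_right _ _
  refine (mul_le_mul_of_nonneg_right (le_mul_one_add_div_rpow hQ hR hmax) (hf x)).trans_eq ?_
  rw [Real.div_rpow hmax hR.le]
  ring

/-- Where `f x` is not small and `x` is far out in the direction `φ`, so is the midpoint of `x` and
any `y` that is not far out in the direction `-φ`. -/
theorem IsLogConcaveFn.mul_one_sub_le_moment_midpoint (hf : IsLogConcaveFn f) {c : ℝ}
    (hQ : 0 ≤ Q) (hR : 0 < R) {x y φ : V} (hx : 8 * R ≤ ⟪x, φ⟫) (hxy : exp (-(2 * c)) * f y ≤ f x) :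
    (⟪x, φ⟫ / 4) ^ Q * exp (-c) * (f y - (4 * R)⁻¹ * (max ⟪y, -φ⟫ 0 * f y)) ≤
      max ⟪(1 / 2 : ℝ) • (x + y), φ⟫ 0 ^ Q * f ((1 / 2 : ℝ) • (x + y)) := by
  have hmid := hf.exp_mul_le_apply_half_add hxy
  have hfy := hf.1 y
  set t := max ⟪y, -φ⟫ 0
  have : 0 ≤ t := le_max_right _ _
  have ht : -⟪y, φ⟫ ≤ t :=
    (inner_neg_right (𝕜 := ℝ) y φ).ge.trans (le_max_left _ _)
  have hfactor : f y - (4 * R)⁻¹ * (t * f y) = (1 - t / (4 * R)) * f y := by ring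
  rw [hfactor]
  rcases le_total (4 * R) t with h | h
  · have hneg : (1 - t / (4 * R)) * f y ≤ 0 :=
      mul_nonpos_of_nonpos_of_nonneg (sub_nonpos.2 ((one_le_div (by positivity)).2 h)) hfy
    refine (mul_nonpos_of_nonneg_of_nonpos ?_ hneg).trans ?_
    · have : 0 ≤ ⟪x, φ⟫ := by linarith
      positivity
    · exact mul_nonneg (by positivity) (hf.1 _)
  · have hle : (1 - t / (4 * R)) * f y ≤ f y :=
      mul_le_of_le_one_left hfy (sub_le_self 1 (by positivity))
    have hinner : ⟪x, φ⟫ / 4 ≤ ⟪(1 / 2 : ℝ) • (x + y), φ⟫ := by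
      rw [real_inner_smul_left, inner_add_left]
      linarith
    have hx0 : 0 ≤ ⟪x, φ⟫ / 4 := by linarith
    calc (⟪x, φ⟫ / 4) ^ Q * exp (-c) * ((1 - t / (4 * R)) * f y)
        ≤ (⟪x, φ⟫ / 4) ^ Q * exp (-c) * f y := by gcongr
      _ = (⟪x, φ⟫ / 4) ^ Q * (exp (-c) * f y) := by ring
      _ ≤ _ := by
        gcongr
        exact hinner.trans (le_max_left _ _)

theorem IsLogConcaveFn.rpow_mul_le_of_le_on_hyperplane (hf : IsLogConcaveFn f) (h0 : 0 < f 0)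
    (hQ : 0 ≤ Q) {φ : V} {a : ℝ} (ha : 0 < a)
    (hle : ∀ x, ⟪x, φ⟫ = a → f x ≤ exp (-(6 * Q)) * f 0) (x : V) :
    max ⟪x, φ⟫ 0 ^ Q * f x ≤ a ^ Q * (f x + exp (-(2 * Q)) * f ((1 / 2 : ℝ) • x)) := by
  have hfx := hf.1 x
  have hfx' := hf.1 ((1 / 2 : ℝ) • x)
  rcases le_total ⟪x, φ⟫ a with h | h
  · calc max ⟪x, φ⟫ 0 ^ Q * f x ≤ a ^ Q * f x := by
          gcongr
          exact max_le h ha.le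
      _ ≤ a ^ Q * (f x + exp (-(2 * Q)) * f ((1 / 2 : ℝ) • x)) := by
          gcongr
          exact le_add_of_nonneg_right (by positivity)
  · obtain ⟨s, hs⟩ : ∃ s, ⟪x, φ⟫ = a * s := ⟨⟪x, φ⟫ / a, by field_simp⟩
    have hs1 : 1 ≤ s := le_of_mul_le_mul_left (by simpa [hs] using h) ha
    have hplane : ⟪s⁻¹ • x, φ⟫ = a := by
      rw [real_inner_smul_left, hs]
      field_simp
    have hdecay := hf.le_exp_mul_apply_half h0 hs1 (hle _ hplane)
    rw [max_eq_left (ha.le.trans h), hs, Real.mul_rpow ha.le (by linarith), mul_assoc]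
    gcongr
    calc s ^ Q * f x ≤ s ^ Q * (exp (-(6 * Q * s / 2)) * f ((1 / 2 : ℝ) • x)) := by gcongr
      _ = s ^ Q * exp (-(3 * Q * s)) * f ((1 / 2 : ℝ) • x) := by ring_nf
      _ ≤ exp (-(2 * Q)) * f ((1 / 2 : ℝ) • x) := by
          gcongr
          exact rpow_mul_exp_neg_three_mul_le hs1 hQ
      _ ≤ f x + exp (-(2 * Q)) * f ((1 / 2 : ℝ) • x) := le_add_of_nonneg_left hfx

variable [FiniteDimensional ℝ V] [MeasurableSpace V] [BorelSpace V]

namespace IsCenteredLogConcaveDensity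

theorem le_exp_mul_apply_zero (hf : IsCenteredLogConcaveDensity f) (hQ : 0 ≤ Q)
    (hd : (Module.finrank ℝ V : ℝ) ≤ 2 * Q) (x : V) : f x ≤ exp (4 * Q) * f 0 := by
  refine (hf.le_four_pow_mul_apply_zero x).trans ?_
  gcongr
  · exact hf.apply_zero_pos.le
  · calc (4 : ℝ) ^ Module.finrank ℝ V = 2 ^ Module.finrank ℝ V * 2 ^ Module.finrank ℝ V := by
          rw [← mul_pow]
          norm_num
      _ ≤ exp (2 * Q) * exp (2 * Q) := by
          have := (two_pow_le_four_rpow hd).trans (four_rpow_le_exp hQ)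
          gcongr
      _ = exp (4 * Q) := by
          rw [← Real.exp_add]
          ring_nf

theorem integral_comp_half_smul_le (hf : IsCenteredLogConcaveDensity f)
    (hd : (Module.finrank ℝ V : ℝ) ≤ 2 * Q) : ∫ x, f ((1 / 2 : ℝ) • x) ≤ 4 ^ Q := by
  rw [Measure.integral_comp_smul, hf.integral_eq_one]
  simpa using two_pow_le_four_rpow hd

/-- If `f` is already small on a hyperplane at distance `a` from the barycenter, it decays
exponentially beyond it, so the moment in this direction comes from `⟪x, φ⟫ ≤ a`. -/
theorem integral_rpow_le_of_le_on_hyperplane (hf : IsCenteredLogConcaveDensity f) (hQ : 0 ≤ Q)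
    (hd : (Module.finrank ℝ V : ℝ) ≤ 2 * Q) {φ : V} {a : ℝ} (ha : 0 < a)
    (hle : ∀ x, ⟪x, φ⟫ = a → f x ≤ exp (-(6 * Q)) * f 0) :
    ∫ x, max ⟪x, φ⟫ 0 ^ Q * f x ≤ 2 * a ^ Q := by
  have hlc := hf.isLogConcaveFn
  have hint : Integrable fun x => exp (-(2 * Q)) * f ((1 / 2 : ℝ) • x) :=
    (hf.integrable.comp_smul (by norm_num)).const_mul _
  have hhalf := (hf.integral_comp_half_smul_le hd).trans (four_rpow_le_exp hQ)
  calc ∫ x, max ⟪x, φ⟫ 0 ^ Q * f x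
      ≤ ∫ x, a ^ Q * (f x + exp (-(2 * Q)) * f ((1 / 2 : ℝ) • x)) :=
        integral_mono_of_nonneg (.of_forall fun x => mul_nonneg (by positivity) (hlc.1 x))
          ((hf.integrable.add hint).const_mul _) (.of_forall fun x =>
            hlc.rpow_mul_le_of_le_on_hyperplane hf.apply_zero_pos hQ ha hle x)
    _ = a ^ Q * (1 + exp (-(2 * Q)) * ∫ x, f ((1 / 2 : ℝ) • x)) := by
        rw [integral_const_mul, integral_add hf.integrable hint, hf.integral_eq_one,
          integral_const_mul]
    _ ≤ a ^ Q * (1 + exp (-(2 * Q)) * exp (2 * Q)) := by gcongr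
    _ = 2 * a ^ Q := by
        rw [← Real.exp_add, neg_add_cancel, Real.exp_zero]
        ring

/-- Otherwise a hyperplane at distance at most `r / 16` from the origin supports the superlevel
set, and the moment in its normal direction is too small. -/
theorem exp_neg_mul_apply_zero_le (hf : IsCenteredLogConcaveDensity f)
    (hm : HasMomentBounds f Q r R) (hQ : 1 ≤ Q) (hd : (Module.finrank ℝ V : ℝ) ≤ 2 * Q)
    (hr : 0 < r) {x : V} (hx : ‖x‖ ≤ r / 16) : exp (-(6 * Q)) * f 0 ≤ f x := by
  have h0 := hf.apply_zero_pos
  by_contra hlt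
  obtain ⟨F, hF0, hF⟩ := exists_continuousLinearMap_le_of_notMem
    (hf.isLogConcaveFn.convex_setOf_le (c := exp (-(6 * Q)) * f 0) (by positivity))
    ⟨0, mul_le_of_le_one_left h0.le (Real.exp_le_one_iff.2 (by linarith))⟩ hlt
  set φ := (InnerProductSpace.toDual ℝ V).symm F with hφ
  have hφF : ∀ y, F y = ⟪y, φ⟫ := fun y => by
    rw [real_inner_comm, hφ, InnerProductSpace.toDual_symm_apply]
  have hφ0 : 0 < ‖φ‖ := norm_pos_iff.2 (by simpa [hφ] using hF0)
  have hmom := hf.integral_rpow_le_of_le_on_hyperplane (by linarith : 0 ≤ Q) hd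
    (φ := φ) (a := r / 8 * ‖φ‖) (by positivity) fun y hy => by
      by_contra! hlt'
      have h1 := hF y hlt'.le
      have h2 := real_inner_le_norm x φ
      rw [hφF, hφF, hy] at h1
      nlinarith
  have hlow := hm.le_integral φ
  have hsmall : 8 * (r / 8 * ‖φ‖) ^ Q ≤ (r * ‖φ‖) ^ Q := by
    rw [show r * ‖φ‖ = 8 * (r / 8 * ‖φ‖) by ring,
      Real.mul_rpow (x := 8) (by norm_num) (by positivity)]
    gcongr
    exact Real.self_le_rpow_of_one_le (by norm_num) hQ
  have hpos : 0 < (r / 8 * ‖φ‖) ^ Q := by positivity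
  linarith

end IsCenteredLogConcaveDensity

namespace HasMomentBounds

theorem integrable_max_inner_mul (hm : HasMomentBounds f Q r R) (hf : ∀ x, 0 ≤ f x)
    (hi : Integrable f) (hQ : 1 ≤ Q) (y : V) : Integrable fun x => max ⟪x, y⟫ 0 * f x := by
  refine ((hi.add ((hm.integrable y).const_mul (1 ^ Q)⁻¹)).const_mul 1).mono'
    (AEStronglyMeasurable.mul (by fun_prop) hi.aestronglyMeasurable) (.of_forall fun x => ?_)
  rw [Real.norm_of_nonneg (mul_nonneg (le_max_right _ _) (hf x))]
  exact max_inner_mul_le_mul_add hf hQ one_pos x y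

theorem integral_max_inner_mul_le (hm : HasMomentBounds f Q r R) (hf : ∀ x, 0 ≤ f x)
    (hi : Integrable f) (h1 : ∫ x, f x = 1) (hQ : 1 ≤ Q) (hR : 0 < R) {y : V} (hy : ‖y‖ = 1) :
    ∫ x, max ⟪x, y⟫ 0 * f x ≤ 3 / 2 * R := by
  have hint : Integrable fun x => (R ^ Q)⁻¹ * (max ⟪x, y⟫ 0 ^ Q * f x) :=
    (hm.integrable y).const_mul _
  have hle := hm.integral_le y
  rw [hy, mul_one] at hle
  have : 0 < R ^ Q := by positivity
  calc ∫ x, max ⟪x, y⟫ 0 * f x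
      ≤ ∫ x, R * (f x + (R ^ Q)⁻¹ * (max ⟪x, y⟫ 0 ^ Q * f x)) :=
        integral_mono (hm.integrable_max_inner_mul hf hi hQ y) ((hi.add hint).const_mul _)
          fun x => max_inner_mul_le_mul_add hf hQ hR x y
    _ = R * (1 + (R ^ Q)⁻¹ * ∫ x, max ⟪x, y⟫ 0 ^ Q * f x) := by
        rw [integral_const_mul, integral_add hi hint, h1, integral_const_mul]
    _ ≤ R * (1 + (R ^ Q)⁻¹ * (R ^ Q / 2)) := by
        gcongr
        linarith
    _ = 3 / 2 * R := by
        field_simp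
        norm_num

end HasMomentBounds

namespace IsCenteredLogConcaveDensity

theorem integral_rpow_comp_midpoint_le (hm : HasMomentBounds f Q r R)
    (hd : (Module.finrank ℝ V : ℝ) ≤ 2 * Q) (hR : 0 ≤ R) {φ : V} (hφ : ‖φ‖ = 1) (x : V) :
    ∫ y, max ⟪(1 / 2 : ℝ) • (x + y), φ⟫ 0 ^ Q * f ((1 / 2 : ℝ) • (x + y)) ≤
      4 ^ Q * (R ^ Q / 2) := by
  have hle := hm.integral_le φ
  rw [hφ, mul_one] at hle
  rw [integral_add_left_eq_self
    (fun z => max ⟪(1 / 2 : ℝ) • z, φ⟫ 0 ^ Q * f ((1 / 2 : ℝ) • z)) x,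
    Measure.integral_comp_smul volume (fun z => max ⟪z, φ⟫ 0 ^ Q * f z) (1 / 2)]
  calc _ = 2 ^ Module.finrank ℝ V * ∫ z, max ⟪z, φ⟫ 0 ^ Q * f z := by simp
    _ ≤ 2 ^ Module.finrank ℝ V * (R ^ Q / 2) := by
        gcongr
        linarith
    _ ≤ 4 ^ Q * (R ^ Q / 2) := by
        gcongr
        exact two_pow_le_four_rpow hd

theorem rpow_mul_exp_neg_mul_le_moment (hf : IsCenteredLogConcaveDensity f)
    (hm : HasMomentBounds f Q r R) (hQ : 1 ≤ Q) (hd : (Module.finrank ℝ V : ℝ) ≤ 2 * Q)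
    (hR : 0 < R) {x φ : V} (hφ : ‖φ‖ = 1) (hx : 8 * R ≤ ⟪x, φ⟫) {c : ℝ}
    (hxy : ∀ y, exp (-(2 * c)) * f y ≤ f x) :
    (⟪x, φ⟫ / 4) ^ Q * exp (-c) * (5 / 8) ≤ 4 ^ Q * (R ^ Q / 2) := by
  have hlc := hf.isLogConcaveFn
  have hneg := (hm.integrable_max_inner_mul hlc.1 hf.integrable hQ (-φ)).const_mul (4 * R)⁻¹
  have hneg_le := hm.integral_max_inner_mul_le hlc.1 hf.integrable hf.integral_eq_one hQ hR
    ((norm_neg φ).trans hφ)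
  have : 0 < ⟪x, φ⟫ := by linarith
  set m := (⟪x, φ⟫ / 4) ^ Q * exp (-c)
  have : 0 < m := by positivity
  calc m * (5 / 8) = m * (1 - (4 * R)⁻¹ * (3 / 2 * R)) := by
        field_simp
        norm_num
    _ ≤ m * (1 - (4 * R)⁻¹ * ∫ y, max ⟪y, -φ⟫ 0 * f y) := by gcongr
    _ = ∫ y, m * (f y - (4 * R)⁻¹ * (max ⟪y, -φ⟫ 0 * f y)) := by
        rw [integral_const_mul, integral_sub hf.integrable hneg, hf.integral_eq_one,
          integral_const_mul]
    _ ≤ ∫ y, max ⟪(1 / 2 : ℝ) • (x + y), φ⟫ 0 ^ Q * f ((1 / 2 : ℝ) • (x + y)) :=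
        integral_mono ((hf.integrable.sub hneg).const_mul m)
          (((hm.integrable φ).comp_smul (by norm_num : (1 / 2 : ℝ) ≠ 0)).comp_add_left x)
          fun y => hlc.mul_one_sub_le_moment_midpoint (by linarith) hR hx (hxy y)
    _ ≤ 4 ^ Q * (R ^ Q / 2) := integral_rpow_comp_midpoint_le hm hd hR.le hφ x

theorem norm_le_of_exp_neg_mul_le (hf : IsCenteredLogConcaveDensity f)
    (hm : HasMomentBounds f Q r R) (hQ : 1 ≤ Q) (hd : (Module.finrank ℝ V : ℝ) ≤ 2 * Q)
    (hR : 0 < R) {x : V} (hx : exp (-(10 * Q)) * f 0 ≤ f x) : ‖x‖ ≤ 16 * exp 7 * R := by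
  have he : 1 ≤ exp 7 := Real.one_le_exp (by norm_num)
  by_contra! hlt
  have hxR : 8 * R ≤ ‖x‖ := by nlinarith
  have hx0 : 0 < ‖x‖ := by linarith
  obtain ⟨φ, hφ, hxφ⟩ : ∃ φ : V, ‖φ‖ = 1 ∧ ⟪x, φ⟫ = ‖x‖ :=
    ⟨‖x‖⁻¹ • x, norm_smul_inv_norm (norm_pos_iff.1 hx0), by
      rw [inner_smul_right, real_inner_self_eq_norm_sq]
      field_simp⟩
  have hxy : ∀ y, exp (-(2 * (7 * Q))) * f y ≤ f x := fun y =>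
    calc exp (-(2 * (7 * Q))) * f y ≤ exp (-(2 * (7 * Q))) * (exp (4 * Q) * f 0) := by
          gcongr
          exact hf.le_exp_mul_apply_zero (by linarith) hd y
      _ = exp (-(10 * Q)) * f 0 := by
          rw [← mul_assoc, ← Real.exp_add]
          ring_nf
      _ ≤ f x := hx
  have hmoment := hf.rpow_mul_exp_neg_mul_le_moment hm hQ hd hR hφ (hxR.trans_eq hxφ.symm) hxy
  rw [hxφ] at hmoment
  have hlarge : (4 * R) ^ Q < (‖x‖ / 4) ^ Q * exp (-(7 * Q)) :=
    calc (4 * R) ^ Q = (4 * R * exp 7) ^ Q * exp (-(7 * Q)) := by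
          rw [Real.mul_rpow (by positivity) (exp_pos _).le, ← Real.exp_mul, mul_assoc,
            ← Real.exp_add, add_neg_cancel, Real.exp_zero, mul_one]
      _ < (‖x‖ / 4) ^ Q * exp (-(7 * Q)) := by
          gcongr
          linarith
  rw [Real.mul_rpow (by norm_num) hR.le] at hlarge
  have : 0 < (4 : ℝ) ^ Q * R ^ Q := by positivity
  linarith

theorem isPinched (hf : IsCenteredLogConcaveDensity f) (hm : HasMomentBounds f Q r R)
    (hQ : 1 ≤ Q) (hd : (Module.finrank ℝ V : ℝ) ≤ 2 * Q) (hr : 0 < r) (hR : 0 < R) :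
    IsPinched f Q (r / 16) (16 * exp 7 * R) where
  isLogConcaveFn := hf.isLogConcaveFn
  apply_zero_pos := hf.apply_zero_pos
  le_exp_mul := hf.le_exp_mul_apply_zero (by linarith) hd
  exp_neg_mul_le _ hx := hf.exp_neg_mul_apply_zero_le hm hQ hd hr hx
  le_exp_neg_mul _ hx := not_lt.1 fun h => hx.not_ge (hf.norm_le_of_exp_neg_mul_le hm hQ hd hR h.le)

end IsCenteredLogConcaveDensity

end Pinched

/-! ### Moments along rays -/

/-- The moment of order `σ` of `φ` along the half-line through `η`. -/
def rayMoment {E : Type*} [AddCommGroup E] [Module ℝ E] (φ : E → ℝ≥0∞) (σ : ℝ) (η : E) : ℝ≥0∞ :=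
  ∫⁻ t in Set.Ioi (0 : ℝ), ENNReal.ofReal (t ^ σ) * φ (t • η)

theorem lintegral_Ioi_comp_mul {c : ℝ} (hc : 0 < c) (F : ℝ → ℝ≥0∞) :
    ∫⁻ t in Set.Ioi 0, F (c * t) = ENNReal.ofReal c⁻¹ * ∫⁻ t in Set.Ioi 0, F t := by
  have hind : ∀ t, (Set.Ioi 0).indicator (fun t => F (c * t)) t =
      (Set.Ioi 0).indicator F (c • t) := fun t => by
    simp only [Set.indicator_apply, Set.mem_Ioi, smul_eq_mul, mul_pos_iff_of_pos_left hc]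
  rw [← lintegral_indicator measurableSet_Ioi, ← lintegral_indicator measurableSet_Ioi,
    lintegral_congr hind, lintegral_comp_smul_addHaar volume hc.ne']
  simp [abs_of_pos hc]

theorem rayMoment_smul {E : Type*} [AddCommGroup E] [Module ℝ E] (φ : E → ℝ≥0∞) (σ : ℝ) (η : E)
    {c : ℝ} (hc : 0 < c) :
    rayMoment φ σ (c • η) = ENNReal.ofReal (c ^ (-(σ + 1))) * rayMoment φ σ η := by
  calc rayMoment φ σ (c • η)
      = ∫⁻ t in Set.Ioi 0, ENNReal.ofReal (c ^ (-σ)) *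
          (ENNReal.ofReal ((c * t) ^ σ) * φ ((c * t) • η)) := by
        refine setLIntegral_congr_fun measurableSet_Ioi fun t (ht : 0 < t) => ?_
        rw [← mul_assoc, ← ENNReal.ofReal_mul (by positivity), Real.mul_rpow hc.le ht.le,
          ← mul_assoc, ← Real.rpow_add hc, neg_add_cancel, Real.rpow_zero, one_mul, smul_smul,
          mul_comm t c]
    _ = ENNReal.ofReal (c ^ (-(σ + 1))) * rayMoment φ σ η := by
        rw [lintegral_const_mul' _ _ ENNReal.ofReal_ne_top,
          lintegral_Ioi_comp_mul hc fun t => ENNReal.ofReal (t ^ σ) * φ (t • η), ← mul_assoc,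
          ← ENNReal.ofReal_mul (by positivity), ← div_eq_mul_inv, ← Real.rpow_sub_one hc.ne',
          neg_add, sub_eq_add_neg]
        rfl

/-- Jensen's inequality for `exp`, by integrating its tangent at `-b`. -/
theorem ofReal_exp_neg_mul_lintegral_le {α : Type*} [MeasurableSpace α] {μ : Measure α} {X : α → ℝ}
    {w : α → ℝ≥0∞} (hX : AEMeasurable X μ) (hw : AEMeasurable w μ) (hX0 : ∀ᵐ x ∂μ, 0 ≤ X x)
    (hw_top : ∫⁻ x, w x ∂μ ≠ ∞) {b : ℝ} (hb : 0 ≤ b)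
    (hle : ∫⁻ x, ENNReal.ofReal (X x) * w x ∂μ ≤ ENNReal.ofReal b * ∫⁻ x, w x ∂μ) :
    ENNReal.ofReal (exp (-b)) * ∫⁻ x, w x ∂μ ≤ ∫⁻ x, ENNReal.ofReal (exp (-X x)) * w x ∂μ := by
  set I := ∫⁻ x, w x ∂μ
  set e := ENNReal.ofReal (exp (-b))
  have htangent : ∀ᵐ x ∂μ, e * w x + e * ENNReal.ofReal b * w x ≤
      ENNReal.ofReal (exp (-X x)) * w x + e * (ENNReal.ofReal (X x) * w x) := by
    filter_upwards [hX0] with x hx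
    rw [← mul_assoc, ← add_mul, ← add_mul, ← ENNReal.ofReal_mul (exp_pos _).le,
      ← ENNReal.ofReal_mul (exp_pos _).le, ← ENNReal.ofReal_add (by positivity) (by positivity),
      ← ENNReal.ofReal_add (by positivity) (by positivity)]
    refine mul_le_mul_left (ENNReal.ofReal_le_ofReal ?_) _
    calc exp (-b) + exp (-b) * b = exp (-b) * (b - X x + 1) + exp (-b) * X x := by ring
      _ ≤ exp (-b) * exp (b - X x) + exp (-b) * X x := by
        gcongr
        exact Real.add_one_le_exp _
      _ = exp (-X x) + exp (-b) * X x := by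
        rw [← Real.exp_add]
        ring_nf
  have hint : e * I + e * ENNReal.ofReal b * I ≤
      (∫⁻ x, ENNReal.ofReal (exp (-X x)) * w x ∂μ) + e * ENNReal.ofReal b * I := by
    calc e * I + e * ENNReal.ofReal b * I
        = ∫⁻ x, (e * w x + e * ENNReal.ofReal b * w x) ∂μ := by
          rw [lintegral_add_left' (hw.const_mul _), lintegral_const_mul'' _ hw,
            lintegral_const_mul'' _ hw]
      _ ≤ ∫⁻ x, (ENNReal.ofReal (exp (-X x)) * w x + e * (ENNReal.ofReal (X x) * w x)) ∂μ :=
          lintegral_mono_ae htangent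
      _ = (∫⁻ x, ENNReal.ofReal (exp (-X x)) * w x ∂μ) +
            e * ∫⁻ x, ENNReal.ofReal (X x) * w x ∂μ := by
          have hXw : AEMeasurable (fun x => ENNReal.ofReal (X x) * w x) μ :=
            hX.ennreal_ofReal.mul hw
          rw [lintegral_add_right' _ (hXw.const_mul _),
            lintegral_const_mul' _ _ ENNReal.ofReal_ne_top]
      _ ≤ (∫⁻ x, ENNReal.ofReal (exp (-X x)) * w x ∂μ) + e * ENNReal.ofReal b * I := by
          rw [mul_assoc e]
          gcongr
  exact (ENNReal.add_le_add_iff_right (by finiteness)).1 hint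

theorem setLIntegral_comp_div_one_add_mul_le {a : ℝ} (ha : 0 ≤ a) (F : ℝ → ℝ≥0∞) :
    ∫⁻ t in Set.Ioi 0, ENNReal.ofReal (1 / (1 + a * t) ^ 2) * F (t / (1 + a * t)) ≤
      ∫⁻ t in Set.Ioi 0, F t := by
  have hden : ∀ t ∈ Set.Ioi (0 : ℝ), 0 < 1 + a * t := fun t (ht : 0 < t) => by positivity
  have hderiv : ∀ t ∈ Set.Ioi (0 : ℝ), HasDerivWithinAt (fun t => t / (1 + a * t))
      (1 / (1 + a * t) ^ 2) (Set.Ioi 0) t := fun t ht => by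
    have hdiv := (hasDerivAt_id' t).fun_div (((hasDerivAt_id' t).const_mul a).const_add 1)
      (hden t ht).ne'
    refine (hdiv.congr_deriv ?_).hasDerivWithinAt
    ring
  have hinj : Set.InjOn (fun t => t / (1 + a * t)) (Set.Ioi 0) := fun x hx y hy hxy => by
    have := (div_eq_div_iff (hden x hx).ne' (hden y hy).ne').1 hxy
    linarith
  calc ∫⁻ t in Set.Ioi 0, ENNReal.ofReal (1 / (1 + a * t) ^ 2) * F (t / (1 + a * t))
      = ∫⁻ t in (fun t => t / (1 + a * t)) '' Set.Ioi 0, F t := by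
        rw [lintegral_image_eq_lintegral_abs_deriv_mul measurableSet_Ioi hderiv hinj]
        have habs : ∀ t, |1 / (1 + a * t) ^ 2| = 1 / (1 + a * t) ^ 2 := fun t =>
          abs_of_nonneg (by positivity)
        simp only [habs]
    _ ≤ ∫⁻ t in Set.Ioi 0, F t := by
        refine lintegral_mono_set ?_
        rintro _ ⟨t, ht, rfl⟩
        exact div_pos ht (hden t ht)

theorem exp_neg_mul_rpow_le_one_div_sq_mul {c σ x t : ℝ} (hσ : 0 ≤ σ) (hσc : σ + 2 ≤ c) (hx : 0 ≤ x)
    (ht : 0 ≤ t) : exp (-(c * x)) * t ^ σ ≤ 1 / (1 + x) ^ 2 * (t / (1 + x)) ^ σ := by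
  have hx1 : 0 < 1 + x := by linarith
  have hpow : (1 + x) ^ 2 * (1 + x) ^ σ ≤ exp (c * x) := by
    calc (1 + x) ^ 2 * (1 + x) ^ σ = (1 + x) ^ (2 + σ) := by
          rw [Real.rpow_add hx1, Real.rpow_two]
      _ ≤ exp x ^ (2 + σ) := by
          gcongr
          linarith [Real.add_one_le_exp x]
      _ = exp (x * (2 + σ)) := (Real.exp_mul _ _).symm
      _ ≤ exp (c * x) := Real.exp_le_exp.2 (by nlinarith)
  rw [Real.div_rpow ht hx1.le, div_mul_div_comm, one_mul, Real.exp_neg, inv_mul_eq_div]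
  gcongr

theorem exp_neg_mul_two_rpow_le {Q σ : ℝ} (hQ : 1 ≤ Q) (hσ : σ ≤ 3 * Q) :
    exp (-(5 * Q)) * 2 ^ (σ + 1) ≤ 2⁻¹ := by
  have h2 : (2 : ℝ) ≤ exp 1 := by linarith [Real.add_one_le_exp 1]
  calc exp (-(5 * Q)) * 2 ^ (σ + 1) = exp (-(5 * Q)) * (2 ^ (σ + 2) * 2⁻¹) := by
        rw [← Real.rpow_neg_one, ← Real.rpow_add two_pos]
        ring_nf
    _ ≤ exp (-(5 * Q)) * (2 ^ (5 * Q) * 2⁻¹) := by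
        gcongr
        · norm_num
        · linarith
    _ ≤ exp (-(5 * Q)) * (exp 1 ^ (5 * Q) * 2⁻¹) := by gcongr
    _ = 2⁻¹ := by
        rw [← Real.exp_mul, one_mul, ← mul_assoc, ← Real.exp_add, neg_add_cancel, Real.exp_zero,
          one_mul]

namespace IsPinched

variable {V : Type*} [NormedAddCommGroup V] [InnerProductSpace ℝ V] {f : V → ℝ} {Q ρ S σ : ℝ}
  {η w : V}

theorem measurable_comp_smul (hf : IsPinched f Q ρ S) (η : V) :
    Measurable fun t : ℝ => ENNReal.ofReal (f (t • η)) :=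
  (hf.isLogConcaveFn.ofReal.comp_affineMap
    (LinearMap.toSpanSingleton ℝ V η).toAffineMap).measurable

theorem measurable_ray (hf : IsPinched f Q ρ S) (σ : ℝ) (η : V) :
    Measurable fun t : ℝ => ENNReal.ofReal (t ^ σ) * ENNReal.ofReal (f (t • η)) :=
  (measurable_id.pow_const σ).ennreal_ofReal.mul (hf.measurable_comp_smul η)

theorem le_exp_sub_mul_norm (hf : IsPinched f Q ρ S) (hQ : 0 ≤ Q) (hS : 0 < S) (x : V) :
    f x ≤ exp (14 * Q - 5 * Q / S * ‖x‖) * f 0 := by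
  have h0 := hf.apply_zero_pos
  obtain ⟨s, hs⟩ : ∃ s, ‖x‖ = 2 * S * s := ⟨‖x‖ / (2 * S), by field_simp⟩
  have hexp : 14 * Q - 5 * Q / S * ‖x‖ = 14 * Q - 10 * Q * s := by
    rw [hs]
    field_simp
    ring
  rw [hexp]
  rcases le_total s 1 with h | h
  · refine (hf.le_exp_mul x).trans ?_
    gcongr
    nlinarith
  · have hx : S < ‖s⁻¹ • x‖ := by
      rw [norm_smul, norm_inv, Real.norm_of_nonneg (by linarith), hs]
      field_simp
      norm_num
    refine (hf.isLogConcaveFn.le_exp_mul_apply_zero h0 h (hf.le_exp_neg_mul _ hx)).trans ?_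
    gcongr
    linarith

theorem rayMoment_ne_top (hf : IsPinched f Q ρ S) (hQ : 0 < Q) (hS : 0 < S) (hσ : 0 ≤ σ)
    (hη : η ≠ 0) : rayMoment (fun x => ENNReal.ofReal (f x)) σ η ≠ ∞ := by
  have hint := (integrableOn_rpow_mul_exp_neg_mul_rpow (s := σ) (p := 1)
    (b := 5 * Q / S * ‖η‖) (by linarith) one_pos (by positivity)).const_mul (exp (14 * Q) * f 0)
  refine ne_top_of_le_ne_top hint.lintegral_lt_top.ne ?_
  refine setLIntegral_mono' measurableSet_Ioi fun t (ht : 0 < t) => ?_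
  rw [← ENNReal.ofReal_mul (by positivity)]
  refine ENNReal.ofReal_le_ofReal ?_
  have hdecay := hf.le_exp_sub_mul_norm hQ.le hS (t • η)
  rw [norm_smul, Real.norm_of_nonneg ht.le, sub_eq_add_neg, Real.exp_add] at hdecay
  calc t ^ σ * f (t • η)
      ≤ t ^ σ * (exp (14 * Q) * exp (-(5 * Q / S * (t * ‖η‖))) * f 0) := by gcongr
    _ = exp (14 * Q) * f 0 * (t ^ σ * exp (-(5 * Q / S * ‖η‖) * t ^ (1 : ℝ))) := by
      rw [rpow_one]
      ring_nf

theorem rayMoment_ne_zero (hf : IsPinched f Q ρ S) (hρ : 0 < ρ) (hη : η ≠ 0) :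
    rayMoment (fun x => ENNReal.ofReal (f x)) σ η ≠ 0 := by
  have hT : 0 < ρ / ‖η‖ := by positivity
  rw [rayMoment, ← pos_iff_ne_zero, setLIntegral_pos_iff (hf.measurable_ray σ η)]
  refine lt_of_lt_of_le (by simpa) (measure_mono (μ := volume) (s := Set.Ioc 0 (ρ / ‖η‖)) ?_)
  rintro t ⟨ht, htρ⟩
  have hnorm : ‖t • η‖ ≤ ρ := by
    rw [norm_smul, Real.norm_of_nonneg ht.le]
    exact (le_div_iff₀ (norm_pos_iff.2 hη)).1 htρ
  have hpos : 0 < f (t • η) :=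
    (mul_pos (exp_pos _) hf.apply_zero_pos).trans_le (hf.exp_neg_mul_le _ hnorm)
  exact ⟨mul_ne_zero (ENNReal.ofReal_pos.2 (Real.rpow_pos_of_pos ht σ)).ne'
    (ENNReal.ofReal_pos.2 hpos).ne', ht⟩

/-- Beyond norm `S` one has `f (t • η) ≤ exp (-5Q) * f ((t / 2) • η)`, and the moment of the
right-hand side is a dilate of the original one. -/
theorem setLIntegral_Ioi_le_half_rayMoment (hf : IsPinched f Q ρ S) (hQ : 1 ≤ Q) (hS : 0 < S)
    (hσQ : σ ≤ 3 * Q) (hη : η ≠ 0) :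
    ∫⁻ t in Set.Ioi (S / ‖η‖), ENNReal.ofReal (t ^ σ) * ENNReal.ofReal (f (t • η)) ≤
      2⁻¹ * rayMoment (fun x => ENNReal.ofReal (f x)) σ η := by
  set T := S / ‖η‖
  have hT : 0 < T := by positivity
  have hhalf : ∀ t ∈ Set.Ioi T, f (t • η) ≤ exp (-(5 * Q)) * f (t • (1 / 2 : ℝ) • η) :=
    fun t (ht : T < t) => by
      have hnorm : S < ‖(1 : ℝ)⁻¹ • t • η‖ := by
        rw [inv_one, one_smul, norm_smul, Real.norm_of_nonneg (hT.trans ht).le]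
        exact (div_lt_iff₀ (norm_pos_iff.2 hη)).1 ht
      have := hf.isLogConcaveFn.le_exp_mul_apply_half hf.apply_zero_pos le_rfl
        (hf.le_exp_neg_mul _ hnorm)
      rwa [mul_one, mul_div_right_comm, show 10 / 2 = (5 : ℝ) by norm_num,
        smul_comm (1 / 2 : ℝ) t] at this
  calc ∫⁻ t in Set.Ioi T, ENNReal.ofReal (t ^ σ) * ENNReal.ofReal (f (t • η))
      ≤ ∫⁻ t in Set.Ioi T, ENNReal.ofReal (exp (-(5 * Q))) *
          (ENNReal.ofReal (t ^ σ) * ENNReal.ofReal (f (t • (1 / 2 : ℝ) • η))) := by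
        refine setLIntegral_mono' measurableSet_Ioi fun t ht => ?_
        rw [mul_left_comm, ← ENNReal.ofReal_mul (exp_pos _).le]
        gcongr
        exact hhalf t ht
    _ ≤ ENNReal.ofReal (exp (-(5 * Q))) *
          rayMoment (fun x => ENNReal.ofReal (f x)) σ ((1 / 2 : ℝ) • η) := by
        rw [lintegral_const_mul' _ _ ENNReal.ofReal_ne_top]
        gcongr
        exact lintegral_mono_set (Set.Ioi_subset_Ioi hT.le)
    _ = ENNReal.ofReal (exp (-(5 * Q)) * 2 ^ (σ + 1)) *
          rayMoment (fun x => ENNReal.ofReal (f x)) σ η := by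
        rw [rayMoment_smul _ _ _ (by norm_num), ← mul_assoc,
          ← ENNReal.ofReal_mul (exp_pos _).le, one_div, Real.rpow_neg_eq_inv_rpow, inv_inv]
    _ ≤ 2⁻¹ * rayMoment (fun x => ENNReal.ofReal (f x)) σ η := by
        rw [← ENNReal.ofReal_ofNat, ← ENNReal.ofReal_inv_of_pos two_pos]
        gcongr
        exact exp_neg_mul_two_rpow_le hQ hσQ

theorem rayMoment_le_two_mul (hf : IsPinched f Q ρ S) (hQ : 1 ≤ Q) (hS : 0 < S) (hσ : 0 ≤ σ)
    (hσQ : σ ≤ 3 * Q) (hη : η ≠ 0) :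
    rayMoment (fun x => ENNReal.ofReal (f x)) σ η ≤ 2 * ∫⁻ t in Set.Ioc 0 (S / ‖η‖),
      ENNReal.ofReal (t ^ σ) * ENNReal.ofReal (f (t • η)) := by
  set T := S / ‖η‖
  have hT : 0 < T := by positivity
  set I := rayMoment (fun x => ENNReal.ofReal (f x)) σ η with hI
  set J := ∫⁻ t in Set.Ioc 0 T, ENNReal.ofReal (t ^ σ) * ENNReal.ofReal (f (t • η))
  have hhalf_top : 2⁻¹ * I ≠ ∞ :=
    ENNReal.mul_ne_top (by simp) (hf.rayMoment_ne_top (by linarith) hS hσ hη)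
  have hI_eq : I = 2⁻¹ * I + 2⁻¹ * I := by rw [← add_mul, ENNReal.inv_two_add_inv_two, one_mul]
  have hsplit : I ≤ J + 2⁻¹ * I := by
    calc I = J + ∫⁻ t in Set.Ioi T, ENNReal.ofReal (t ^ σ) * ENNReal.ofReal (f (t • η)) := by
          rw [hI, rayMoment, ← Set.Ioc_union_Ioi_eq_Ioi hT.le,
            lintegral_union measurableSet_Ioi Set.Ioc_disjoint_Ioi_same]
      _ ≤ J + 2⁻¹ * I := by
          gcongr
          exact hf.setLIntegral_Ioi_le_half_rayMoment hQ hS hσQ hη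
  have hhalf : 2⁻¹ * I ≤ J := by
    rw [hI_eq] at hsplit
    exact (ENNReal.add_le_add_iff_right hhalf_top).1 (by simpa only [← hI_eq] using hsplit)
  calc I = 2 * (2⁻¹ * I) := by rw [two_mul, ← hI_eq]
    _ ≤ 2 * J := by gcongr

theorem rayMoment_add_one_le (hf : IsPinched f Q ρ S) (hQ : 1 ≤ Q) (hS : 0 < S) (hσ : 0 ≤ σ)
    (hσQ : σ + 1 ≤ 3 * Q) (hη : η ≠ 0) :
    rayMoment (fun x => ENNReal.ofReal (f x)) (σ + 1) η ≤
      ENNReal.ofReal (2 * (S / ‖η‖)) * rayMoment (fun x => ENNReal.ofReal (f x)) σ η := by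
  refine (hf.rayMoment_le_two_mul hQ hS (by linarith) hσQ hη).trans ?_
  rw [ENNReal.ofReal_mul two_pos.le, ENNReal.ofReal_ofNat, mul_assoc, rayMoment,
    ← lintegral_const_mul' _ _ ENNReal.ofReal_ne_top]
  gcongr 2 * ?_
  refine (setLIntegral_mono' measurableSet_Ioc fun t ht => ?_).trans
    (lintegral_mono_set Set.Ioc_subset_Ioi_self)
  rw [← mul_assoc, ← ENNReal.ofReal_mul (p := S / ‖η‖) (by positivity),
    Real.rpow_add_one ht.1.ne', mul_comm (t ^ σ)]
  have := ht.1
  gcongr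
  exact ht.2

/-- Moving from `t • η` to `(t / (1 + a * t)) • (η + a • w)` is moving towards `w`, where `f` is not
small. -/
theorem exp_neg_mul_le_apply_ray (hf : IsPinched f Q ρ S) (hQ : 0 ≤ Q) (hw : ‖w‖ ≤ ρ) {a t : ℝ}
    (ha : 0 ≤ a) (ht : 0 ≤ t) :
    exp (-(10 * Q * (a * t))) * f (t • η) ≤ f ((t / (1 + a * t)) • (η + a • w)) := by
  set D := 1 + a * t with hD
  have hD1 : 1 ≤ D := by
    rw [hD]
    nlinarith [mul_nonneg ha ht]
  have hfw : exp (-(10 * Q)) * f (t • η) ≤ f w := by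
    calc exp (-(10 * Q)) * f (t • η) ≤ exp (-(10 * Q)) * (exp (4 * Q) * f 0) := by
          gcongr
          exact hf.le_exp_mul _
      _ = exp (-(6 * Q)) * f 0 := by
          rw [← mul_assoc, ← Real.exp_add]
          ring_nf
      _ ≤ f w := hf.exp_neg_mul_le w hw
  have hcomb : (t / D) • (η + a • w) = D⁻¹ • (t • η) + (1 - D⁻¹) • w := by
    have : 1 - D⁻¹ = t / D * a := by
      field_simp
      rw [hD]
      ring
    rw [this]
    module
  have hsub : 1 - D⁻¹ ≤ a * t := by
    have := one_sub_inv_le_log_of_pos (zero_lt_one.trans_le hD1)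
    linarith [Real.log_le_sub_one_of_pos (zero_lt_one.trans_le hD1)]
  rw [hcomb]
  refine le_trans ?_ (hf.isLogConcaveFn.exp_neg_mul_le_apply (by positivity)
    (inv_le_one_of_one_le₀ hD1) hfw)
  have := hf.isLogConcaveFn.1 (t • η)
  gcongr

theorem exp_neg_mul_ray_le (hf : IsPinched f Q ρ S) (hQ : 1 ≤ Q) (hσ : 0 ≤ σ)
    (hσQ : σ + 1 ≤ 3 * Q) (hw : ‖w‖ ≤ ρ) {a t : ℝ} (ha : 0 ≤ a) (ht : 0 ≤ t) :
    ENNReal.ofReal (exp (-(14 * Q * a * t))) *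
        (ENNReal.ofReal (t ^ σ) * ENNReal.ofReal (f (t • η))) ≤
      ENNReal.ofReal (1 / (1 + a * t) ^ 2) * (ENNReal.ofReal ((t / (1 + a * t)) ^ σ) *
        ENNReal.ofReal (f ((t / (1 + a * t)) • (η + a • w)))) := by
  have hexp : exp (-(14 * Q * a * t)) = exp (-(4 * Q * (a * t))) * exp (-(10 * Q * (a * t))) := by
    rw [← Real.exp_add]
    ring_nf
  have hweight := exp_neg_mul_rpow_le_one_div_sq_mul hσ (by linarith : σ + 2 ≤ 4 * Q)
    (mul_nonneg ha ht) ht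
  have hdensity := hf.exp_neg_mul_le_apply_ray (η := η) (by linarith) hw ha ht
  have := hf.isLogConcaveFn.1 (t • η)
  rw [← ENNReal.ofReal_mul (by positivity), ← ENNReal.ofReal_mul (by positivity),
    ← ENNReal.ofReal_mul (by positivity), ← ENNReal.ofReal_mul (by positivity), hexp,
    mul_mul_mul_comm, ← mul_assoc (1 / _)]
  gcongr

theorem exp_neg_mul_rayMoment_add_smul_le (hf : IsPinched f Q ρ S) (hQ : 1 ≤ Q) (hS : 0 < S)
    (hσ : 0 ≤ σ) (hσQ : σ + 1 ≤ 3 * Q) (hη : η ≠ 0) (hw : ‖w‖ ≤ ρ) {a : ℝ} (ha : 0 ≤ a) :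
    ENNReal.ofReal (exp (-(28 * Q * (a * S / ‖η‖)))) *
        rayMoment (fun x => ENNReal.ofReal (f x)) σ η ≤
      rayMoment (fun x => ENNReal.ofReal (f x)) σ (η + a • w) := by
  set m : ℝ → ℝ≥0∞ := fun t => ENNReal.ofReal (t ^ σ) * ENNReal.ofReal (f (t • η))
  have hmean : ∫⁻ t in Set.Ioi 0, ENNReal.ofReal (14 * Q * a * t) * m t ≤
      ENNReal.ofReal (28 * Q * (a * S / ‖η‖)) * ∫⁻ t in Set.Ioi 0, m t := by
    calc ∫⁻ t in Set.Ioi 0, ENNReal.ofReal (14 * Q * a * t) * m t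
        = ENNReal.ofReal (14 * Q * a) *
            rayMoment (fun x => ENNReal.ofReal (f x)) (σ + 1) η := by
          rw [rayMoment, ← lintegral_const_mul' _ _ ENNReal.ofReal_ne_top]
          refine setLIntegral_congr_fun measurableSet_Ioi fun t (ht : 0 < t) => ?_
          dsimp only [m]
          rw [Real.rpow_add_one ht.ne', mul_comm (t ^ σ), ← mul_assoc, ← mul_assoc,
            ENNReal.ofReal_mul (by positivity), ENNReal.ofReal_mul ht.le, ← mul_assoc]
      _ ≤ ENNReal.ofReal (14 * Q * a) * (ENNReal.ofReal (2 * (S / ‖η‖)) *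
            rayMoment (fun x => ENNReal.ofReal (f x)) σ η) := by
          gcongr
          exact hf.rayMoment_add_one_le hQ hS hσ hσQ hη
      _ = ENNReal.ofReal (28 * Q * (a * S / ‖η‖)) * ∫⁻ t in Set.Ioi 0, m t := by
          rw [← mul_assoc, ← ENNReal.ofReal_mul (by positivity)]
          ring_nf
          rfl
  calc ENNReal.ofReal (exp (-(28 * Q * (a * S / ‖η‖)))) * ∫⁻ t in Set.Ioi 0, m t
      ≤ ∫⁻ t in Set.Ioi 0, ENNReal.ofReal (exp (-(14 * Q * a * t))) * m t :=
        ofReal_exp_neg_mul_lintegral_le (by fun_prop) (hf.measurable_ray σ η).aemeasurable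
          ((ae_restrict_iff' measurableSet_Ioi).2 (.of_forall fun t (ht : 0 < t) => by positivity))
          (hf.rayMoment_ne_top (by linarith) hS hσ hη) (by positivity) hmean
    _ ≤ ∫⁻ t in Set.Ioi 0, ENNReal.ofReal (1 / (1 + a * t) ^ 2) *
          (ENNReal.ofReal ((t / (1 + a * t)) ^ σ) *
            ENNReal.ofReal (f ((t / (1 + a * t)) • (η + a • w)))) :=
        setLIntegral_mono' measurableSet_Ioi fun t (ht : 0 < t) =>
          hf.exp_neg_mul_ray_le hQ hσ hσQ hw ha ht.le
    _ ≤ rayMoment (fun x => ENNReal.ofReal (f x)) σ (η + a • w) :=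
        setLIntegral_comp_div_one_add_mul_le ha
          fun t => ENNReal.ofReal (t ^ σ) * ENNReal.ofReal (f (t • (η + a • w)))

theorem exp_neg_mul_rayMoment_le (hf : IsPinched f Q ρ S) (hQ : 1 ≤ Q) (hρ : 0 < ρ) (hS : 0 < S)
    (hσ : 0 ≤ σ) (hσQ : σ + 1 ≤ 3 * Q) (hη : η ≠ 0) {η' : V} {ε : ℝ} (hε : 0 ≤ ε)
    (hle : ‖η' - η‖ ≤ ε * ‖η‖) :
    ENNReal.ofReal (exp (-(28 * Q * (S / ρ) * ε))) *
        rayMoment (fun x => ENNReal.ofReal (f x)) σ η ≤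
      rayMoment (fun x => ENNReal.ofReal (f x)) σ η' := by
  have : 0 < ‖η‖ := norm_pos_iff.2 hη
  set a := ε * ‖η‖ / ρ with ha
  have ha0 : 0 ≤ a := by positivity
  have haρ : a * ρ = ε * ‖η‖ := by
    rw [ha]
    field_simp
  obtain ⟨w, hw, rfl⟩ : ∃ w, ‖w‖ ≤ ρ ∧ η' = η + a • w := by
    refine ⟨a⁻¹ • (η' - η), ?_, ?_⟩
    · rw [norm_smul, norm_inv, Real.norm_of_nonneg ha0, inv_mul_eq_div]
      exact div_le_of_le_mul₀ ha0 hρ.le (hle.trans_eq (by rw [mul_comm ρ, haρ]))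
    · rcases ha0.eq_or_lt with h | h
      · rw [← haρ, ← h, zero_mul, norm_le_zero_iff, sub_eq_zero] at hle
        rw [← h, zero_smul, add_zero, hle]
      · rw [smul_inv_smul₀ h.ne', add_sub_cancel]
  convert hf.exp_neg_mul_rayMoment_add_smul_le hQ hS hσ hσQ hη hw ha0 using 4
  rw [ha]
  field_simp

end IsPinched

theorem IsENNRealLogConcave.isLogConcaveFn_toReal {E : Type*} [AddCommGroup E] [Module ℝ E]
    {f : E → ℝ≥0∞} (hf : IsENNRealLogConcave f) (h_top : ∀ x, f x ≠ ∞) :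
    IsLogConcaveFn fun x => (f x).toReal := by
  refine ⟨fun x => ENNReal.toReal_nonneg, fun x y l hl0 hl1 => ?_⟩
  rcases hl0.eq_or_lt with rfl | hl0
  · simp
  rcases hl1.eq_or_lt with rfl | hl1
  · simp
  rw [ENNReal.toReal_rpow, ENNReal.toReal_rpow, ← ENNReal.toReal_mul]
  exact ENNReal.toReal_mono (h_top _) (hf hl0 (sub_pos.2 hl1) (add_sub_cancel l 1))

section Marginal

variable {S : Type*} [NormedAddCommGroup S] [InnerProductSpace ℝ S] [FiniteDimensional ℝ S]
  [MeasurableSpace S] [BorelSpace S]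

theorem lintegral_orthMarginal {f : S → ℝ≥0∞} (hf : AEMeasurable f) (V : Submodule ℝ S) :
    ∫⁻ v : V, orthMarginal f V v = ∫⁻ x, f x :=
  (lintegral_eq_lintegral_lintegral_orthogonal V hf).symm

theorem IsENNRealLogConcave.orthMarginal_coe {f : S → ℝ≥0∞} (hf : IsENNRealLogConcave f)
    (V : Submodule ℝ S) : IsENNRealLogConcave fun v : V => orthMarginal f V v :=
  (hf.orthMarginal V).comp_affineMap V.subtype.toAffineMap

theorem map_orthogonalProjectionOnto_withDensity {f : S → ℝ≥0∞} (hf : AEMeasurable f)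
    (V : Submodule ℝ S) :
    (volume.withDensity f).map V.orthogonalProjectionOnto =
      volume.withDensity fun v : V => orthMarginal f V v := by
  have hV : Measurable V.orthogonalProjectionOnto :=
    V.orthogonalProjectionOnto.continuous.measurable
  ext s hs
  rw [Measure.map_apply hV hs, withDensity_apply _ (hV hs), withDensity_apply _ hs,
    ← lintegral_indicator (hV hs), ← lintegral_indicator hs,
    lintegral_eq_lintegral_lintegral_orthogonal V (hf.indicator (hV hs))]
  refine lintegral_congr fun v => ?_
  have hproj (w : Vᗮ) : V.orthogonalProjectionOnto ((v : S) + w) = v := by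
    rw [map_add, V.orthogonalProjectionOnto_mem_subspace_eq_self,
      V.orthogonalProjectionOnto_apply_of_mem_orthogonal w.2, add_zero]
  by_cases hv : v ∈ s
  · simp [Set.indicator, hproj, hv, orthMarginal]
  · simp [Set.indicator, hproj, hv]

/-- The marginal density of a real function `g` on the subspace `V`, as a function on `V`. -/
def subspaceMarginal (g : S → ℝ) (V : Submodule ℝ S) (v : V) : ℝ :=
  (orthMarginal (fun x => ENNReal.ofReal (g x)) V v).toReal

variable {g : S → ℝ}

theorem IsLogConcaveFn.orthMarginal_ae_lt_top (hg : IsLogConcaveFn g)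
    (hi : Integrable g) (V : Submodule ℝ S) :
    ∀ᵐ v : V, orthMarginal (fun x => ENNReal.ofReal (g x)) V v < ∞ := by
  refine ae_lt_top' ((hg.ofReal.orthMarginal_coe V).aemeasurable _) ?_
  rw [lintegral_orthMarginal (hg.ofReal.aemeasurable _)]
  exact hi.lintegral_lt_top.ne

section Integral

variable {G : Type*} [NormedAddCommGroup G] [NormedSpace ℝ G] {V : Submodule ℝ S} {h : V → G}

theorem IsLogConcaveFn.integrable_subspaceMarginal_smul_iff (hg : IsLogConcaveFn g)
    (hi : Integrable g) (hh : StronglyMeasurable h) :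
    (Integrable fun v : V => subspaceMarginal g V v • h v) ↔
      Integrable fun x => g x • h (V.orthogonalProjectionOnto x) := by
  have hm : AEMeasurable fun x => ENNReal.ofReal (g x) := hg.ofReal.aemeasurable volume
  have hV := integrable_withDensity_iff_integrable_smul₀' (g := h)
    ((hg.ofReal.orthMarginal_coe V).aemeasurable _) (hg.orthMarginal_ae_lt_top hi V)
  refine hV.symm.trans ?_
  rw [← map_orthogonalProjectionOnto_withDensity hm, integrable_map_measure hh.aestronglyMeasurable
      V.orthogonalProjectionOnto.continuous.aemeasurable,
    integrable_withDensity_iff_integrable_smul₀' hm (by simp)]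
  simp only [ENNReal.toReal_ofReal (hg.1 _), Function.comp_apply]

theorem IsLogConcaveFn.integral_subspaceMarginal_smul (hg : IsLogConcaveFn g)
    (hi : Integrable g) (hh : StronglyMeasurable h) :
    ∫ v : V, subspaceMarginal g V v • h v = ∫ x, g x • h (V.orthogonalProjectionOnto x) := by
  have hm : AEMeasurable fun x => ENNReal.ofReal (g x) := hg.ofReal.aemeasurable volume
  have hV := integral_withDensity_eq_integral_toReal_smul₀
    ((hg.ofReal.orthMarginal_coe V).aemeasurable _)
    (hg.orthMarginal_ae_lt_top hi V) h
  refine hV.symm.trans ?_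
  rw [← map_orthogonalProjectionOnto_withDensity hm,
    integral_map V.orthogonalProjectionOnto.continuous.aemeasurable hh.aestronglyMeasurable,
    integral_withDensity_eq_integral_toReal_smul₀ hm (by simp)]
  simp only [ENNReal.toReal_ofReal (hg.1 _)]

end Integral

namespace IsCenteredLogConcaveDensity

variable (hg : IsCenteredLogConcaveDensity g) (V : Submodule ℝ S)
include hg

theorem orthMarginal_ne_top (v : V) : orthMarginal (fun x => ENNReal.ofReal (g x)) V v ≠ ∞ := by
  have h_one : ∫⁻ v : V, orthMarginal (fun x => ENNReal.ofReal (g x)) V v = 1 := by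
    rw [lintegral_orthMarginal (hg.isLogConcaveFn.ofReal.aemeasurable _),
      ← ofReal_integral_eq_lintegral_ofReal hg.integrable (ae_of_all _ hg.isLogConcaveFn.1),
      hg.integral_eq_one, ENNReal.ofReal_one]
  refine (hg.isLogConcaveFn.ofReal.orthMarginal_coe V).ne_top (μ := volume) ?_ ?_ v <;>
    simp [h_one]

theorem ofReal_subspaceMarginal (v : V) :
    ENNReal.ofReal (subspaceMarginal g V v) = orthMarginal (fun x => ENNReal.ofReal (g x)) V v :=
  ENNReal.ofReal_toReal (hg.orthMarginal_ne_top V v)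

protected theorem subspaceMarginal : IsCenteredLogConcaveDensity (subspaceMarginal g V) where
  isLogConcaveFn :=
    (hg.isLogConcaveFn.ofReal.orthMarginal_coe V).isLogConcaveFn_toReal (hg.orthMarginal_ne_top V)
  integrable := by
    simpa using (hg.isLogConcaveFn.integrable_subspaceMarginal_smul_iff hg.integrable
      (stronglyMeasurable_const (α := V) (b := (1 : ℝ)))).2 (by simpa using hg.integrable)
  integral_eq_one := by
    simpa [hg.integral_eq_one] using hg.isLogConcaveFn.integral_subspaceMarginal_smul hg.integrable
      (stronglyMeasurable_const (α := V) (b := (1 : ℝ)))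
  integrable_smul := by
    refine (hg.isLogConcaveFn.integrable_subspaceMarginal_smul_iff hg.integrable
      stronglyMeasurable_id).2 ?_
    simpa using V.orthogonalProjectionOnto.integrable_comp hg.integrable_smul
  integral_smul_eq_zero := by
    refine (hg.isLogConcaveFn.integral_subspaceMarginal_smul hg.integrable
      stronglyMeasurable_id).trans ?_
    simpa [hg.integral_smul_eq_zero] using
      V.orthogonalProjectionOnto.integral_comp_comm hg.integrable_smul

end IsCenteredLogConcaveDensity

protected theorem HasMomentBounds.subspaceMarginal {Q r R : ℝ} (hm : HasMomentBounds g Q r R)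
    (hg : IsLogConcaveFn g) (hi : Integrable g) (V : Submodule ℝ S) :
    HasMomentBounds (subspaceMarginal g V) Q r R := by
  have hmeas (y : V) : StronglyMeasurable fun v : V => max ⟪v, y⟫ 0 ^ Q := by
    refine Measurable.stronglyMeasurable (Measurable.pow_const ?_ Q)
    fun_prop
  have hproj (x : S) (y : V) : ⟪V.orthogonalProjectionOnto x, y⟫ = ⟪x, (y : S)⟫ := by simp
  have hint (y : V) := hg.integrable_subspaceMarginal_smul_iff hi (hmeas y)
  have heq (y : V) := hg.integral_subspaceMarginal_smul hi (hmeas y)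
  simp only [hproj, smul_eq_mul, mul_comm (subspaceMarginal g V _), mul_comm (g _)] at hint heq
  exact ⟨fun y => (hint y).2 (hm.integrable y), fun y => (heq y).symm ▸ hm.le_integral y,
    fun y => (heq y).symm ▸ hm.integral_le y⟩

theorem IsCenteredLogConcaveDensity.isPinched_subspaceMarginal
    (hg : IsCenteredLogConcaveDensity g) {Q r R : ℝ} (hm : HasMomentBounds g Q r R) (hQ : 1 ≤ Q)
    (hr : 0 < r) (hR : 0 < R) {V : Submodule ℝ S} (hd : (Module.finrank ℝ V : ℝ) ≤ 2 * Q) :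
    IsPinched (subspaceMarginal g V) Q (r / 16) (16 * exp 7 * R) :=
  (hg.subspaceMarginal V).isPinched (hm.subspaceMarginal hg.isLogConcaveFn hg.integrable V) hQ hd
    hr hR

end Marginal

/-! ### One-sided centroid bodies -/

theorem exists_linearMap_apply_eq_and_le_of_sublinear {E : Type*} [AddCommGroup E] [Module ℝ E]
    {N : E → ℝ} (hN_smul : ∀ c : ℝ, 0 < c → ∀ x, N (c • x) = c * N x)
    (hN_add : ∀ x y, N (x + y) ≤ N x + N y) {y : E} (hy : y ≠ 0) :
    ∃ φ : E →ₗ[ℝ] ℝ, φ y = N y ∧ ∀ x, φ x ≤ N x := by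
  let φ₀ : E →ₗ.[ℝ] ℝ := LinearPMap.mkSpanSingleton y (N y) hy
  have hN_zero : N 0 = 0 := by
    have h := hN_smul 2 two_pos 0
    rw [smul_zero] at h
    linarith
  have hφ₀ (x : φ₀.domain) : φ₀ x ≤ N x := by
    obtain ⟨x, hx⟩ := x
    obtain ⟨c, rfl⟩ := Submodule.mem_span_singleton.1 hx
    have hc : φ₀ ⟨c • y, hx⟩ = c * N y := LinearPMap.mkSpanSingleton'_apply y (N y) _ c hx
    rw [hc]
    rcases lt_trichotomy c 0 with hc | rfl | hc
    · have h := hN_add (c • y) (-c • y)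
      rw [← add_smul, add_neg_cancel, zero_smul, hN_zero, hN_smul (-c) (by linarith)] at h
      linarith
    · simp [hN_zero]
    · exact (hN_smul c hc y).ge
  obtain ⟨φ, hφ, hφ_le⟩ := exists_extension_of_le_sublinear φ₀ N hN_smul hN_add hφ₀
  exact ⟨φ, (hφ ⟨y, Submodule.mem_span_singleton_self y⟩).trans
    (LinearPMap.mkSpanSingleton_apply ℝ ℝ hy (N y)), hφ_le⟩

section CentroidBody

variable {m : ℕ} {w : EuclideanSpace ℝ (Fin m) → ℝ} {q r R : ℝ}

theorem mul_norm_le_suppZplus (hr : 0 ≤ r) (hw : ∀ x, ‖x‖ ≤ r → x ∈ ZplusBody w q)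
    (y : EuclideanSpace ℝ (Fin m)) : r * ‖y‖ ≤ suppZplus w q y := by
  rcases eq_or_ne y 0 with rfl | hy
  · simpa using hw 0 (by simpa using hr) 0
  have hn : 0 < ‖y‖ := norm_pos_iff.2 hy
  have h := hw ((r / ‖y‖) • y) ?_ y
  · rwa [real_inner_smul_left, real_inner_self_eq_norm_sq, div_mul_eq_mul_div, sq,
      ← mul_assoc, mul_div_cancel_right₀ _ hn.ne'] at h
  · rw [norm_smul, Real.norm_of_nonneg (by positivity), div_mul_cancel₀ _ hn.ne']

-- The Bochner integral of a non-integrable function is `0`, which would make `suppZplus` vanish.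
theorem integrable_max_inner_rpow_mul (hq : 0 < q) (hr : 0 < r)
    (hw : ∀ x, ‖x‖ ≤ r → x ∈ ZplusBody w q) (y : EuclideanSpace ℝ (Fin m)) :
    Integrable fun x => max ⟪x, y⟫ 0 ^ q * w x := by
  rcases eq_or_ne y 0 with rfl | hy
  · simp [Real.zero_rpow hq.ne']
  by_contra hni
  have h := mul_norm_le_suppZplus hr.le hw y
  rw [suppZplus, integral_undef hni, mul_zero, Real.zero_rpow (by positivity)] at h
  exact h.not_gt (mul_pos hr (norm_pos_iff.2 hy))

section Sublinear

variable (hw : ∀ x, 0 ≤ w x)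
include hw

theorem two_mul_integral_max_inner_rpow_mul_nonneg (y : EuclideanSpace ℝ (Fin m)) :
    0 ≤ 2 * ∫ x, max ⟪x, y⟫ 0 ^ q * w x :=
  mul_nonneg two_pos.le <| integral_nonneg fun x =>
    mul_nonneg (Real.rpow_nonneg (le_max_right _ _) _) (hw x)

theorem suppZplus_rpow (hq : q ≠ 0) (y : EuclideanSpace ℝ (Fin m)) :
    suppZplus w q y ^ q = 2 * ∫ x, max ⟪x, y⟫ 0 ^ q * w x := by
  rw [suppZplus, ← Real.rpow_mul (two_mul_integral_max_inner_rpow_mul_nonneg hw y),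
    one_div_mul_cancel hq, rpow_one]

theorem suppZplus_smul (hq : q ≠ 0) {c : ℝ} (hc : 0 ≤ c) (y : EuclideanSpace ℝ (Fin m)) :
    suppZplus w q (c • y) = c * suppZplus w q y := by
  have hmax (x : EuclideanSpace ℝ (Fin m)) :
      max ⟪x, c • y⟫ 0 ^ q * w x = c ^ q * (max ⟪x, y⟫ 0 ^ q * w x) := by
    rw [real_inner_smul_right, ← mul_assoc, ← Real.mul_rpow hc (le_max_right _ _),
      mul_max_of_nonneg _ _ hc, mul_zero]
  simp only [suppZplus, hmax]
  rw [integral_const_mul, mul_left_comm, Real.mul_rpow (Real.rpow_nonneg hc q)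
    (two_mul_integral_max_inner_rpow_mul_nonneg hw y), ← Real.rpow_mul hc, mul_one_div_cancel hq,
    rpow_one]

variable (hwm : AEMeasurable w)
include hwm

theorem suppZplus_eq_lpNorm (hq : 0 < q) (y : EuclideanSpace ℝ (Fin m)) :
    suppZplus w q y = 2 ^ (1 / q) * lpNorm (fun x => max ⟪x, y⟫ 0) (ENNReal.ofReal q)
      (volume.withDensity fun x => ENNReal.ofReal (w x)) := by
  have hint : 0 ≤ ∫ x, max ⟪x, y⟫ 0 ^ q * w x := by
    linarith [two_mul_integral_max_inner_rpow_mul_nonneg (q := q) hw y]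
  rw [lpNorm_eq_integral_norm_rpow_toReal (by simpa) ENNReal.ofReal_ne_top (by fun_prop),
    ENNReal.toReal_ofReal hq.le,
    integral_withDensity_eq_integral_toReal_smul₀ hwm.ennreal_ofReal (by simp), suppZplus,
    Real.mul_rpow two_pos.le hint, one_div]
  simp only [Real.norm_of_nonneg (le_max_right _ _), ENNReal.toReal_ofReal (hw _), smul_eq_mul,
    mul_comm (w _)]

theorem memLp_max_inner (hq : 0 < q) {y : EuclideanSpace ℝ (Fin m)}
    (hy : Integrable fun x => max ⟪x, y⟫ 0 ^ q * w x) :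
    MemLp (fun x => max ⟪x, y⟫ 0) (ENNReal.ofReal q)
      (volume.withDensity fun x => ENNReal.ofReal (w x)) := by
  rw [← integrable_norm_rpow_iff (by fun_prop) (by simpa) ENNReal.ofReal_ne_top,
    ENNReal.toReal_ofReal hq.le,
    integrable_withDensity_iff_integrable_smul₀' hwm.ennreal_ofReal (by simp)]
  simpa only [Real.norm_of_nonneg (le_max_right _ _), ENNReal.toReal_ofReal (hw _), smul_eq_mul,
    mul_comm (w _)] using hy

theorem suppZplus_add_le (hq : 1 ≤ q) {y z : EuclideanSpace ℝ (Fin m)}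
    (hy : Integrable fun x => max ⟪x, y⟫ 0 ^ q * w x)
    (hz : Integrable fun x => max ⟪x, z⟫ 0 ^ q * w x) :
    suppZplus w q (y + z) ≤ suppZplus w q y + suppZplus w q z := by
  have hq0 : 0 < q := by linarith
  have hLy := memLp_max_inner hw hwm hq0 hy
  have hLz := memLp_max_inner hw hwm hq0 hz
  simp only [suppZplus_eq_lpNorm hw hwm hq0, ← mul_add]
  refine mul_le_mul_of_nonneg_left ?_ (by positivity)
  refine (lpNorm_mono_real (hLy.add hLz) fun x => ?_).trans
    (lpNorm_add_le hLy (ENNReal.one_le_ofReal.2 hq))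
  rw [Real.norm_of_nonneg (le_max_right _ _), inner_add_right, Pi.add_apply]
  exact max_le (add_le_add (le_max_left _ _) (le_max_left _ _))
    (add_nonneg (le_max_right _ _) (le_max_right _ _))

theorem exists_mem_ZplusBody_inner_eq (hq : 1 ≤ q)
    (hi : ∀ y : EuclideanSpace ℝ (Fin m), Integrable fun x => max ⟪x, y⟫ 0 ^ q * w x)
    {y : EuclideanSpace ℝ (Fin m)} (hy : y ≠ 0) :
    ∃ x ∈ ZplusBody w q, ⟪x, y⟫ = suppZplus w q y := by
  obtain ⟨φ, hφy, hφ⟩ := exists_linearMap_apply_eq_and_le_of_sublinear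
    (fun c hc x => suppZplus_smul hw (by linarith : q ≠ 0) hc.le x)
    (fun x z => suppZplus_add_le hw hwm hq (hi x) (hi z)) hy
  let x := (InnerProductSpace.toDual ℝ _).symm (LinearMap.toContinuousLinearMap φ)
  have hx (z : EuclideanSpace ℝ (Fin m)) : ⟪x, z⟫ = φ z := by simp [x]
  exact ⟨x, fun z => (hx z).trans_le (hφ z), (hx y).trans hφy⟩

end Sublinear

theorem hasMomentBounds_of_forall_mem_ZplusBody (hw : ∀ x, 0 ≤ w x) (hwm : AEMeasurable w)
    (hq : 1 ≤ q) (hr : 0 < r) (hlow : ∀ x, ‖x‖ ≤ r → x ∈ ZplusBody w q)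
    (hup : ∀ x ∈ ZplusBody w q, ‖x‖ ≤ R) : HasMomentBounds w q r R := by
  have hq0 : 0 < q := by linarith
  have hi := integrable_max_inner_rpow_mul hq0 hr hlow
  have hlow' := mul_norm_le_suppZplus hr.le hlow
  refine ⟨hi, fun y => ?_, fun y => ?_⟩
  · rw [← suppZplus_rpow hw hq0.ne']
    exact Real.rpow_le_rpow (by positivity) (hlow' y) hq0.le
  · rcases eq_or_ne y 0 with rfl | hy
    · simp [Real.zero_rpow hq0.ne']
    obtain ⟨x, hx, hxy⟩ := exists_mem_ZplusBody_inner_eq hw hwm hq hi hy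
    rw [← suppZplus_rpow hw hq0.ne']
    refine Real.rpow_le_rpow ((by positivity : 0 ≤ r * ‖y‖).trans (hlow' y)) ?_ hq0.le
    calc suppZplus w q y = ⟪x, y⟫ := hxy.symm
      _ ≤ ‖x‖ * ‖y‖ := real_inner_le_norm x y
      _ ≤ R * ‖y‖ := by gcongr; exact hup x hx

end CentroidBody

theorem HasMomentBounds.integrable_smul {V : Type*} [NormedAddCommGroup V] [InnerProductSpace ℝ V]
    [FiniteDimensional ℝ V] [MeasurableSpace V] [BorelSpace V] {f : V → ℝ} {Q r R : ℝ}
    (hm : HasMomentBounds f Q r R) (hf : ∀ x, 0 ≤ f x) (hi : Integrable f) (hQ : 1 ≤ Q) :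
    Integrable fun x => f x • x := by
  have hmax := hm.integrable_max_inner_mul hf hi hQ
  have hinner (y : V) : Integrable fun x => ⟪y, x⟫ * f x := by
    refine ((hmax y).sub (hmax (-y))).congr (.of_forall fun x => ?_)
    have h : max ⟪x, y⟫ 0 - max (-⟪x, y⟫) 0 = ⟪x, y⟫ := posPart_sub_negPart _
    rw [Pi.sub_apply, inner_neg_right, ← sub_mul, h, real_inner_comm]
  have hsum := integrable_finsetSum Finset.univ fun i _ =>
    (hinner (stdOrthonormalBasis ℝ V i)).smul_const (stdOrthonormalBasis ℝ V i)
  refine hsum.congr (.of_forall fun x => ?_)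
  have hx := congrArg (f x • ·) ((stdOrthonormalBasis ℝ V).sum_repr' x)
  simpa only [Finset.smul_sum, smul_smul, mul_comm (f x)] using hx

/-! ### Isometries close to a linear map -/

section NearIsometry

open Module

variable {Y Z : Type*} [NormedAddCommGroup Y] [InnerProductSpace ℝ Y] [FiniteDimensional ℝ Y]
  [NormedAddCommGroup Z] [InnerProductSpace ℝ Z] [FiniteDimensional ℝ Z]

theorem exists_orthonormalBasis_pairwise_inner_map_eq_zero (T : Y →ₗ[ℝ] Z) :
    ∃ e : OrthonormalBasis (Fin (finrank ℝ Y)) ℝ Y,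
      Pairwise fun i j => ⟪T (e i), T (e j)⟫ = 0 := by
  have hT := T.isSymmetric_adjoint_comp_self
  refine ⟨hT.eigenvectorBasis rfl, fun i j hij => ?_⟩
  dsimp only
  rw [← LinearMap.adjoint_inner_left, ← LinearMap.comp_apply, hT.apply_eigenvectorBasis,
    RCLike.ofReal_real_eq_id, id_eq, real_inner_smul_left,
    (hT.eigenvectorBasis rfl).orthonormal.2 hij, mul_zero]

theorem exists_orthonormalBasis_eq_norm_smul {ι : Type*} [Fintype ι]
    (hι : finrank ℝ Z = Fintype.card ι) {z : ι → Z} (hz : Pairwise fun i j => ⟪z i, z j⟫ = 0) :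
    ∃ b : OrthonormalBasis ι ℝ Z, ∀ i, z i = ‖z i‖ • b i := by
  have hortho : Orthonormal ℝ ({i | z i ≠ 0}.domRestrict fun i => ‖z i‖⁻¹ • z i) := by
    refine ⟨fun ⟨i, hi⟩ => norm_smul_inv_norm (𝕜 := ℝ) hi, fun i j hij => ?_⟩
    dsimp only
    rw [Set.domRestrict_apply, Set.domRestrict_apply, real_inner_smul_left,
      real_inner_smul_right, hz (Subtype.coe_ne_coe.2 hij), mul_zero, mul_zero]
  obtain ⟨b, hb⟩ := hortho.exists_orthonormalBasis_extension_of_card_eq hι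
  refine ⟨b, fun i => ?_⟩
  rcases eq_or_ne (z i) 0 with hi | hi
  · rw [hi, norm_zero, zero_smul]
  · rw [hb i hi, smul_inv_smul₀ (norm_ne_zero_iff.2 hi)]

/-- The isometry is the orthogonal factor of the polar decomposition of `T`. -/
theorem exists_linearIsometryEquiv_norm_sub_le (hd : finrank ℝ Z = finrank ℝ Y) {ε : ℝ}
    (T : Y →ₗ[ℝ] Z) (hT : ∀ y, |‖T y‖ - ‖y‖| ≤ ε * ‖y‖) :
    ∃ O : Y ≃ₗᵢ[ℝ] Z, ∀ y, ‖T y - O y‖ ≤ ε * ‖y‖ := by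
  obtain ⟨e, he⟩ := exists_orthonormalBasis_pairwise_inner_map_eq_zero T
  obtain ⟨b, hb⟩ := exists_orthonormalBasis_eq_norm_smul (by simpa using hd) he
  have hsub : ∀ y, T y - e.equiv b (Equiv.refl _) y =
      ∑ i, ((‖T (e i)‖ - 1) * ⟪e i, y⟫) • b i := fun y => by
    conv_lhs => rw [← e.sum_repr' y, map_sum, map_sum, ← Finset.sum_sub_distrib]
    refine Finset.sum_congr rfl fun i _ => ?_
    rw [map_smul, map_smul, OrthonormalBasis.equiv_apply_basis, Equiv.refl_apply, hb i,
      norm_smul, norm_norm, b.orthonormal.1 i]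
    module
  refine ⟨e.equiv b (Equiv.refl _), fun y => ?_⟩
  rcases (norm_nonneg y).eq_or_lt' with hy | hy
  · simp [norm_eq_zero.1 hy]
  have hε : 0 ≤ ε := nonneg_of_mul_nonneg_left ((abs_nonneg _).trans (hT y)) hy
  refine le_of_sq_le_sq ?_ (by positivity)
  rw [hsub, ← b.sum_sq_norm_inner_right, mul_pow, ← e.sum_sq_norm_inner_right, Finset.mul_sum]
  refine Finset.sum_le_sum fun i _ => ?_
  have hi := hT (e i)
  rw [e.orthonormal.1 i, mul_one] at hi
  rw [b.orthonormal.inner_right_fintype, norm_mul, mul_pow, Real.norm_eq_abs]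
  gcongr

end NearIsometry

section Subspaces

open Module

theorem finrank_range_sup_range_le {E X : Type*} [AddCommGroup E] [Module ℝ E]
    [FiniteDimensional ℝ E] [AddCommGroup X] [Module ℝ X] (U W : E →ₗ[ℝ] X) :
    finrank ℝ ↥(U.range ⊔ W.range) ≤ finrank ℝ E + finrank ℝ E :=
  (Submodule.finrank_add_le_finrank_add_finrank _ _).trans
    (add_le_add (LinearMap.finrank_range_le _) (LinearMap.finrank_range_le _))

variable {X : Type*} [NormedAddCommGroup X] [InnerProductSpace ℝ X] [FiniteDimensional ℝ X]

theorem exists_linearIsometryEquiv_norm_sub_le_of_approx {Y Z : Submodule ℝ X}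
    (hd : finrank ℝ Z = finrank ℝ Y) {ε : ℝ} (h : ∀ y ∈ Y, ∃ z ∈ Z, ‖y - z‖ ≤ ε * ‖y‖) :
    ∃ O : Y ≃ₗᵢ[ℝ] Z, ∀ y : Y, ‖(y : X) - O y‖ ≤ 2 * ε * ‖y‖ := by
  let T : Y →ₗ[ℝ] Z := (Z.orthogonalProjectionOnto : X →ₗ[ℝ] Z).comp Y.subtype
  have hT : ∀ y : Y, ‖(y : X) - T y‖ ≤ ε * ‖y‖ := fun y => by
    obtain ⟨z, hz, hyz⟩ := h y y.2
    refine le_trans ?_ hyz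
    change ‖(y : X) - Z.starProjection y‖ ≤ _
    rw [Submodule.starProjection_minimal]
    exact ciInf_le ⟨0, by rintro _ ⟨z, rfl⟩; positivity⟩ (⟨z, hz⟩ : Z)
  obtain ⟨O, hO⟩ := exists_linearIsometryEquiv_norm_sub_le hd T fun y => by
    rw [abs_sub_comm]
    exact (abs_norm_sub_norm_le (y : X) (T y)).trans (hT y)
  refine ⟨O, fun y => (norm_sub_le_norm_sub_add_norm_sub _ (T y : X) _).trans ?_⟩
  have hOT : ‖(T y : X) - O y‖ ≤ ε * ‖y‖ := hO y
  linarith [hT y]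

variable {E : Type*} [NormedAddCommGroup E] [InnerProductSpace ℝ E] {U W : E →ₗᵢ[ℝ] X} {ε : ℝ}

theorem exists_sub_mem_orthogonal_range_norm_le (hε : 0 ≤ ε)
    (hUW : ∀ x, ‖U x - W x‖ ≤ ε * ‖x‖) {y : X} (hy : y ∈ (U.toLinearMap.range)ᗮ) :
    ∃ w, y - W w ∈ (W.toLinearMap.range)ᗮ ∧ ‖w‖ ≤ ε * ‖y‖ := by
  obtain ⟨w, hw⟩ :
      (W.toLinearMap.range).starProjection y ∈ W.toLinearMap.range :=
    Submodule.starProjection_apply_mem _ _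
  have hyw : y - W w ∈ (W.toLinearMap.range)ᗮ := by
    rw [← W.coe_toLinearMap, hw]
    exact Submodule.sub_starProjection_mem_orthogonal y
  refine ⟨w, hyw, ?_⟩
  have hWw : ⟪W w, y⟫ = ‖w‖ * ‖w‖ := by
    rw [← real_inner_self_eq_norm_mul_norm, ← W.inner_map_map, ← sub_eq_zero, ← inner_sub_right]
    exact hyw _ (LinearMap.mem_range_self _ w)
  have hUw : ⟪U w, y⟫ = 0 := hy _ (LinearMap.mem_range_self _ w)
  rcases (norm_nonneg w).eq_or_lt' with h0 | h0
  · rw [h0]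
    positivity
  refine le_of_mul_le_mul_right ?_ h0
  calc ‖w‖ * ‖w‖ = ⟪W w - U w, y⟫ := by rw [inner_sub_left, hWw, hUw, sub_zero]
    _ ≤ ‖W w - U w‖ * ‖y‖ := real_inner_le_norm _ _
    _ ≤ ε * ‖w‖ * ‖y‖ := by rw [norm_sub_rev]; gcongr; exact hUW w
    _ = ε * ‖y‖ * ‖w‖ := by ring

theorem finrank_range_add_finrank_orthogonal_inf (U : E →ₗᵢ[ℝ] X) {V : Submodule ℝ X}
    (hV : U.toLinearMap.range ≤ V) :
    finrank ℝ E + finrank ℝ ↥((U.toLinearMap.range)ᗮ ⊓ V) = finrank ℝ V := by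
  rw [← LinearMap.finrank_range_of_inj U.injective]
  exact Submodule.finrank_add_inf_finrank_orthogonal hV

theorem exists_linearIsometryEquiv_orthogonal_range_inf (hε : 0 ≤ ε)
    (hUW : ∀ x, ‖U x - W x‖ ≤ ε * ‖x‖) {V : Submodule ℝ X}
    (hU : U.toLinearMap.range ≤ V) (hW : W.toLinearMap.range ≤ V) :
    ∃ O : ↥((U.toLinearMap.range)ᗮ ⊓ V) ≃ₗᵢ[ℝ]
        ↥((W.toLinearMap.range)ᗮ ⊓ V),
      ∀ z : ↥((U.toLinearMap.range)ᗮ ⊓ V), ‖(z : X) - O z‖ ≤ 2 * ε * ‖z‖ := by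
  refine exists_linearIsometryEquiv_norm_sub_le_of_approx ?_ fun y hy => ?_
  · have hdU := finrank_range_add_finrank_orthogonal_inf U hU
    have hdW := finrank_range_add_finrank_orthogonal_inf W hW
    omega
  · obtain ⟨w, hw, hle⟩ := exists_sub_mem_orthogonal_range_norm_le hε hUW hy.1
    refine ⟨y - W w, ⟨hw, V.sub_mem hy.2 (hW (LinearMap.mem_range_self _ w))⟩, ?_⟩
    rwa [sub_sub_cancel, W.norm_map]

end Subspaces

/-! ### Ray moments of marginals as integrals over cones -/

section Cone

variable {X Y : Type*} [AddCommGroup X] [Module ℝ X] [NormedAddCommGroup Y] [NormedSpace ℝ Y]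
  [FiniteDimensional ℝ Y] [MeasurableSpace Y] [BorelSpace Y] {μ : Measure Y} [μ.IsAddHaarMeasure]

theorem quasiMeasurePreserving_prodMk_fst_smul :
    Measure.QuasiMeasurePreserving (fun p : ℝ × Y => (p.1, p.1 • p.2))
      ((volume.restrict (Set.Ioi 0)).prod μ) (volume.prod μ) := by
  have hm : Measurable fun p : ℝ × Y => (p.1, p.1 • p.2) := by fun_prop
  refine ⟨hm, Measure.AbsolutelyContinuous.mk fun s hs h0 => ?_⟩
  rw [Measure.measure_prod_null hs] at h0
  rw [Measure.map_apply hm hs, Measure.measure_prod_null (hm hs)]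
  filter_upwards [ae_restrict_of_ae h0, ae_restrict_mem measurableSet_Ioi] with t ht ht0
  change μ ((t • ·) ⁻¹' (Prod.mk t ⁻¹' s)) = 0
  rw [Measure.addHaar_preimage_smul μ (ne_of_gt ht0), ht, Pi.zero_apply, mul_zero]

theorem setLIntegral_Ioi_rpow_mul_lintegral_smul_add {φ : X → ℝ≥0∞} {L : Y →ₗ[ℝ] X} {x : X}
    (hφ : AEMeasurable (fun p : ℝ × Y => φ (p.1 • x + L p.2)) (volume.prod μ)) (σ : ℝ) :
    ∫⁻ t in Set.Ioi (0 : ℝ), ENNReal.ofReal (t ^ σ) * ∫⁻ y, φ (t • x + L y) ∂μ =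
      ∫⁻ y, rayMoment φ (σ + Module.finrank ℝ Y) (x + L y) ∂μ := by
  have hmeas : AEMeasurable (fun p : ℝ × Y => ENNReal.ofReal (p.1 ^ (σ + Module.finrank ℝ Y)) *
      φ (p.1 • (x + L p.2))) ((volume.restrict (Set.Ioi 0)).prod μ) := by
    refine AEMeasurable.mul (by fun_prop) ?_
    simpa only [Function.comp_def, smul_add, map_smul] using
      hφ.comp_quasiMeasurePreserving quasiMeasurePreserving_prodMk_fst_smul
  unfold rayMoment
  rw [← lintegral_lintegral_swap hmeas]
  refine setLIntegral_congr_fun measurableSet_Ioi fun t (ht : 0 < t) => ?_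
  rw [lintegral_const_mul' _ _ ENNReal.ofReal_ne_top]
  simp only [smul_add, ← map_smul]
  rw [lintegral_comp_smul_addHaar μ ht.ne' fun y => φ (t • x + L y), ← mul_assoc,
    ← ENNReal.ofReal_mul (by positivity), abs_of_pos (by positivity), Real.rpow_add ht,
    Real.rpow_natCast, mul_inv_cancel_right₀ (by positivity)]

end Cone

theorem abs_log_mul_toReal_sub_le {c K : ℝ} (hc : 0 < c) {a b : ℝ≥0∞} (ha0 : a ≠ 0)
    (ha : a ≠ ∞) (hb0 : b ≠ 0) (hb : b ≠ ∞) (hab : ENNReal.ofReal (exp (-K)) * a ≤ b)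
    (hba : ENNReal.ofReal (exp (-K)) * b ≤ a) :
    |Real.log (c * a.toReal) - Real.log (c * b.toReal)| ≤ K := by
  have ha_pos := ENNReal.toReal_pos ha0 ha
  have hb_pos := ENNReal.toReal_pos hb0 hb
  replace hab := ENNReal.toReal_mono hb hab
  replace hba := ENNReal.toReal_mono ha hba
  rw [ENNReal.toReal_mul, ENNReal.toReal_ofReal (exp_pos _).le] at hab hba
  have hlab := Real.log_le_log (by positivity) hab
  have hlba := Real.log_le_log (by positivity) hba
  rw [Real.log_mul (exp_pos _).ne' (by positivity), Real.log_exp] at hlab hlba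
  rw [Real.log_mul hc.ne' ha_pos.ne', Real.log_mul hc.ne' hb_pos.ne', abs_le]
  constructor <;> linarith

theorem add_ne_zero_and_norm_sub_le_of_inner_eq_zero {X : Type*}
    [NormedAddCommGroup X] [InnerProductSpace ℝ X] {x z x' z' : X} {ε : ℝ} (hxz : ⟪x, z⟫ = 0)
    (hx : x ≠ 0) (hε : 0 ≤ ε) (hx' : ‖x' - x‖ ≤ ε * ‖x‖) (hz' : ‖z' - z‖ ≤ 2 * ε * ‖z‖) :
    x + z ≠ 0 ∧ ‖x' + z' - (x + z)‖ ≤ 3 * ε * ‖x + z‖ := by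
  have hsq := norm_add_sq_real x z
  rw [hxz, mul_zero, add_zero] at hsq
  have hxle : ‖x‖ ≤ ‖x + z‖ :=
    le_of_sq_le_sq (hsq ▸ le_add_of_nonneg_right (sq_nonneg _)) (norm_nonneg _)
  have hzle : ‖z‖ ≤ ‖x + z‖ :=
    le_of_sq_le_sq (hsq ▸ le_add_of_nonneg_left (sq_nonneg _)) (norm_nonneg _)
  refine ⟨norm_pos_iff.1 ((norm_pos_iff.2 hx).trans_le hxle), ?_⟩
  calc ‖x' + z' - (x + z)‖ = ‖(x' - x) + (z' - z)‖ := by rw [add_sub_add_comm]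
    _ ≤ ‖x' - x‖ + ‖z' - z‖ := norm_add_le _ _
    _ ≤ ε * ‖x + z‖ + 2 * ε * ‖x + z‖ := by
        gcongr
        · exact hx'.trans (by gcongr)
        · exact hz'.trans (by gcongr)
    _ = 3 * ε * ‖x + z‖ := by ring

section Comparison

open Module

variable {X : Type*} [NormedAddCommGroup X] [InnerProductSpace ℝ X] [FiniteDimensional ℝ X]
  [MeasurableSpace X] [BorelSpace X]

theorem rayMoment_orthMarginal {f : X → ℝ≥0∞} (hf : IsENNRealLogConcave f) {F V : Submodule ℝ X}
    (hFV : F ≤ V) (σ : ℝ) (x : X) :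
    rayMoment (orthMarginal f F) σ x = ∫⁻ z : ↥(Fᗮ ⊓ V),
      rayMoment (orthMarginal f V) (σ + finrank ℝ ↥(Fᗮ ⊓ V)) (x + z) := by
  have hmeas : AEMeasurable (fun p : ℝ × ↥(Fᗮ ⊓ V) =>
      orthMarginal f V (p.1 • x + (Fᗮ ⊓ V).subtype p.2)) (volume.prod volume) :=
    ((hf.orthMarginal V).comp_affineMap
      ((LinearMap.toSpanSingleton ℝ X x).coprod (Fᗮ ⊓ V).subtype).toAffineMap).aemeasurable
        (volume.prod volume)
  refine Eq.trans ?_ (setLIntegral_Ioi_rpow_mul_lintegral_smul_add hmeas σ)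
  simp only [rayMoment, orthMarginal_eq_lintegral_orthMarginal hf hFV, Submodule.subtype_apply]

namespace IsCenteredLogConcaveDensity

variable {g : X → ℝ} {Q r R σ : ℝ}

theorem rayMoment_ofReal_subspaceMarginal (hg : IsCenteredLogConcaveDensity g)
    (V : Submodule ℝ X) (σ : ℝ) (v : V) :
    rayMoment (fun w => ENNReal.ofReal (subspaceMarginal g V w)) σ v =
      rayMoment (orthMarginal (fun x => ENNReal.ofReal (g x)) V) σ (v : X) := by
  simp only [rayMoment, hg.ofReal_subspaceMarginal, Submodule.coe_smul]

theorem rayMoment_orthMarginal_ne_top (hg : IsCenteredLogConcaveDensity g)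
    (hm : HasMomentBounds g Q r R) (hQ : 1 ≤ Q) (hr : 0 < r) (hR : 0 < R) {V : Submodule ℝ X}
    (hd : (finrank ℝ V : ℝ) ≤ 2 * Q) (hσ : 0 ≤ σ) {x : X} (hxV : x ∈ V) (hx : x ≠ 0) :
    rayMoment (orthMarginal (fun x => ENNReal.ofReal (g x)) V) σ x ≠ ∞ := by
  have hv : (⟨x, hxV⟩ : V) ≠ 0 := fun h => hx (congrArg Subtype.val h)
  rw [← hg.rayMoment_ofReal_subspaceMarginal V σ ⟨x, hxV⟩]
  exact (hg.isPinched_subspaceMarginal hm hQ hr hR hd).rayMoment_ne_top (by linarith)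
    (by positivity) hσ hv

theorem rayMoment_orthMarginal_ne_zero (hg : IsCenteredLogConcaveDensity g)
    (hm : HasMomentBounds g Q r R) (hQ : 1 ≤ Q) (hr : 0 < r) (hR : 0 < R) {V : Submodule ℝ X}
    (hd : (finrank ℝ V : ℝ) ≤ 2 * Q) {x : X} (hxV : x ∈ V) (hx : x ≠ 0) :
    rayMoment (orthMarginal (fun x => ENNReal.ofReal (g x)) V) σ x ≠ 0 := by
  have hv : (⟨x, hxV⟩ : V) ≠ 0 := fun h => hx (congrArg Subtype.val h)
  rw [← hg.rayMoment_ofReal_subspaceMarginal V σ ⟨x, hxV⟩]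
  exact (hg.isPinched_subspaceMarginal hm hQ hr hR hd).rayMoment_ne_zero (by positivity) hv

theorem exp_neg_mul_rayMoment_orthMarginal_le (hg : IsCenteredLogConcaveDensity g)
    (hm : HasMomentBounds g Q r R) (hQ : 1 ≤ Q) (hr : 0 < r) (hR : 0 < R) {V : Submodule ℝ X}
    (hd : (finrank ℝ V : ℝ) ≤ 2 * Q) (hσ : 0 ≤ σ) (hσQ : σ + 1 ≤ 3 * Q) {v v' : V} (hv : v ≠ 0)
    {ε : ℝ} (hε : 0 ≤ ε) (hle : ‖v' - v‖ ≤ ε * ‖v‖) :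
    ENNReal.ofReal (exp (-(28 * (256 * exp 7) * Q * (R / r) * ε))) *
        rayMoment (orthMarginal (fun x => ENNReal.ofReal (g x)) V) σ (v : X) ≤
      rayMoment (orthMarginal (fun x => ENNReal.ofReal (g x)) V) σ (v' : X) := by
  have hle' := (hg.isPinched_subspaceMarginal hm hQ hr hR hd).exp_neg_mul_rayMoment_le hQ
    (by positivity) (by positivity) hσ hσQ hv hε hle
  rw [hg.rayMoment_ofReal_subspaceMarginal, hg.rayMoment_ofReal_subspaceMarginal] at hle'
  convert hle' using 5
  ring

theorem exp_neg_mul_rayMoment_orthMarginal_range_le (hg : IsCenteredLogConcaveDensity g)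
    (hm : HasMomentBounds g Q r R) (hQ : 1 ≤ Q) (hr : 0 < r) (hR : 0 < R) {E : Type*}
    [NormedAddCommGroup E] [InnerProductSpace ℝ E] [FiniteDimensional ℝ E]
    (hE : (finrank ℝ E : ℝ) ≤ Q) (hσ : 0 ≤ σ) (hσQ : σ + finrank ℝ E + 1 ≤ 3 * Q)
    {U W : E →ₗᵢ[ℝ] X} {ε : ℝ} (hε : 0 ≤ ε) (hUW : ∀ x, ‖U x - W x‖ ≤ ε * ‖x‖) {θ : E}
    (hθ : θ ≠ 0) :
    ENNReal.ofReal (exp (-(28 * (256 * exp 7) * Q * (R / r) * (3 * ε)))) *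
        rayMoment (orthMarginal (fun x => ENNReal.ofReal (g x)) U.toLinearMap.range) σ (U θ) ≤
      rayMoment (orthMarginal (fun x => ENNReal.ofReal (g x)) W.toLinearMap.range) σ (W θ) := by
  set V := U.toLinearMap.range ⊔ W.toLinearMap.range
  have hU : U.toLinearMap.range ≤ V := le_sup_left
  have hW : W.toLinearMap.range ≤ V := le_sup_right
  have hV : (finrank ℝ V : ℝ) ≤ finrank ℝ E + finrank ℝ E :=
    mod_cast finrank_range_sup_range_le U.toLinearMap W.toLinearMap
  have hZ : (finrank ℝ ↥(U.toLinearMap.rangeᗮ ⊓ V) : ℝ) ≤ finrank ℝ E := by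
    have hdim : (finrank ℝ E + finrank ℝ ↥(U.toLinearMap.rangeᗮ ⊓ V) : ℝ) = finrank ℝ V :=
      mod_cast finrank_range_add_finrank_orthogonal_inf U hU
    linarith
  obtain ⟨O, hO⟩ := exists_linearIsometryEquiv_orthogonal_range_inf hε hUW hU hW
  rw [rayMoment_orthMarginal hg.isLogConcaveFn.ofReal hU,
    rayMoment_orthMarginal hg.isLogConcaveFn.ofReal hW, ← O.toLinearEquiv.finrank_eq,
    ← O.measurePreserving.lintegral_comp_emb O.toHomeomorph.measurableEmbedding,
    ← lintegral_const_mul' _ _ ENNReal.ofReal_ne_top]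
  refine lintegral_mono fun z => ?_
  have hUθ : U θ ≠ 0 := norm_ne_zero_iff.1 (by rwa [U.norm_map, norm_ne_zero_iff])
  obtain ⟨hne, hle⟩ := add_ne_zero_and_norm_sub_le_of_inner_eq_zero (x := U θ)
    (Submodule.inner_right_of_mem_orthogonal (LinearMap.mem_range_self _ θ) z.2.1) hUθ hε
    (by rw [norm_sub_rev, U.norm_map]; exact hUW θ) (by rw [norm_sub_rev]; exact hO z)
  exact hg.exp_neg_mul_rayMoment_orthMarginal_le hm hQ hr hR (by linarith) (by positivity)
    (by linarith) (v := ⟨U θ + z, V.add_mem (hU (LinearMap.mem_range_self _ θ)) z.2.2⟩)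
    (v' := ⟨W θ + O z, V.add_mem (hW (LinearMap.mem_range_self _ θ)) (O z).2.2⟩)
    (fun h => hne (congrArg Subtype.val h)) (by positivity) hle

theorem abs_log_mul_rayMoment_orthMarginal_range_sub_le (hg : IsCenteredLogConcaveDensity g)
    (hm : HasMomentBounds g Q r R) (hQ : 1 ≤ Q) (hr : 0 < r) (hR : 0 < R) {E : Type*}
    [NormedAddCommGroup E] [InnerProductSpace ℝ E] [FiniteDimensional ℝ E]
    (hE : (finrank ℝ E : ℝ) ≤ Q) (hσ : 0 ≤ σ) (hσQ : σ + finrank ℝ E + 1 ≤ 3 * Q)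
    {U W : E →ₗᵢ[ℝ] X} {ε : ℝ} (hε : 0 ≤ ε) (hUW : ∀ x, ‖U x - W x‖ ≤ ε * ‖x‖) {θ : E}
    (hθ : θ ≠ 0) {c : ℝ} (hc : 0 < c) :
    |Real.log (c * (rayMoment (orthMarginal (fun x => ENNReal.ofReal (g x))
          U.toLinearMap.range) σ (U θ)).toReal) -
        Real.log (c * (rayMoment (orthMarginal (fun x => ENNReal.ofReal (g x))
          W.toLinearMap.range) σ (W θ)).toReal)| ≤
      28 * (256 * exp 7) * Q * (R / r) * (3 * ε) := by
  have hdim (T : E →ₗᵢ[ℝ] X) : (finrank ℝ T.toLinearMap.range : ℝ) ≤ 2 * Q := by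
    rw [LinearMap.finrank_range_of_inj T.injective]
    linarith
  have hmem (T : E →ₗᵢ[ℝ] X) : T θ ∈ T.toLinearMap.range := LinearMap.mem_range_self _ θ
  have hne (T : E →ₗᵢ[ℝ] X) : T θ ≠ 0 := (map_ne_zero_iff T T.injective).2 hθ
  exact abs_log_mul_toReal_sub_le hc
    (hg.rayMoment_orthMarginal_ne_zero hm hQ hr hR (hdim U) (hmem U) (hne U))
    (hg.rayMoment_orthMarginal_ne_top hm hQ hr hR (hdim U) hσ (hmem U) (hne U))
    (hg.rayMoment_orthMarginal_ne_zero hm hQ hr hR (hdim W) (hmem W) (hne W))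
    (hg.rayMoment_orthMarginal_ne_top hm hQ hr hR (hdim W) hσ (hmem W) (hne W))
    (hg.exp_neg_mul_rayMoment_orthMarginal_range_le hm hQ hr hR hE hσ hσQ hε hUW hθ)
    (hg.exp_neg_mul_rayMoment_orthMarginal_range_le hm hQ hr hR hE hσ hσQ hε
      (fun x => norm_sub_rev (U x) (W x) ▸ hUW x) hθ)

end IsCenteredLogConcaveDensity

end Comparison

/-! ### Orthogonal matrices and the functional `hkp` -/

section Matrices

variable {n : ℕ}

theorem norm_mApp_le_hsNorm_mul (A : Matrix (Fin n) (Fin n) ℝ) (x : EuclideanSpace ℝ (Fin n)) :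
    ‖mApp A x‖ ≤ hsNorm A * ‖x‖ := by
  rw [EuclideanSpace.norm_eq, EuclideanSpace.norm_eq, hsNorm, ← Real.sqrt_mul (by positivity),
    Finset.sum_mul]
  refine Real.sqrt_le_sqrt (Finset.sum_le_sum fun i _ => ?_)
  have hcoord : mApp A x i = ∑ j, A i j * x j := by
    simp [mApp, Matrix.toLpLin_apply, Matrix.mulVec, dotProduct]
  simp only [hcoord, Real.norm_eq_abs, sq_abs]
  exact Finset.sum_mul_sq_le_sq_mul_sq Finset.univ (A i) x

theorem norm_mApp_le_opNorm_mul (A : Matrix (Fin n) (Fin n) ℝ) (x : EuclideanSpace ℝ (Fin n)) :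
    ‖mApp A x‖ ≤ opNorm A * ‖x‖ :=
  (LinearMap.toContinuousLinearMap (Matrix.toEuclideanLin A)).le_opNorm x

theorem opNorm_nonneg (A : Matrix (Fin n) (Fin n) ℝ) : 0 ≤ opNorm A :=
  norm_nonneg _

theorem opNorm_le_hsNorm (A : Matrix (Fin n) (Fin n) ℝ) : opNorm A ≤ hsNorm A :=
  ContinuousLinearMap.opNorm_le_bound _ (Real.sqrt_nonneg _) (norm_mApp_le_hsNorm_mul A)

theorem inner_mApp_mApp_of_transpose_mul_self {u : Matrix (Fin n) (Fin n) ℝ}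
    (hu : u.transpose * u = 1) (x y : EuclideanSpace ℝ (Fin n)) :
    ⟪mApp u x, mApp u y⟫ = ⟪x, y⟫ := by
  have hadj : (Matrix.toEuclideanLin u).adjoint (mApp u y) = y := by
    rw [mApp, ← Matrix.toEuclideanLin_conjTranspose_eq_adjoint,
      Matrix.conjTranspose_eq_transpose_of_trivial]
    simp [Matrix.toLpLin_apply, hu]
  rw [mApp, ← LinearMap.adjoint_inner_right, hadj]

/-- The restriction to the subspace `E₀` of the isometry given by the orthogonal matrix `u`. -/
def orthogonalIsometryOn {u : Matrix (Fin n) (Fin n) ℝ} (hu : u.transpose * u = 1)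
    (E₀ : Submodule ℝ (EuclideanSpace ℝ (Fin n))) : E₀ →ₗᵢ[ℝ] EuclideanSpace ℝ (Fin n) :=
  ((Matrix.toEuclideanLin u).isometryOfInner (inner_mApp_mApp_of_transpose_mul_self hu)).comp
    E₀.subtypeₗᵢ

theorem range_orthogonalIsometryOn {u : Matrix (Fin n) (Fin n) ℝ} (hu : u.transpose * u = 1)
    (E₀ : Submodule ℝ (EuclideanSpace ℝ (Fin n))) :
    (orthogonalIsometryOn hu E₀).toLinearMap.range = E₀.map (Matrix.toEuclideanLin u) :=
  (LinearMap.range_comp _ _).trans (congrArg _ E₀.range_subtype)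

theorem norm_orthogonalIsometryOn_sub_le {u v : Matrix (Fin n) (Fin n) ℝ}
    (hu : u.transpose * u = 1) (hv : v.transpose * v = 1)
    {E₀ : Submodule ℝ (EuclideanSpace ℝ (Fin n))} (x : E₀) :
    ‖orthogonalIsometryOn hu E₀ x - orthogonalIsometryOn hv E₀ x‖ ≤ opNorm (u - v) * ‖x‖ := by
  refine le_of_eq_of_le ?_ (norm_mApp_le_opNorm_mul (u - v) x)
  rw [mApp, map_sub]
  rfl

end Matrices

theorem sphereVol_pos {k : ℕ} (hk : 0 < k) : 0 < sphereVol k := by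
  have : 0 < Real.Gamma ((k : ℝ) / 2) := Real.Gamma_pos_of_pos (by positivity)
  unfold sphereVol
  positivity

namespace IsCenteredLogConcaveDensity

variable {n : ℕ} {g : EuclideanSpace ℝ (Fin n) → ℝ}
  {E₀ : Submodule ℝ (EuclideanSpace ℝ (Fin n))} {u v : Matrix (Fin n) (Fin n) ℝ} {k : ℕ} {p : ℝ}

theorem marginalDensity_eq_subspaceMarginal (hg : IsCenteredLogConcaveDensity g)
    (F : Submodule ℝ (EuclideanSpace ℝ (Fin n))) (x : F) :
    marginalDensity g F x = subspaceMarginal g F x := by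
  have hmeas : AEMeasurable fun y : Fᗮ => ENNReal.ofReal (g (x + y)) :=
    (hg.isLogConcaveFn.ofReal.comp_affineMap
      (AffineMap.const ℝ Fᗮ (x : EuclideanSpace ℝ (Fin n)) +
        Fᗮ.subtype.toAffineMap)).aemeasurable _
  refine integral_eq_lintegral_of_nonneg_ae (ae_of_all _ fun y => hg.isLogConcaveFn.1 _) ?_
  exact (hmeas.ennreal_toReal.congr
    (ae_of_all _ fun y => ENNReal.toReal_ofReal (hg.isLogConcaveFn.1 _))).aestronglyMeasurable

theorem setIntegral_Ioi_rpow_mul_marginalDensity (hg : IsCenteredLogConcaveDensity g)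
    (F : Submodule ℝ (EuclideanSpace ℝ (Fin n))) (σ : ℝ) (x : F) :
    ∫ t in Set.Ioi (0 : ℝ), t ^ σ * marginalDensity g F (t • (x : EuclideanSpace ℝ (Fin n))) =
      (rayMoment (orthMarginal (fun x => ENNReal.ofReal (g x)) F) σ
        (x : EuclideanSpace ℝ (Fin n))).toReal := by
  have hmeas : Measurable fun t : ℝ => ENNReal.ofReal (t ^ σ) *
      orthMarginal (fun x => ENNReal.ofReal (g x)) F ↑(t • x) :=
    (measurable_id.pow_const σ).ennreal_ofReal.mul
      ((hg.isLogConcaveFn.ofReal.orthMarginal_coe F).comp_affineMap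
        (LinearMap.toSpanSingleton ℝ F x).toAffineMap).measurable
  refine Eq.trans ?_ (integral_toReal hmeas.aemeasurable (ae_of_all _ fun t =>
    ENNReal.mul_lt_top ENNReal.ofReal_lt_top (hg.orthMarginal_ne_top F (t • x)).lt_top))
  refine setIntegral_congr_fun measurableSet_Ioi fun t (ht : 0 < t) => ?_
  rw [ENNReal.toReal_mul, ENNReal.toReal_ofReal (by positivity), ← Submodule.coe_smul,
    hg.marginalDensity_eq_subspaceMarginal, subspaceMarginal]

theorem hkp_eq (hg : IsCenteredLogConcaveDensity g) (hu : u.transpose * u = 1) (θ : E₀) :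
    hkp g E₀ θ k p u = sphereVol k *
      (rayMoment (orthMarginal (fun x => ENNReal.ofReal (g x))
        (orthogonalIsometryOn hu E₀).toLinearMap.range) (p + k - 1)
        (orthogonalIsometryOn hu E₀ θ)).toReal := by
  rw [hkp, ← range_orthogonalIsometryOn hu]
  exact congrArg _ (hg.setIntegral_Ioi_rpow_mul_marginalDensity _ _
    ⟨_, LinearMap.mem_range_self _ θ⟩)

theorem abs_log_hkp_sub_le {r R : ℝ} (hg : IsCenteredLogConcaveDensity g)
    (hm : HasMomentBounds g (max k p) r R) (hr : 0 < r) (hR : 0 < R) (hp : -(k : ℝ) + 1 ≤ p)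
    (hE₀ : Module.finrank ℝ E₀ = k) {θ : E₀} (hθ : θ ≠ 0) (hu : u.transpose * u = 1)
    (hv : v.transpose * v = 1) :
    |Real.log (hkp g E₀ θ k p u) - Real.log (hkp g E₀ θ k p v)| ≤
      28 * (256 * exp 7) * max (k : ℝ) p * (R / r) * (3 * opNorm (u - v)) := by
  have hk : 0 < k := hE₀ ▸ Module.finrank_pos_iff_exists_ne_zero.2 ⟨θ, hθ⟩
  have hkQ : (k : ℝ) ≤ max (k : ℝ) p := le_max_left _ _
  have hpQ : p ≤ max (k : ℝ) p := le_max_right _ _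
  have hQ : 1 ≤ max (k : ℝ) p := le_max_of_le_left (mod_cast hk)
  have hσ : 0 ≤ p + k - 1 := by linarith
  rw [hg.hkp_eq hu θ, hg.hkp_eq hv θ]
  exact hg.abs_log_mul_rayMoment_orthMarginal_range_sub_le hm hQ hr hR (hE₀ ▸ hkQ) hσ
    (by rw [hE₀]; linarith) (opNorm_nonneg _) (norm_orthogonalIsometryOn_sub_le hu hv) hθ
    (sphereVol_pos hk)

end IsCenteredLogConcaveDensity

theorem statement9_general :
    ∃ C : ℝ, 0 < C ∧
      ∀ (n : ℕ) (g : EuclideanSpace ℝ (Fin n) → ℝ),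
        IsLogConcaveFn g → Integrable g → (∫ x, g x) = 1 →
        (∫ x, g x • x) = 0 →
        ∀ (k : ℕ) (p : ℝ), -(k : ℝ) + 1 ≤ p →
        ∀ r R : ℝ, 0 < r → 0 < R →
          (∀ x : EuclideanSpace ℝ (Fin n), ‖x‖ ≤ r → x ∈ ZplusBody g (max (k : ℝ) p)) →
          (∀ x ∈ ZplusBody g (max (k : ℝ) p), ‖x‖ ≤ R) →
          ∀ E₀ : Submodule ℝ (EuclideanSpace ℝ (Fin n)), Module.finrank ℝ E₀ = k →
          ∀ θ₀ : EuclideanSpace ℝ (Fin n), θ₀ ∈ E₀ → θ₀ ≠ 0 →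
          ∀ u v : Matrix (Fin n) (Fin n) ℝ, u.transpose * u = 1 → v.transpose * v = 1 →
            |Real.log (hkp g E₀ θ₀ k p u) - Real.log (hkp g E₀ θ₀ k p v)| ≤
              C * max (k : ℝ) p * (R / r) * opNorm (u - v) := by
  refine ⟨28 * (256 * exp 7) * 3, by positivity, ?_⟩
  intro n g hlc hint hone hbary k p hp r R hr hR hlow hup E₀ hE₀ θ₀ hθ₀ hne u v hu hv
  have hθ : (⟨θ₀, hθ₀⟩ : E₀) ≠ 0 := fun h => hne (congrArg Subtype.val h)
  have hk : 0 < k := hE₀ ▸ Module.finrank_pos_iff_exists_ne_zero.2 ⟨_, hθ⟩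
  have hQ : 1 ≤ max (k : ℝ) p := le_max_of_le_left (mod_cast hk)
  have hm := hasMomentBounds_of_forall_mem_ZplusBody hlc.1 hint.aestronglyMeasurable.aemeasurable
    hQ hr hlow hup
  have hg : IsCenteredLogConcaveDensity g :=
    ⟨hlc, hint, hone, hm.integrable_smul hlc.1 hint hQ, hbary⟩
  exact (hg.abs_log_hkp_sub_le hm hr hR hp hE₀ hθ hu hv).trans_eq (by ring)

/-- log-Lipschitz estimate for `h_{k,p}` in terms of the geometric distance
of `Z⁺_{max(k,p)}(g)` to the Euclidean ball. -/
theorem statement9 :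
    ∃ C : ℝ, 0 < C ∧
      ∀ (n : ℕ) (g : EuclideanSpace ℝ (Fin n) → ℝ),
        IsLogConcaveFn g → Integrable g → (∫ x, g x) = 1 →
        (∫ x, g x • x) = 0 →
        ∀ k : ℕ, 2 ≤ k → k ≤ n →
        ∀ p : ℝ, -(k : ℝ) + 1 ≤ p →
        ∀ r R : ℝ, 0 < r → 0 < R →
          (∀ x : EuclideanSpace ℝ (Fin n), ‖x‖ ≤ r → x ∈ ZplusBody g (max (k : ℝ) p)) →
          (∀ x ∈ ZplusBody g (max (k : ℝ) p), ‖x‖ ≤ R) →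
          ∀ E₀ : Submodule ℝ (EuclideanSpace ℝ (Fin n)), Module.finrank ℝ E₀ = k →
          ∀ θ₀ : EuclideanSpace ℝ (Fin n), θ₀ ∈ E₀ → ‖θ₀‖ = 1 →
          ∀ u v : Matrix (Fin n) (Fin n) ℝ,
            u.transpose * u = 1 → u.det = 1 → v.transpose * v = 1 → v.det = 1 →
            |Real.log (hkp g E₀ θ₀ k p u) - Real.log (hkp g E₀ θ₀ k p v)| ≤
              C * max (k : ℝ) p * (R / r) * hsNorm (u - v) := by
  obtain ⟨C, hC, h⟩ := statement9_general
  refine ⟨C, hC, fun n g hlc hint hone hbary k _ _ p hp r R hr hR hlow hup E₀ hE₀ θ₀ hθ₀ hθ₀_norm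
    u v hu _ hv _ => ?_⟩
  refine (h n g hlc hint hone hbary k p hp r R hr hR hlow hup E₀ hE₀ θ₀ hθ₀
    (norm_ne_zero_iff.1 (hθ₀_norm ▸ one_ne_zero)) u v hu hv).trans ?_
  gcongr
  exact opNorm_le_hsNorm (u - v)
end
end

section
/- There holds the following two-sided bound. Let K be a convex body in ℝ^m containing the origin in its interior, let θ be a unit vector, and let q ≥ 1. Denote by f_θ(s) the (m−1)-dimensional volume of the section {x ∈ K : ⟨x,θ⟩ = s}, by H_θ⁺ := {x ∈ ℝ^m : ⟨x,θ⟩ ≥ 0}, and by h_K(θ) := sup_{x∈K} ⟨x,θ⟩. Then (f_θ(0)/‖f_θ‖_∞)^{1/q}·(Γ(m)Γ(q+1)/Γ(m+q+1))^{1/q}·h_K(θ) ≤ h_{Z⁺_q(K)}(θ)/(2·vol(K ∩ H_θ⁺))^{1/q} ≤ h_K(θ), where ‖f_θ‖_∞ = sup_s f_θ(s). -/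
open MeasureTheory ProbabilityTheory Real
open scoped ENNReal RealInnerProductSpace Pointwise NNReal

noncomputable section

/-!
Fubini in the direction `θ` shows that the image of Lebesgue measure on `K` under `⟪·, θ⟫` has
density `f = f_θ`. Put `h = h_K(θ)` and `K⁺ = K ∩ H_θ⁺`, so that `⟪·, θ⟫` takes values in `[0, h]`
on `K⁺` and the upper bound is immediate. For the lower bound, let `x₀ ∈ K` lie at height `h`. The
cone with apex `x₀` over the section at height `0` is contained in `K`, whence
`f s ≥ (1 - s / h) ^ (m - 1) * f 0` on `[0, h]`. Integrating against `s ^ q` gives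
`∫_{K⁺} ⟪x, θ⟫ ^ q ≥ f 0 * h ^ (q + 1) * B(m, q + 1)`, which is compared with `vol K⁺ ≤ h * ‖f‖_∞`.
-/

section OneSidedMoments

open Set Module

theorem beta_nonneg {u v : ℝ} (hu : 0 ≤ u) (hv : 0 ≤ v) : 0 ≤ beta u v :=
  div_nonneg (mul_nonneg (Gamma_nonneg_of_nonneg hu) (Gamma_nonneg_of_nonneg hv))
    (Gamma_nonneg_of_nonneg (add_nonneg hu hv))

theorem integral_rpow_mul_sub_rpow {u v a : ℝ} (hu : 0 < u) (hv : 0 < v) (ha : 0 < a) :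
    ∫ x in (0 : ℝ)..a, x ^ (u - 1) * (a - x) ^ (v - 1) = a ^ (u + v - 1) * beta u v := by
  have h_beta : Complex.betaIntegral u v = beta u v := by
    rw [Complex.betaIntegral_eq_Gamma_mul_div _ _ (by simpa) (by simpa), beta]
    push_cast [← Complex.Gamma_ofReal]
    rfl
  apply Complex.ofReal_injective
  push_cast [← intervalIntegral.integral_ofReal, Complex.ofReal_cpow ha.le]
  rw [← h_beta, ← Complex.betaIntegral_scaled u v ha]
  refine intervalIntegral.integral_congr fun x hx => ?_
  rw [uIcc_of_le ha.le] at hx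
  push_cast [Complex.ofReal_cpow hx.1, Complex.ofReal_cpow (sub_nonneg.2 hx.2)]
  rfl

theorem integral_rpow_mul_one_sub_div_pow {q a : ℝ} (hq : -1 < q) (ha : 0 < a) (n : ℕ) :
    ∫ x in (0 : ℝ)..a, x ^ q * (1 - x / a) ^ n = a ^ (q + 1) * beta (n + 1) (q + 1) := by
  have h_scaled (x : ℝ) : x ^ q * (1 - x / a) ^ n =
      (a ^ n)⁻¹ * (x ^ (q + 1 - 1) * (a - x) ^ ((n + 1 : ℝ) - 1)) := by
    rw [one_sub_div ha.ne', div_pow, add_sub_cancel_right, add_sub_cancel_right, rpow_natCast]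
    ring
  simp_rw [h_scaled]
  rw [intervalIntegral.integral_const_mul,
    integral_rpow_mul_sub_rpow (by linarith) (by positivity) ha,
    show q + 1 + (n + 1) - 1 = (q + 1) + n by ring, rpow_add_natCast ha.ne']
  simp only [beta, add_comm, mul_comm]
  field_simp

variable {E : Type*} [NormedAddCommGroup E] [InnerProductSpace ℝ E]

theorem inner_smul_add_orthogonal {θ : E} (hθ : ‖θ‖ = 1) (s : ℝ) (y : (ℝ ∙ θ)ᗮ) :
    ⟪s • θ + (y : E), θ⟫ = s := by
  rw [inner_add_left, Submodule.mem_orthogonal_singleton_iff_inner_left.1 y.2,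
    real_inner_smul_left, real_inner_self_eq_norm_sq, hθ]
  ring

/-- The section of `K` by the hyperplane `{x | ⟪x, θ⟫ = s}` (for a unit vector `θ`), translated by
`-s • θ` so that the sections at all heights are subsets of the one space `(ℝ ∙ θ)ᗮ`. -/
def parallelSection (K : Set E) (θ : E) (s : ℝ) : Set (ℝ ∙ θ)ᗮ :=
  {y | s • θ + (y : E) ∈ K}

theorem parallelSection_subset_image_orthogonalProjection (K : Set E) (θ : E) (s : ℝ) :
    parallelSection K θ s ⊆ (ℝ ∙ θ)ᗮ.orthogonalProjectionOnto '' K := by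
  refine fun y hy => ⟨s • θ + y, hy, ?_⟩
  have hθ : (ℝ ∙ θ)ᗮ.orthogonalProjectionOnto θ = 0 := by
    simp
  rw [map_add, map_smul, hθ, smul_zero, zero_add,
    Submodule.orthogonalProjectionOnto_mem_subspace_eq_self]

theorem nonempty_parallelSection_inner {K : Set E} {θ x : E} (hθ : ‖θ‖ = 1) (hx : x ∈ K) :
    (parallelSection K θ ⟪x, θ⟫).Nonempty := by
  have h_orthogonal : x - ⟪x, θ⟫ • θ ∈ (ℝ ∙ θ)ᗮ := by
    rw [Submodule.mem_orthogonal_singleton_iff_inner_left, inner_sub_left, real_inner_smul_left,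
      real_inner_self_eq_norm_sq, hθ]
    ring
  refine ⟨⟨_, h_orthogonal⟩, ?_⟩
  rwa [parallelSection, mem_ofPred_eq, add_sub_cancel]

theorem smul_parallelSection_add_smul_parallelSection_subset {K : Set E} (hK : Convex ℝ K)
    (θ : E) {a b : ℝ} (ha : 0 ≤ a) (hb : 0 ≤ b) (hab : a + b = 1) (r s : ℝ) :
    a • parallelSection K θ r + b • parallelSection K θ s ⊆
      parallelSection K θ (a * r + b * s) := by
  rintro _ ⟨_, ⟨y, hy, rfl⟩, _, ⟨z, hz, rfl⟩, rfl⟩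
  have h_comb : a • (r • θ + (y : E)) + b • (s • θ + (z : E)) ∈ K := hK hy hz ha hb hab
  change (a * r + b * s) • θ + (a • (y : E) + b • (z : E)) ∈ K
  convert h_comb using 1
  module

theorem inter_inner_nonneg_eq_inter_preimage_Icc {K : Set E} {θ : E} {h : ℝ}
    (hK : ∀ x ∈ K, ⟪x, θ⟫ ≤ h) :
    K ∩ {x | 0 ≤ ⟪x, θ⟫} = K ∩ (fun x => ⟪x, θ⟫) ⁻¹' Icc 0 h := by
  ext x
  exact and_congr_right fun hx => (and_iff_left (hK x hx)).symm

theorem measure_inter_inner_nonneg_ne_zero [MeasurableSpace E] {μ : Measure E}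
    [μ.IsOpenPosMeasure] {K : Set E} (hK : 0 ∈ interior K) {θ : E} (hθ : θ ≠ 0) :
    μ (K ∩ {x | 0 ≤ ⟪x, θ⟫}) ≠ 0 := by
  have h_tendsto : Filter.Tendsto (fun t : ℝ => t • θ) (nhdsWithin 0 (Ioi 0)) (nhds 0) := by
    have : Continuous fun t : ℝ => t • θ := by fun_prop
    simpa using (this.tendsto 0).mono_left nhdsWithin_le_nhds
  obtain ⟨t, ht_mem, ht_pos⟩ := ((h_tendsto.eventually (isOpen_interior.mem_nhds hK)).and
    self_mem_nhdsWithin).exists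
  have h_open : IsOpen (interior K ∩ {x | 0 < ⟪x, θ⟫}) :=
    isOpen_interior.inter (isOpen_lt continuous_const (by fun_prop))
  have h_pos : 0 < ⟪t • θ, θ⟫ := by
    rw [real_inner_smul_left]
    exact mul_pos ht_pos (real_inner_self_pos.2 hθ)
  exact ((h_open.measure_pos μ ⟨t • θ, ht_mem, h_pos⟩).trans_le
    (measure_mono (inter_subset_inter interior_subset fun _ => le_of_lt (α := ℝ)))).ne'

theorem setIntegral_inner_rpow_le [MeasurableSpace E] {μ : Measure E} {K : Set E} (hK : μ K < ∞)
    {θ : E} {h q : ℝ} (hq : 0 ≤ q) (hK_le : ∀ x ∈ K, ⟪x, θ⟫ ≤ h) :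
    ∫ x in K ∩ {x | 0 ≤ ⟪x, θ⟫}, ⟪x, θ⟫ ^ q ∂μ ≤ h ^ q * μ.real (K ∩ {x | 0 ≤ ⟪x, θ⟫}) := by
  refine (le_norm_self _).trans (norm_setIntegral_le_of_norm_le_const
    ((measure_mono inter_subset_left).trans_lt hK) fun x hx => ?_)
  rw [norm_of_nonneg (rpow_nonneg hx.2 q)]
  exact rpow_le_rpow hx.2 (hK_le x hx.1) hq

theorem measurableSet_inner_nonneg [MeasurableSpace E] [OpensMeasurableSpace E] (θ : E) :
    MeasurableSet {x : E | 0 ≤ ⟪x, θ⟫} :=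
  (isClosed_le continuous_const (by fun_prop)).measurableSet

theorem setIntegral_inner_rpow_nonneg [MeasurableSpace E] [OpensMeasurableSpace E]
    {μ : Measure E} (K : Set E) (θ : E) (q : ℝ) :
    0 ≤ ∫ x in K ∩ {x | 0 ≤ ⟪x, θ⟫}, ⟪x, θ⟫ ^ q ∂μ := by
  rw [inter_comm, ← Measure.restrict_restrict (measurableSet_inner_nonneg θ)]
  exact setIntegral_nonneg (measurableSet_inner_nonneg θ) fun x hx => rpow_nonneg hx q

theorem setIntegral_max_inner_zero_rpow [MeasurableSpace E] [OpensMeasurableSpace E]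
    {μ : Measure E} (K : Set E) (θ : E) {q : ℝ} (hq : q ≠ 0) :
    ∫ x in K, max ⟪x, θ⟫ 0 ^ q ∂μ = ∫ x in K ∩ {x | 0 ≤ ⟪x, θ⟫}, ⟪x, θ⟫ ^ q ∂μ := by
  rw [inter_comm, ← Measure.restrict_restrict (measurableSet_inner_nonneg θ),
    ← integral_indicator (measurableSet_inner_nonneg θ)]
  refine integral_congr_ae (.of_forall fun x => ?_)
  rcases le_or_gt 0 ⟪x, θ⟫ with hx | hx
  · simp [hx]
  · simp [hx.le, hx.not_ge, hq]

variable [FiniteDimensional ℝ E]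

theorem finrank_eq_finrank_orthogonal_span_singleton_add_one {θ : E} (hθ : θ ≠ 0) :
    finrank ℝ E = finrank ℝ (ℝ ∙ θ)ᗮ + 1 := by
  rw [← (ℝ ∙ θ).finrank_add_finrank_orthogonal, finrank_span_singleton hθ, add_comm]

variable [MeasurableSpace E] [BorelSpace E]

theorem measurePreserving_smul_add_orthogonal {θ : E} (hθ : ‖θ‖ = 1) :
    MeasurePreserving (fun p : ℝ × (ℝ ∙ θ)ᗮ => p.1 • θ + (p.2 : E)) := by
  have h_prod := (LinearIsometryEquiv.toSpanUnitSingleton (𝕜 := ℝ) θ hθ).measurePreserving.prod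
    (MeasurePreserving.id (volume : Measure (ℝ ∙ θ)ᗮ))
  exact (ℝ ∙ θ).orthogonalDecomposition.symm.measurePreserving.comp
    ((WithLp.volume_preserving_toLp _ _).comp h_prod)

theorem measurable_volume_parallelSection {K : Set E} (hK : MeasurableSet K) (θ : E) :
    Measurable fun s => volume (parallelSection K θ s) := by
  have : Measurable (fun p : ℝ × (ℝ ∙ θ)ᗮ => p.1 • θ + (p.2 : E)) := by fun_prop
  exact measurable_measure_prodMk_left (this hK)

theorem volume_eq_lintegral_volume_parallelSection {θ : E} (hθ : ‖θ‖ = 1) {K : Set E}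
    (hK : MeasurableSet K) : volume K = ∫⁻ s, volume (parallelSection K θ s) := by
  have h_preserving := measurePreserving_smul_add_orthogonal hθ
  rw [← h_preserving.measure_preimage hK.nullMeasurableSet, Measure.volume_eq_prod,
    Measure.prod_apply (h_preserving.measurable hK)]
  rfl

theorem map_inner_restrict_eq_withDensity {θ : E} (hθ : ‖θ‖ = 1) {K : Set E}
    (hK : MeasurableSet K) :
    (volume.restrict K).map (fun x => ⟪x, θ⟫) =
      volume.withDensity fun s => volume (parallelSection K θ s) := by
  have h_inner : Measurable fun x : E => ⟪x, θ⟫ := by fun_prop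
  ext A hA
  have h_slice (s : ℝ) : volume (parallelSection ((fun x => ⟪x, θ⟫) ⁻¹' A ∩ K) θ s) =
      A.indicator (fun s => volume (parallelSection K θ s)) s := by
    by_cases hs : s ∈ A <;> simp [parallelSection, inner_smul_add_orthogonal hθ, hs]
  rw [Measure.map_apply h_inner hA, Measure.restrict_apply (h_inner hA),
    volume_eq_lintegral_volume_parallelSection hθ ((h_inner hA).inter hK),
    withDensity_apply _ hA, ← lintegral_indicator hA]
  exact lintegral_congr h_slice

/-- The section function `f_θ` of `K`: the `(dim E - 1)`-dimensional volume of the hyperplane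
section at height `s`. It is real-valued, hence `0` where a section has infinite volume. -/
def sectionVolume (K : Set E) (θ : E) (s : ℝ) : ℝ :=
  volume.real (parallelSection K θ s)

theorem sectionVolume_nonneg (K : Set E) (θ : E) (s : ℝ) : 0 ≤ sectionVolume K θ s :=
  measureReal_nonneg

theorem volume_parallelSection_lt_top {K : Set E} (hK : IsCompact K) (θ : E) (s : ℝ) :
    volume (parallelSection K θ s) < ∞ :=
  (measure_mono (parallelSection_subset_image_orthogonalProjection K θ s)).trans_lt
    (hK.image (ℝ ∙ θ)ᗮ.orthogonalProjectionOnto.continuous).measure_lt_top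

theorem bddAbove_range_sectionVolume {K : Set E} (hK : IsCompact K) (θ : E) :
    BddAbove (range (sectionVolume K θ)) := by
  refine ⟨volume.real ((ℝ ∙ θ)ᗮ.orthogonalProjectionOnto '' K), ?_⟩
  rintro _ ⟨s, rfl⟩
  exact measureReal_mono (parallelSection_subset_image_orthogonalProjection K θ s)
    (hK.image (ℝ ∙ θ)ᗮ.orthogonalProjectionOnto.continuous).measure_lt_top.ne

theorem integrableOn_sectionVolume {K : Set E} (hK : IsCompact K) (θ : E) {A : Set ℝ}
    (hA : volume A ≠ ∞) : IntegrableOn (sectionVolume K θ) A := by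
  obtain ⟨C, hC⟩ := bddAbove_range_sectionVolume hK θ
  refine Measure.integrableOn_of_bounded (M := C) hA
    (measurable_volume_parallelSection hK.measurableSet θ).ennreal_toReal.aestronglyMeasurable
    (.of_forall fun s => ?_)
  rw [norm_of_nonneg (sectionVolume_nonneg K θ s)]
  exact hC ⟨s, rfl⟩

theorem pow_mul_sectionVolume_le {K : Set E} (hK : IsCompact K) (hK_convex : Convex ℝ K)
    (θ : E) {a b r s : ℝ} (ha : 0 ≤ a) (hb : 0 ≤ b) (hab : a + b = 1)
    (hs : (parallelSection K θ s).Nonempty) :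
    a ^ finrank ℝ (ℝ ∙ θ)ᗮ * sectionVolume K θ r ≤ sectionVolume K θ (a * r + b * s) := by
  obtain ⟨z, hz⟩ := hs
  -- The cone over the section at height `r` with apex `z` at height `s` is contained in `K`.
  have h_cone : b • z +ᵥ a • parallelSection K θ r ⊆ parallelSection K θ (a * r + b * s) := by
    refine Subset.trans ?_
      (smul_parallelSection_add_smul_parallelSection_subset hK_convex θ ha hb hab r s)
    rintro _ ⟨y, hy, rfl⟩
    exact ⟨y, hy, b • z, smul_mem_smul_set hz, add_comm _ _⟩
  calc a ^ finrank ℝ (ℝ ∙ θ)ᗮ * sectionVolume K θ r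
      = volume.real (b • z +ᵥ a • parallelSection K θ r) := by
        rw [measureReal_def, measure_vadd, Measure.addHaar_smul_of_nonneg _ ha,
          ENNReal.toReal_mul, ENNReal.toReal_ofReal (pow_nonneg ha _)]
        rfl
    _ ≤ sectionVolume K θ (a * r + b * s) :=
        measureReal_mono h_cone (volume_parallelSection_lt_top hK θ _).ne

theorem setIntegral_comp_inner_eq_setIntegral_mul_sectionVolume {θ : E} (hθ : ‖θ‖ = 1)
    {K : Set E} (hK : IsCompact K) {A : Set ℝ} (hA : MeasurableSet A) {g : ℝ → ℝ}
    (hg : Measurable g) :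
    ∫ x in K ∩ (fun x => ⟪x, θ⟫) ⁻¹' A, g ⟪x, θ⟫ = ∫ s in A, g s * sectionVolume K θ s := by
  have h_inner : Measurable fun x : E => ⟪x, θ⟫ := by fun_prop
  rw [inter_comm, ← Measure.restrict_restrict (h_inner hA),
    ← setIntegral_map hA hg.aestronglyMeasurable h_inner.aemeasurable,
    map_inner_restrict_eq_withDensity hθ hK.measurableSet,
    setIntegral_withDensity_eq_setIntegral_toReal_smul
      (measurable_volume_parallelSection hK.measurableSet θ)
      (.of_forall fun s => volume_parallelSection_lt_top hK θ s) _ hA]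
  simp_rw [smul_eq_mul, mul_comm (g _)]
  rfl

theorem volume_inter_inner_nonneg_le {θ : E} (hθ : ‖θ‖ = 1) {K : Set E} (hK : IsCompact K)
    {h M : ℝ} (hh : 0 ≤ h) (hK_le : ∀ x ∈ K, ⟪x, θ⟫ ≤ h) (hM : ∀ s, sectionVolume K θ s ≤ M) :
    volume.real (K ∩ {x | 0 ≤ ⟪x, θ⟫}) ≤ h * M :=
  calc volume.real (K ∩ {x | 0 ≤ ⟪x, θ⟫}) = ∫ s in Icc 0 h, sectionVolume K θ s := by
        have h_fubini := setIntegral_comp_inner_eq_setIntegral_mul_sectionVolume hθ hK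
          (measurableSet_Icc (a := 0) (b := h)) (measurable_const (a := (1 : ℝ)))
        simpa [← inter_inner_nonneg_eq_inter_preimage_Icc hK_le] using h_fubini
    _ ≤ ∫ _ in Icc 0 h, M :=
        setIntegral_mono (integrableOn_sectionVolume hK θ (by simp)) (by simp) hM
    _ = h * M := by simp [hh]

theorem sectionVolume_zero_mul_le_setIntegral_inner_rpow {θ : E} (hθ : ‖θ‖ = 1) {K : Set E}
    (hK : IsCompact K) (hK_convex : Convex ℝ K) {q : ℝ} (hq : 0 ≤ q) {x₀ : E} (hx₀ : x₀ ∈ K)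
    (hx₀_pos : 0 < ⟪x₀, θ⟫) (hx₀_max : ∀ x ∈ K, ⟪x, θ⟫ ≤ ⟪x₀, θ⟫) :
    sectionVolume K θ 0 * (⟪x₀, θ⟫ ^ (q + 1) * beta (finrank ℝ E) (q + 1)) ≤
      ∫ x in K ∩ {x | 0 ≤ ⟪x, θ⟫}, ⟪x, θ⟫ ^ q := by
  set h := ⟪x₀, θ⟫
  set n := finrank ℝ (ℝ ∙ θ)ᗮ
  have h_cone {s : ℝ} (hs : s ∈ Icc 0 h) :
      sectionVolume K θ 0 * (1 - s / h) ^ n ≤ sectionVolume K θ s := by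
    have := pow_mul_sectionVolume_le hK hK_convex θ (r := 0)
      (sub_nonneg.2 ((div_le_one hx₀_pos).2 hs.2)) (div_nonneg hs.1 hx₀_pos.le)
      (sub_add_cancel 1 (s / h)) (nonempty_parallelSection_inner hθ hx₀)
    rwa [mul_zero, zero_add, div_mul_cancel₀ s hx₀_pos.ne', mul_comm] at this
  have h_rpow : Continuous fun s : ℝ => s ^ q := continuous_rpow_const hq
  calc sectionVolume K θ 0 * (h ^ (q + 1) * beta (finrank ℝ E) (q + 1))
      = ∫ s in Icc 0 h, s ^ q * (sectionVolume K θ 0 * (1 - s / h) ^ n) := by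
        rw [finrank_eq_finrank_orthogonal_span_singleton_add_one (θ := θ)
          (ne_zero_of_norm_ne_zero (by simp [hθ])), Nat.cast_succ,
          ← integral_rpow_mul_one_sub_div_pow (by linarith) hx₀_pos, integral_Icc_eq_integral_Ioc,
          ← intervalIntegral.integral_of_le hx₀_pos.le, ← intervalIntegral.integral_const_mul]
        simp_rw [mul_left_comm]
        rfl
    _ ≤ ∫ s in Icc 0 h, s ^ q * sectionVolume K θ s := by
        refine setIntegral_mono_on ?_ ?_ measurableSet_Icc fun s hs =>
          mul_le_mul_of_nonneg_left (h_cone hs) (rpow_nonneg hs.1 q)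
        · exact Continuous.integrableOn_Icc (by fun_prop)
        · exact (integrableOn_sectionVolume hK θ (by simp)).continuousOn_mul h_rpow.continuousOn
            isCompact_Icc
    _ = ∫ x in K ∩ {x | 0 ≤ ⟪x, θ⟫}, ⟪x, θ⟫ ^ q := by
        rw [inter_inner_nonneg_eq_inter_preimage_Icc hx₀_max,
          setIntegral_comp_inner_eq_setIntegral_mul_sectionVolume hθ hK measurableSet_Icc
            h_rpow.measurable]

/-- The support functional `h_{Z⁺_q(K)}` of the one-sided `L_q`-centroid body of `K`, in any
finite-dimensional Euclidean space. -/
def centroidSupport (K : Set E) (q : ℝ) (y : E) : ℝ :=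
  (2 * ∫ x in K, max ⟪x, y⟫ 0 ^ q) ^ (1 / q)

theorem centroidSupport_div_two_mul_rpow (K : Set E) (θ : E) {q V : ℝ} (hq : q ≠ 0)
    (hV : 0 ≤ V) :
    centroidSupport K q θ / (2 * V) ^ (1 / q) =
      ((∫ x in K ∩ {x | 0 ≤ ⟪x, θ⟫}, ⟪x, θ⟫ ^ q) / V) ^ (1 / q) := by
  rw [centroidSupport, setIntegral_max_inner_zero_rpow K θ hq,
    ← div_rpow (mul_nonneg zero_le_two (setIntegral_inner_rpow_nonneg K θ q))
      (mul_nonneg zero_le_two hV), mul_div_mul_left _ _ two_ne_zero]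

theorem sectionVolume_zero_div_mul_le_setIntegral_inner_rpow_div {θ : E} (hθ : ‖θ‖ = 1)
    {K : Set E} (hK : IsCompact K) (hK_convex : Convex ℝ K) {q : ℝ} (hq : 0 ≤ q)
    (hV : 0 < volume.real (K ∩ {x | 0 ≤ ⟪x, θ⟫})) {x₀ : E} (hx₀ : x₀ ∈ K)
    (hx₀_nonneg : 0 ≤ ⟪x₀, θ⟫) (hx₀_max : ∀ x ∈ K, ⟪x, θ⟫ ≤ ⟪x₀, θ⟫) :
    sectionVolume K θ 0 / (⨆ s, sectionVolume K θ s) * beta (finrank ℝ E) (q + 1) *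
        ⟪x₀, θ⟫ ^ q ≤
      (∫ x in K ∩ {x | 0 ≤ ⟪x, θ⟫}, ⟪x, θ⟫ ^ q) / volume.real (K ∩ {x | 0 ≤ ⟪x, θ⟫}) := by
  have hV_le := volume_inter_inner_nonneg_le hθ hK hx₀_nonneg hx₀_max
    (le_ciSup (bddAbove_range_sectionVolume hK θ))
  set h := ⟪x₀, θ⟫
  set M := ⨆ s, sectionVolume K θ s
  have hh_pos : 0 < h := hx₀_nonneg.lt_of_ne fun h_zero =>
    hV.not_ge (by simpa [← h_zero] using hV_le)
  have hM_pos : 0 < M := pos_of_mul_pos_right (hV.trans_le hV_le) hx₀_nonneg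
  have hf_nonneg := sectionVolume_nonneg K θ 0
  have h_moment := sectionVolume_zero_mul_le_setIntegral_inner_rpow hθ hK hK_convex hq hx₀
    hh_pos hx₀_max
  have h_beta : 0 ≤ beta (finrank ℝ E) (q + 1) := beta_nonneg (by positivity) (by positivity)
  rw [le_div_iff₀ hV]
  calc sectionVolume K θ 0 / M * beta (finrank ℝ E) (q + 1) * h ^ q *
        volume.real (K ∩ {x | 0 ≤ ⟪x, θ⟫})
      ≤ sectionVolume K θ 0 / M * beta (finrank ℝ E) (q + 1) * h ^ q * (h * M) := by gcongr
    _ = sectionVolume K θ 0 * (h ^ (q + 1) * beta (finrank ℝ E) (q + 1)) := by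
        rw [rpow_add_one hh_pos.ne']
        field_simp
    _ ≤ _ := h_moment

theorem statement17_general {K : Set E} (hK : IsCompact K) (hK_convex : Convex ℝ K) {θ : E}
    (hθ : ‖θ‖ = 1) (hV : volume (K ∩ {x | 0 ≤ ⟪x, θ⟫}) ≠ 0) {q : ℝ} (hq : 0 < q) :
    (sectionVolume K θ 0 / ⨆ s, sectionVolume K θ s) ^ (1 / q) *
        beta (finrank ℝ E) (q + 1) ^ (1 / q) * (⨆ x : K, ⟪(x : E), θ⟫) ≤
      centroidSupport K q θ / (2 * volume.real (K ∩ {x | 0 ≤ ⟪x, θ⟫})) ^ (1 / q) ∧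
    centroidSupport K q θ / (2 * volume.real (K ∩ {x | 0 ≤ ⟪x, θ⟫})) ^ (1 / q) ≤
      ⨆ x : K, ⟪(x : E), θ⟫ := by
  obtain ⟨x₁, hx₁, hx₁_nonneg⟩ := nonempty_of_measure_ne_zero hV
  obtain ⟨x₀, hx₀, hx₀_max⟩ := hK.exists_isMaxOn (f := fun x => ⟪x, θ⟫) ⟨x₁, hx₁⟩ (by fun_prop)
  have hx₀_nonneg : 0 ≤ ⟪x₀, θ⟫ := hx₁_nonneg.trans (hx₀_max hx₁)
  have hV_pos : 0 < volume.real (K ∩ {x | 0 ≤ ⟪x, θ⟫}) := ENNReal.toReal_pos hV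
    (measure_ne_top_of_subset inter_subset_left hK.measure_lt_top.ne)
  have h_root : (⟪x₀, θ⟫ ^ q) ^ (1 / q) = ⟪x₀, θ⟫ := by
    rw [one_div, rpow_rpow_inv hx₀_nonneg hq.ne']
  have h_ratio : 0 ≤ sectionVolume K θ 0 / ⨆ s, sectionVolume K θ s :=
    div_nonneg (sectionVolume_nonneg K θ 0) (Real.iSup_nonneg (sectionVolume_nonneg K θ))
  have h_beta : 0 ≤ beta (finrank ℝ E) (q + 1) := beta_nonneg (by positivity) (by positivity)
  rw [hx₀_max.iSup_eq hx₀, centroidSupport_div_two_mul_rpow K θ hq.ne' hV_pos.le, ← h_root,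
    ← mul_rpow h_ratio h_beta,
    ← mul_rpow (mul_nonneg h_ratio h_beta) (rpow_nonneg hx₀_nonneg q)]
  constructor
  · exact rpow_le_rpow
      (mul_nonneg (mul_nonneg h_ratio h_beta) (rpow_nonneg hx₀_nonneg q))
      (sectionVolume_zero_div_mul_le_setIntegral_inner_rpow_div hθ hK hK_convex hq.le hV_pos hx₀
        hx₀_nonneg hx₀_max) (by positivity)
  · exact rpow_le_rpow (div_nonneg (setIntegral_inner_rpow_nonneg K θ q) hV_pos.le)
      ((div_le_iff₀ hV_pos).2 (setIntegral_inner_rpow_le hK.measure_lt_top hq.le hx₀_max))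
      (by positivity)

theorem integral_indicator_one_smul_add_orthogonal {K : Set E} (hK : MeasurableSet K) (θ : E)
    (s : ℝ) :
    ∫ y : (ℝ ∙ θ)ᗮ, K.indicator (fun _ => (1 : ℝ)) (s • θ + y) = sectionVolume K θ s := by
  have h_translate : Measurable fun y : (ℝ ∙ θ)ᗮ => s • θ + (y : E) := by fun_prop
  exact integral_indicator_one (h_translate hK)

theorem suppZplus_indicator_one {m : ℕ} {K : Set (EuclideanSpace ℝ (Fin m))}
    (hK : MeasurableSet K) (q : ℝ) (y : EuclideanSpace ℝ (Fin m)) :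
    suppZplus (K.indicator fun _ => (1 : ℝ)) q y = centroidSupport K q y := by
  rw [suppZplus, centroidSupport, ← integral_indicator hK]
  congr 3 with x
  by_cases hx : x ∈ K <;> simp [hx]

end OneSidedMoments

/-- two-sided bound relating `h_{Z⁺_q(K)}(θ)` to `h_K(θ)` and the section
function `f_θ`. -/
theorem statement17 (m : ℕ) (hm : 1 ≤ m) (K : Set (EuclideanSpace ℝ (Fin m)))
    (hKc : IsCompact K) (hKconv : Convex ℝ K) (h0 : (0 : EuclideanSpace ℝ (Fin m)) ∈ interior K)
    (θ : EuclideanSpace ℝ (Fin m)) (hθ : ‖θ‖ = 1) (q : ℝ) (hq : 1 ≤ q)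
    (fθ : ℝ → ℝ)
    (hfθ : fθ = fun s : ℝ =>
      ∫ y : ((Submodule.span ℝ ({θ} : Set (EuclideanSpace ℝ (Fin m))))ᗮ),
        K.indicator (fun _ => (1:ℝ)) (s • θ + y)) :
    (fθ 0 / ⨆ s : ℝ, fθ s) ^ (1/q) *
        (Real.Gamma (m : ℝ) * Real.Gamma (q + 1) / Real.Gamma ((m : ℝ) + q + 1)) ^ (1/q) *
        (⨆ x : K, ⟪(x : EuclideanSpace ℝ (Fin m)), θ⟫) ≤
      suppZplus (K.indicator fun _ => (1:ℝ)) q θ /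
        (2 * (volume (K ∩ {x | 0 ≤ ⟪x, θ⟫})).toReal) ^ (1/q) ∧
    suppZplus (K.indicator fun _ => (1:ℝ)) q θ /
        (2 * (volume (K ∩ {x | 0 ≤ ⟪x, θ⟫})).toReal) ^ (1/q) ≤
      ⨆ x : K, ⟪(x : EuclideanSpace ℝ (Fin m)), θ⟫ := by
  simpa only [hfθ, integral_indicator_one_smul_add_orthogonal hKc.measurableSet,
    suppZplus_indicator_one hKc.measurableSet, beta, finrank_euclideanSpace_fin, ← add_assoc,
    measureReal_def] using statement17_general hKc hKconv hθ
      (measure_inter_inner_nonneg_ne_zero h0 (ne_zero_of_norm_ne_zero (by simp [hθ])))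
      (zero_lt_one.trans_le hq)
end
end
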